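/- Let j ≥ 2 be an integer and let s ∈ ℝ satisfy −j + 1/2 ≤ s ≤ −j/2. There exists a constant C > 0 depending only on j and s (in particular independent of λ) such that for every λ ≥ 1 and all nonnegative measurable f₁, f₂ : Ż_λ × ℝ → [0,∞], the function g(k,τ) := |k|·⟨σ⟩^{−1}·(f₁∗f₂)(k,τ) on Ż_λ × ℝ satisfies: the X^s norm of g is at most C times the product of the Z^s norms of f₁ and f₂. -/

import Mathlib

/-!
With `k = k₁ + k₂` and `n = 2j+1`, the three modulations satisfy the resonance identity
`σ₁ + σ₂ - σ = kⁿ - k₁ⁿ - k₂ⁿ`, and the right side is comparable to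
`|k| |k₁| |k₂| max(|k|, |k₁|, |k₂|)^{2j-2}` (`res_bounds`), so one of the three modulations is at
least as large as that product. The `X^s` weights are products of powers of `⟨k⟩` and `⟨σ⟩`, and
hence affine functions of `x = log |k|` and `t = log ⟨σ⟩` on each region, up to an additive
constant. Comparing weights thus becomes linear arithmetic in logarithms (the lemmas on `Par`), and
the case analysis `Conf.half` yields a pointwise bound, `Conf.exp_le`: the kernel
`|k| ⟨σ⟩⁻¹ w(k,σ)`, where `w` is the `X^s` weight, is at most a constant times the sum of the
six-term majorant `maj` and its image under exchange of the two factors.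

Writing `F = w f₁`, `G = w f₂` and `Y = ⟨k⟩^s f₂`, each term of the majorant is a bilinear
operator that is bounded on `L²` (`half_op_bound`), for one of three reasons.
* The terms `φ(k₁) F * Y`, `φ(k₂) F * Y` and `φ(k) F * Y`, where `φ(k) = |k|^{-1/4} ⟨k⟩^{-1/2}`:
  Young's inequality in `τ` puts `Y` in `L¹`, which is where the `Y^s` norm enters, and
  Cauchy–Schwarz in the frequency uses that `φ` is square-summable on the lattice.
* The term `⟨σ⟩^{-a} φ(k₂) F * G` with `a > 1/2`: the `τ`-convolution is bounded in `L^∞`, and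
  `⟨σ⟩^{-a}` is square-integrable in `τ`.
* The terms with kernels `⟨σ₁⟩^{-p} ⟨σ₂⟩^{-(1-p)}` and `⟨σ⟩^{-p} ⟨σ₂⟩^{-(1-p)}`, `p = 1/(2j)`:
  Cauchy–Schwarz on the support of the convolution. Integration in `τ` leaves the lattice sum of
  `⟨k₁ⁿ - (k₁-κ)ⁿ - x⟩^{-1/j}`, which converges because the phase `u ↦ (u+κ)ⁿ - (u-κ)ⁿ` differs
  from any given value by at least `(|u| - u₀)^{2j}` for a suitable `u₀` (`phase_gap`,
  `kernel_sum`).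

Every one of these squared bounds carries the lattice density `λ` as its only dependence on `λ`.
The convolution contributes `1/λ`, that is `λ⁻²` to a squared norm, and the norms contribute `λ⁻¹`
each, so all powers of `λ` cancel (`out_piece`).
-/

open MeasureTheory
open scoped ENNReal

noncomputable section

/-- Japanese bracket `⟨x⟩ = (1+x²)^{1/2}`. -/
def jap (x : ℝ) : ℝ := Real.sqrt (1 + x ^ 2)

/-- Modulation `σ = τ − k^{2j+1}` at the frequency `k = m/λ ∈ Ż_λ`. -/
def sigL (j : ℕ) (lam : ℝ) (m : ℤ) (τ : ℝ) : ℝ := τ - ((m : ℝ) / lam) ^ (2 * j + 1)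

/-- Convolution on `Ż_λ × ℝ` (frequencies indexed by `m ∈ ℤ∖{0}`, `k = m/λ`):
`(f∗g)(k,τ) = (1/λ)Σ_{k₁≠0, k−k₁≠0} ∫ f(k₁,τ₁) g(k−k₁,τ−τ₁) dτ₁`. -/
def convL (lam : ℝ) (f g : ℤ → ℝ → ℝ≥0∞) (m : ℤ) (τ : ℝ) : ℝ≥0∞ :=
  ENNReal.ofReal (1 / lam) *
    ∑' m₁ : ℤ, if m₁ ≠ 0 ∧ m - m₁ ≠ 0 then ∫⁻ τ₁, f m₁ τ₁ * g (m - m₁) (τ - τ₁) else 0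

/-- `L²_λ` norm: `((1/λ) Σ_k ∫ f(k,τ)² dτ)^{1/2}`. -/
def L2L (lam : ℝ) (f : ℤ → ℝ → ℝ≥0∞) : ℝ≥0∞ :=
  (ENNReal.ofReal (1 / lam) * ∑' m : ℤ, ∫⁻ τ, (f m τ) ^ 2) ^ (1 / 2 : ℝ)

/-- `X^{s,b}` norm: the `L²_λ` norm of `⟨k⟩^s ⟨σ⟩^b f(k,τ)`. -/
def Xn (j : ℕ) (lam s b : ℝ) (f : ℤ → ℝ → ℝ≥0∞) : ℝ≥0∞ :=
  L2L lam (fun m τ =>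
    ENNReal.ofReal (jap ((m : ℝ) / lam) ^ s * jap (sigL j lam m τ) ^ b) * f m τ)

/-- `Y^s` norm: `((1/λ) Σ_k ⟨k⟩^{2s} (∫ f(k,τ) dτ)²)^{1/2}`. -/
def Yn (lam s : ℝ) (f : ℤ → ℝ → ℝ≥0∞) : ℝ≥0∞ :=
  (ENNReal.ofReal (1 / lam) *
    ∑' m : ℤ, ENNReal.ofReal (jap ((m : ℝ) / lam) ^ (2 * s)) * (∫⁻ τ, f m τ) ^ 2) ^
    (1 / 2 : ℝ)

/-- `D₁ = {(k,τ): |k| ≥ 1, |σ| ≤ (2(2j+1)/3)|k|^{2j}}`. -/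
def D1 (j : ℕ) (lam : ℝ) : Set (ℤ × ℝ) :=
  {p | 1 ≤ |(p.1 : ℝ) / lam| ∧
    |sigL j lam p.1 p.2| ≤ 2 * (2 * (j : ℝ) + 1) / 3 * |(p.1 : ℝ) / lam| ^ (2 * j)}

/-- `D₂ = {(k,τ): |k| ≥ 1, (2(2j+1)/3)|k|^{2j} < |σ| ≤ 2(2j+1)|k|^{2j+1}}`. -/
def D2 (j : ℕ) (lam : ℝ) : Set (ℤ × ℝ) :=
  {p | 1 ≤ |(p.1 : ℝ) / lam| ∧
    2 * (2 * (j : ℝ) + 1) / 3 * |(p.1 : ℝ) / lam| ^ (2 * j) < |sigL j lam p.1 p.2| ∧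
    |sigL j lam p.1 p.2| ≤ 2 * (2 * (j : ℝ) + 1) * |(p.1 : ℝ) / lam| ^ (2 * j + 1)}

/-- `D₃ = {(k,τ): |k| ≥ 1, |σ| > 2(2j+1)|k|^{2j+1}}`. -/
def D3 (j : ℕ) (lam : ℝ) : Set (ℤ × ℝ) :=
  {p | 1 ≤ |(p.1 : ℝ) / lam| ∧
    2 * (2 * (j : ℝ) + 1) * |(p.1 : ℝ) / lam| ^ (2 * j + 1) < |sigL j lam p.1 p.2|}

/-- `D₄ = {(k,τ): 1/λ ≤ |k| ≤ 1, |σ| > 2(2j+1)|k|^{2j+1}}`. -/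
def D4 (j : ℕ) (lam : ℝ) : Set (ℤ × ℝ) :=
  {p | 1 / lam ≤ |(p.1 : ℝ) / lam| ∧ |(p.1 : ℝ) / lam| ≤ 1 ∧
    2 * (2 * (j : ℝ) + 1) * |(p.1 : ℝ) / lam| ^ (2 * j + 1) < |sigL j lam p.1 p.2|}

/-- `D₅ = {(k,τ): 1/λ ≤ |k| ≤ 1, |σ| ≤ 2(2j+1)|k|^{2j+1}}`. -/
def D5 (j : ℕ) (lam : ℝ) : Set (ℤ × ℝ) :=
  {p | 1 / lam ≤ |(p.1 : ℝ) / lam| ∧ |(p.1 : ℝ) / lam| ≤ 1 ∧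
    |sigL j lam p.1 p.2| ≤ 2 * (2 * (j : ℝ) + 1) * |(p.1 : ℝ) / lam| ^ (2 * j + 1)}

/-- Restriction `1_D f` of `f` to a region `D`. -/
def restr (D : Set (ℤ × ℝ)) (f : ℤ → ℝ → ℝ≥0∞) : ℤ → ℝ → ℝ≥0∞ :=
  fun m τ => Set.indicator D (fun p => f p.1 p.2) (m, τ)

/-- `X^s` norm: `‖1_{D₁∪D₅}f‖_{X^{s,(2j−1)/(2j)}} + ‖1_{D₂}f‖_{X^{(1−2j)s−1,s+1}}
  + ‖1_{D₃∪D₄}f‖_{X^{−s/j−1,s/j+1}}`. -/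
def XSn (j : ℕ) (lam s : ℝ) (f : ℤ → ℝ → ℝ≥0∞) : ℝ≥0∞ :=
  Xn j lam s ((2 * (j : ℝ) - 1) / (2 * (j : ℝ))) (restr (D1 j lam ∪ D5 j lam) f)
  + Xn j lam ((1 - 2 * (j : ℝ)) * s - 1) (s + 1) (restr (D2 j lam) f)
  + Xn j lam (-s / (j : ℝ) - 1) (s / (j : ℝ) + 1) (restr (D3 j lam ∪ D4 j lam) f)

/-- `Z^s` norm: `X^s` norm plus `Y^s` norm. -/
def Zn (j : ℕ) (lam s : ℝ) (f : ℤ → ℝ → ℝ≥0∞) : ℝ≥0∞ :=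
  XSn j lam s f + Yn lam s f

/-! ### Comparison of weights in logarithmic variables -/

/-- Upper bound, in logarithmic variables, for the weighted output multiplier at a frequency
`|k| ≥ 1`: `x`, `t` and `W` stand for the logarithms of `|k|`, `⟨σ⟩` and of `|k| ⟨σ⟩⁻¹` times the
`X^s` weight, and `γ = -s`. The three alternatives are the three regions in `σ`, with boundaries
blurred by `c`. -/
def OutHigh (J γ p q c x t W : ℝ) : Prop :=
  (t ≤ 2 * J * x + c ∧ W ≤ (1 - γ) * x - p * t + c) ∨
  (2 * J * x - c ≤ t ∧ t ≤ (2 * J + 1) * x + c ∧ W ≤ (2 * J - 1) * γ * x - γ * t + c) ∨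
  ((2 * J + 1) * x - c ≤ t ∧ W ≤ q * (x - t) + c)

/-- Lower bound, in logarithmic variables, for the `X^s` weight of an input at a frequency
`|k| ≥ 1` whose modulation is at least of the order of `|k|^{2j}`: `x`, `t` and `L` stand for the
logarithms of `|k|`, `⟨σ⟩` and of the weight. -/
def InFar (J γ q c x t L : ℝ) : Prop :=
  2 * J * x - c ≤ t ∧
  ((t ≤ (2 * J + 1) * x + c ∧ ((2 * J - 1) * γ - 1) * x - (γ - 1) * t - c ≤ L) ∨
   ((2 * J + 1) * x - c ≤ t ∧ (1 - q) * (t - x) - c ≤ L))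

/-- The relations between the parameters `J = j`, `γ = -s`, `p = 1/(2j)` and `q = -s/j`; the number
`c` bounds the additive errors in the logarithmic estimates. -/
structure Par (J γ p q c : ℝ) : Prop where
  hJ : 2 ≤ J
  hp : 2 * J * p = 1
  hq : J * q = γ
  h1 : J / 2 ≤ γ
  h2 : γ ≤ J - 1 / 2
  hc : 0 ≤ c

namespace Par
variable {J γ p q c : ℝ} (P : Par J γ p q c)
include P
lemma p_pos : 0 < p := by
  have := P.hp; have := P.hJ
  by_contra h
  nlinarith
lemma p_le : p ≤ 1 / 4 := by
  have := P.hp; have := P.hJ; have := P.p_pos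
  nlinarith
lemma q_ge : 1 / 2 ≤ q := by
  have := P.hq; have := P.hJ; have := P.h1
  by_contra h
  nlinarith
lemma q_le : q ≤ 1 - p := by
  have := P.hq; have := P.hJ; have := P.h2; have := P.hp
  by_contra h
  nlinarith
lemma g_ge : 1 ≤ γ := by
  have := P.hJ; have := P.h1; linarith

lemma out_crude {x t W : ℝ} (hx : 0 ≤ x) (ht : 0 ≤ t) (h : OutHigh J γ p q c x t W) :
    W ≤ (1 - γ) * x + (J + 1) * c := by
  have h1 := P.hJ; have h2 := P.g_ge; have h3 := P.p_pos; have h4 := P.q_ge; have h5 := P.q_le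
  have h6 := P.h2; have h7 := P.hc; have h8 := P.hq
  have e1 : γ * c ≤ J * c := by nlinarith
  have e0 : 0 ≤ J * c := by positivity
  rcases h with ⟨a, b⟩ | ⟨a, a', b⟩ | ⟨a, b⟩
  · nlinarith [mul_nonneg h3.le ht]
  · have := mul_le_mul_of_nonneg_left a (by linarith : 0 ≤ γ)
    nlinarith
  · have := mul_le_mul_of_nonneg_left a (by linarith : 0 ≤ q)
    have e2 : q * c ≤ 1 * c := by nlinarith
    have e3 : γ * x ≥ 0 := by positivity
    nlinarith

lemma far_ge {x t L : ℝ} (hx : 0 ≤ x) (h : InFar J γ q c x t L) :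
    (2 * J - 2 * γ) * x - (J + 1) * c ≤ L := by
  have h1 := P.hJ; have h2 := P.g_ge; have h3 := P.p_pos; have h4 := P.q_ge; have h5 := P.q_le
  have h6 := P.h2; have h7 := P.hc; have h8 := P.hq
  have e1 : γ * c ≤ J * c := by nlinarith
  rcases h with ⟨a, ⟨a', b⟩ | ⟨a', b⟩⟩
  · have := mul_le_mul_of_nonneg_left a' (by linarith : 0 ≤ γ - 1)
    nlinarith
  · have := mul_le_mul_of_nonneg_left a' (by linarith : 0 ≤ 1 - q)
    have e2 : q * c ≥ 0 := by nlinarith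
    have e3 : J * q * x = γ * x := by rw [h8]
    nlinarith

lemma far_ge_t {x t L : ℝ} (hx : 0 ≤ x) (h : InFar J γ q c x t L) :
    t - (2 * J + 1) * (J + 2) * c ≤ (2 * J + 1) * L := by
  have h1 := P.hJ; have h2 := P.g_ge; have h3 := P.p_pos; have h4 := P.q_ge; have h5 := P.q_le
  have h6 := P.h2; have h7 := P.hc; have h8 := P.hq
  have hp := P.hp
  have h9 := P.far_ge hx h
  have e1 : x ≤ (2 * J - 2 * γ) * x := by nlinarith
  have e0 : 0 ≤ J * c := by positivity
  have e5 : 0 ≤ J * J * c := by positivity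
  rcases h with ⟨a, ⟨a', b⟩ | ⟨a', b⟩⟩
  · have : (2 * J + 1) * (x - (J + 1) * c) ≤ (2 * J + 1) * L :=
      mul_le_mul_of_nonneg_left (by linarith) (by linarith)
    nlinarith
  · -- L ≥ (1-q)(t-x) - c, (2J+1) x ≤ t + c, (1-q) ≥ p
    have k1 : (2 * J + 1) * ((1 - q) * (t - x) - c) ≤ (2 * J + 1) * L :=
      mul_le_mul_of_nonneg_left (by linarith) (by linarith)
    have k2 : 0 ≤ (1 - q) * (t + c - (2 * J + 1) * x) := mul_nonneg (by linarith) (by linarith)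
    have k3 : 2 * J * (1 - q) ≥ 1 := by nlinarith
    have k4 : 0 ≤ t + c := by nlinarith
    have k5 : 0 ≤ (2 * J * (1 - q) - 1) * (t + c) := mul_nonneg (by linarith) k4
    have k6 : (1-q) * c ≤ 1 * c := by nlinarith
    have k7 : J * ((1-q) * c) ≤ J * (1 * c) := mul_le_mul_of_nonneg_left k6 (by linarith)
    nlinarith

/-- Output modulation dominant, output frequency at least one; here and below `X` is the logarithm
of the largest frequency. -/
lemma sd_high {x x1 x2 X t W : ℝ} (hx : x ≤ X) (h1 : x1 ≤ X) (h2 : x2 ≤ X)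
    (h : OutHigh J γ p q c x t W) (ht : x + x1 + x2 + (2 * J - 2) * X - c ≤ t) :
    W ≤ -γ * (x1 + x2) + (2 * J + 1) * c := by
  have h1' := P.hJ; have h2' := P.g_ge; have h3 := P.p_pos; have h4 := P.q_ge; have h5 := P.q_le
  have h6 := P.h2; have h7 := P.hc; have h8 := P.hq
  have hp := P.hp
  have pl := P.p_le
  have e1 : γ * c ≤ J * c := by nlinarith
  have key : 0 ≤ γ * (t - (x + x1 + x2 + (2 * J - 2) * X - c)) := mul_nonneg (by linarith) (by linarith)
  have k2 : 0 ≤ (2 * J - 2) * γ * (X - x) := by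
    apply mul_nonneg (mul_nonneg _ _) <;> linarith
  rcases h with ⟨a, b⟩ | ⟨a, a', b⟩ | ⟨a, b⟩
  · have k3 : 0 ≤ (γ - p) * (2 * J * x + c - t) := mul_nonneg (by linarith) (by linarith)
    have k4 : 2 * J * p * x = x := by rw [hp, one_mul]
    have k5 : 0 ≤ p * c := by positivity
    nlinarith
  · nlinarith
  · have k3 : 0 ≤ q * (t - (x + x1 + x2 + (2 * J - 2) * X - c)) := mul_nonneg (by linarith) (by linarith)
    have k4 : 0 ≤ (q * (J - 1)) * (2 * X - x1 - x2) := by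
      apply mul_nonneg (mul_nonneg _ _) <;> linarith
    have k5 : J * q * x1 = γ * x1 := by rw [h8]
    have k6 : J * q * x2 = γ * x2 := by rw [h8]
    have k7 : q * c ≤ 1 * c := by nlinarith
    nlinarith

/-- Output modulation dominant, output frequency at most one. -/
lemma sd_low {x x1 x2 X t W : ℝ} (hx : x ≤ 0) (h1 : x1 ≤ X) (h2 : x2 ≤ X)
    (h : W ≤ x - q * t + c) (ht : x + x1 + x2 + (2 * J - 2) * X - c ≤ t) :
    W ≤ -γ * (x1 + x2) + 2 * c := by
  have h1' := P.hJ; have h2' := P.g_ge; have h3 := P.p_pos; have h4 := P.q_ge; have h5 := P.q_le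
  have h6 := P.h2; have h7 := P.hc; have h8 := P.hq
  have k3 : 0 ≤ q * (t - (x + x1 + x2 + (2 * J - 2) * X - c)) := mul_nonneg (by linarith) (by linarith)
  have k4 : 0 ≤ (q * (J - 1)) * (2 * X - x1 - x2) := by
    apply mul_nonneg (mul_nonneg _ _) <;> linarith
  have k5 : J * q * x1 = γ * x1 := by rw [h8]
  have k6 : J * q * x2 = γ * x2 := by rw [h8]
  have k7 : q * c ≤ 1 * c := by nlinarith
  have k8 : 0 ≤ (1 - q) * (-x) := mul_nonneg (by linarith) (by linarith)
  nlinarith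

/-- Both inputs near the curve `σ = 0`, output frequency at most one. -/
lemma near_near_low {x x1 x2 X t t1 W L : ℝ} (hx : x ≤ 0) (hX : 0 ≤ X) (ht0 : 0 ≤ t)
    (h1 : x1 ≤ X) (h2 : x2 ≤ X)
    (h1' : X - c ≤ x1) (h2' : X - c ≤ x2)
    (h : W ≤ x - q * t + c) (ht : x + x1 + x2 + (2 * J - 2) * X - c ≤ t1)
    (hL : -γ * x1 + (1 - p) * t1 - c ≤ L) :
    W ≤ L - γ * x2 + 5 * c := by
  have hJ := P.hJ; have h2'' := P.g_ge; have h3 := P.p_pos; have h4 := P.q_ge; have h5 := P.q_le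
  have h6 := P.h2; have h7 := P.hc; have h8 := P.hq; have hp := P.hp
  have k1 : 0 ≤ (1 - p) * (t1 - (x + 2 * J * X - 3 * c)) := mul_nonneg (by linarith) (by linarith)
  have k2 : 2 * J * p * X = X := by rw [hp, one_mul]
  have k3 : 0 ≤ γ * (X - x1) := mul_nonneg (by linarith) (by linarith)
  have k4 : 0 ≤ γ * (X - x2) := mul_nonneg (by linarith) (by linarith)
  have k5 : 0 ≤ (2 * J - 1 - 2 * γ) * X := mul_nonneg (by linarith) (by linarith)
  have k6 : 0 ≤ p * (-x) := mul_nonneg (by linarith) (by linarith)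
  have k7 : 0 ≤ p * c := by positivity
  have k8 : 0 ≤ q * t := mul_nonneg (by linarith) ht0
  nlinarith

/-- First input far from the curve, output frequency at most one. The modulation `t1` is at most of
the order of the resonance function. -/
lemma far_near_low {x x1 x2 X t t1 W L : ℝ} (hx : x ≤ 0) (hX : 0 ≤ X) (ht0 : 0 ≤ t)
    (h1 : x1 ≤ X) (h2 : x2 ≤ X) (h1' : X - c ≤ x1)
    (h : W ≤ x - q * t + c) (ht : t1 ≤ 2 * J * X + c)
    (hL : InFar J γ q c x1 t1 L) :
    W ≤ L - γ * x2 + 10 * J ^ 2 * c := by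
  have hJ := P.hJ; have h2'' := P.g_ge; have h3 := P.p_pos; have h4 := P.q_ge; have h5 := P.q_le
  have h6 := P.h2; have h7 := P.hc; have h8 := P.hq; have hp := P.hp
  have k8 : 0 ≤ q * t := mul_nonneg (by linarith) ht0
  have k4 : 0 ≤ γ * (X - x2) := mul_nonneg (by linarith) (by linarith)
  have k5 : 0 ≤ (2 * J - 1 - 2 * γ) * X := mul_nonneg (by linarith) (by linarith)
  have e1 : γ * c ≤ J * c := by nlinarith
  have e2 : 2 * (J * c) ≤ J ^ 2 * c := by nlinarith [mul_nonneg (by linarith : 0 ≤ J) h7]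
  have e3 : 2 * c ≤ J * c := by nlinarith
  have e4 : J * (γ * c) ≤ J * (J * c) := mul_le_mul_of_nonneg_left e1 (by linarith)
  rcases hL with ⟨a, ⟨a', b⟩ | ⟨a', b⟩⟩
  · have k1 : 0 ≤ ((2 * J - 1) * γ - 1) * (x1 - X + c) := mul_nonneg (by nlinarith) (by linarith)
    have k2 : 0 ≤ (γ - 1) * (2 * J * X + c - t1) := mul_nonneg (by linarith) (by linarith)
    nlinarith
  · -- X ≤ (2J+2) c
    have k1 : (2 * J + 1) * (X - c) ≤ (2 * J + 1) * x1 := mul_le_mul_of_nonneg_left h1' (by linarith)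
    have k2 : X ≤ (2 * J + 3) * c := by nlinarith
    have k3 : 0 ≤ (1 - q) * (t1 + c - (2 * J + 1) * x1) := mul_nonneg (by linarith) (by linarith)
    have k6 : 0 ≤ γ * ((2 * J + 3) * c - X) := mul_nonneg (by linarith) (by linarith)
    have k7 : 0 ≤ (1 - q) * J * (x1 - X + c) := mul_nonneg (mul_nonneg (by linarith) (by linarith)) (by linarith)
    have k9 : 0 ≤ (1 - q) * J * X := mul_nonneg (mul_nonneg (by linarith) (by linarith)) (by linarith)
    have k10 : (1 - q) * c ≤ 1 * c := by nlinarith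
    have k11 : J * ((1-q) * c) ≤ J * (1 * c) := mul_le_mul_of_nonneg_left k10 (by linarith)
    nlinarith

/-- First input far from the curve and resonant, output frequency at least one. The hypothesis `hm`
says that two of the three frequencies are comparable to the largest one. -/
lemma far_near_high {x x1 x2 X t t1 W L : ℝ} (hx0 : 0 ≤ x) (h10 : 0 ≤ x1) (h20 : 0 ≤ x2)
    (hx : x ≤ X) (h1 : x1 ≤ X) (h2 : x2 ≤ X) (ht0 : 0 ≤ t)
    (hm : (X - c ≤ x ∧ X - c ≤ x1) ∨ (X - c ≤ x ∧ X - c ≤ x2) ∨ (X - c ≤ x1 ∧ X - c ≤ x2))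
    (h : OutHigh J γ p q c x t W)
    (ht : x + x1 + x2 + (2 * J - 2) * X - c ≤ t1) (ht' : t1 ≤ x + x1 + x2 + (2 * J - 2) * X + c)
    (hL : InFar J γ q c x1 t1 L) :
    W ≤ L - γ * x2 - 3 / 4 * x + 20 * J ^ 2 * c ∨ W ≤ L - γ * x2 - p * t + 20 * J ^ 2 * c := by
  have hJ := P.hJ; have h2'' := P.g_ge; have h3 := P.p_pos; have h4 := P.q_ge; have h5 := P.q_le
  have h6 := P.h2; have h7 := P.hc; have h8 := P.hq; have hp := P.hp
  have e1 : γ * c ≤ J * c := by nlinarith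
  have e2 : 2 * (J * c) ≤ J ^ 2 * c := by nlinarith [mul_nonneg (by linarith : 0 ≤ J) h7]
  have e3 : 2 * c ≤ J * c := by nlinarith
  have e4 : J * (γ * c) ≤ J * (J * c) := mul_le_mul_of_nonneg_left e1 (by linarith)
  -- outside the region near the curve, the output multiplier gains a full power of `|k|`
  have hW : W ≤ -γ * x + (J + 1) * c ∨ W ≤ (1 - γ) * x - p * t + c := by
    rcases h with ⟨a, b⟩ | ⟨a, a', b⟩ | ⟨a, b⟩
    · exact Or.inr b
    · left
      have := mul_le_mul_of_nonneg_left a (by linarith : 0 ≤ γ)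
      nlinarith
    · left
      have := mul_le_mul_of_nonneg_left a (by linarith : 0 ≤ q)
      have e2 : q * c ≤ 1 * c := by nlinarith
      have e3 : γ * x ≥ 0 := by positivity
      nlinarith
  have hX : 0 ≤ X := by linarith
  rcases hL with ⟨-, ⟨a', b⟩ | ⟨a', b⟩⟩
  · have hx1 : X - 3 * c ≤ x1 := by
      rcases hm with ⟨_, _⟩ | ⟨u, v⟩ | ⟨_, _⟩
      · linarith
      · nlinarith
      · linarith
    have main : (1 - γ) * x ≤ L - γ * x2 + 10 * J ^ 2 * c := by
      have k1 : 0 ≤ ((2 * J - 1) * γ - 1) * (x1 - X + 3 * c) := mul_nonneg (by nlinarith) (by linarith)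
      have k2 : 0 ≤ (γ - 1) * (x + x1 + x2 + (2 * J - 2) * X + c - t1) := mul_nonneg (by linarith) (by linarith)
      have k3 : 0 ≤ (γ - 1) * (X - x1) := mul_nonneg (by linarith) (by linarith)
      have k4 : 0 ≤ (2 * J - 1 - 2 * γ) * X := mul_nonneg (by linarith) hX
      have k5 : 0 ≤ (2 * γ - 1) * (X - x2) := mul_nonneg (by linarith) (by linarith)
      nlinarith
    rcases hW with hW | hW
    · left; nlinarith
    · right; nlinarith
  · have hx1 : (2 * J + 1) * x1 ≤ x + x1 + x2 + (2 * J - 2) * X + 2 * c := by linarith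
    have hxx : X - (2 * J + 3) * c ≤ x ∧ X - (2 * J + 3) * c ≤ x2 := by
      have e0 : 0 ≤ J * c := by positivity
      have e5 : X - c ≤ x1 → (2 * J + 1) * (X - c) ≤ (2 * J + 1) * x1 := fun h =>
        mul_le_mul_of_nonneg_left h (by linarith)
      rcases hm with ⟨u, v⟩ | ⟨u, v⟩ | ⟨u, v⟩
      · have := e5 v
        constructor <;> linarith
      · constructor <;> linarith
      · have := e5 u
        constructor <;> linarith
    have main : (1 - γ) * X ≤ L - γ * x2 + 10 * J ^ 2 * c := by
      have k1 : 0 ≤ (1 - q) * (t1 - (x + x1 + x2 + (2 * J - 2) * X - c)) := mul_nonneg (by linarith) (by linarith)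
      have k2 : 0 ≤ (1 - q) * (x + x2 - 2 * X + 2 * ((2 * J + 3) * c)) := mul_nonneg (by linarith) (by linarith)
      have k3 : 0 ≤ γ * (X - x2) := mul_nonneg (by linarith) (by linarith)
      have k4 : 0 ≤ (2 * J - 1 - 2 * γ) * X := mul_nonneg (by linarith) hX
      have k5 : 0 ≤ q * c := mul_nonneg (by linarith) h7
      have k6 : J * q * X = γ * X := by rw [h8]
      have k8 : J * q * c = γ * c := by rw [h8]
      have k9 : 0 ≤ γ * c := mul_nonneg (by linarith) h7
      linarith
    have k7 : 0 ≤ (γ - 1) * (x - X + (2 * J + 3) * c) := mul_nonneg (by linarith) (by linarith)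
    have k8 : 0 ≤ γ * c := mul_nonneg (by linarith) h7
    rcases hW with hW | hW
    · left; linarith
    · right; linarith

/-- Both inputs far from the curve: the two weights absorb `⟨σ⟩^ε`, where `ε = 1/(4(2j+1))`, besides
the indicated powers of the frequencies. The exponent `ε` brings `⟨σ⟩^{-1/2}` to a
square-integrable power. -/
lemma far_far_aux {x1 x2 X t t1 t2 L1 L2 : ℝ} (h10 : 0 ≤ x1) (h20 : 0 ≤ x2) (hX : X ≤ x1 + c)
    (h12 : x2 ≤ x1)
    (ht : t ≤ t1 + c ∨ t ≤ t2 + c ∨ t ≤ (2 * J + 1) * X + c)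
    (hL1 : InFar J γ q c x1 t1 L1) (hL2 : InFar J γ q c x2 t2 L2) :
    x1 / 2 + t / (4 * (2 * J + 1)) + 3 / 4 * x2 ≤ L1 + L2 + 10 * J * c := by
  have hJ := P.hJ; have h6 := P.h2; have h7 := P.hc
  have a1 := P.far_ge h10 hL1
  have a2 := P.far_ge h20 hL2
  have b1 := P.far_ge_t h10 hL1
  have b2 := P.far_ge_t h20 hL2
  have e1 : x1 ≤ (2 * J - 2 * γ) * x1 := by nlinarith
  have e2 : x2 ≤ (2 * J - 2 * γ) * x2 := by nlinarith
  set n := 2 * J + 1 with hn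
  have hn0 : 0 < n := by linarith
  have d1 : t1 / n - (J + 2) * c ≤ L1 := by
    have : t1 / n ≤ L1 + (J + 2) * c := by
      rw [div_le_iff₀ hn0]; nlinarith
    linarith
  have d2 : t2 / n - (J + 2) * c ≤ L2 := by
    have : t2 / n ≤ L2 + (J + 2) * c := by
      rw [div_le_iff₀ hn0]; nlinarith
    linarith
  have hc5 : c / n ≤ c := div_le_self h7 (by linarith)
  have e3 : 2 * c ≤ J * c := by nlinarith
  have ht4 : t / (4 * n) = t / n / 4 := by rw [mul_comm, div_div]
  rw [ht4]
  rcases ht with ht | ht | ht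
  · have : t / n ≤ t1 / n + c / n := by rw [← add_div]; gcongr
    linarith
  · have : t / n ≤ t2 / n + c / n := by rw [← add_div]; gcongr
    linarith
  · have : t / n ≤ X + c / n := by
      rw [div_le_iff₀ hn0, add_mul, div_mul_cancel₀ _ hn0.ne']; linarith
    linarith

lemma far_far_high {x x1 x2 X t t1 t2 W L1 L2 : ℝ} (hx0 : 0 ≤ x) (hxX : x ≤ X)
    (h10 : 0 ≤ x1) (h20 : 0 ≤ x2) (hX : X ≤ x1 + c) (h12 : x2 ≤ x1)
    (ht : t ≤ t1 + c ∨ t ≤ t2 + c ∨ t ≤ (2 * J + 1) * X + c)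
    (h : OutHigh J γ p q c x t W)
    (hL1 : InFar J γ q c x1 t1 L1) (hL2 : InFar J γ q c x2 t2 L2) :
    W + (1 / 2 + 1 / (4 * (2 * J + 1))) * t ≤ L1 + L2 - 3 / 4 * x2 + 20 * J * c := by
  have hJ := P.hJ; have h6 := P.h2; have h7 := P.hc
  have h2'' := P.g_ge; have h3 := P.p_pos; have h4 := P.q_ge; have h5 := P.q_le
  have h8 := P.hq; have hp := P.hp; have pl := P.p_le
  have e1 : γ * c ≤ J * c := by nlinarith
  have e3 : 2 * c ≤ J * c := by nlinarith
  have main := P.far_far_aux h10 h20 hX h12 ht hL1 hL2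
  set e := 1 / (4 * (2 * J + 1)) with he
  have he0 : 0 < e := by positivity
  have he1 : e * (4 * (2 * J + 1)) = 1 := by rw [he]; field_simp
  have he2 : 2 * J * e ≤ 1 / 4 := by nlinarith
  have he3 : t / (4 * (2 * J + 1)) = e * t := by rw [he]; ring
  rw [he3] at main
  have hec : e * c ≤ 1 * c := by
    apply mul_le_mul_of_nonneg_right _ h7
    nlinarith
  have big : W + (1 / 2 + e) * t ≤ (J - γ + 2 * J * e) * x + (J + 2) * c →
      W + (1 / 2 + e) * t ≤ L1 + L2 - 3 / 4 * x2 + 20 * J * c := by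
    intro hW
    have a1 := P.far_ge h10 hL1
    have a2 := P.far_ge h20 hL2
    have k1 : 0 ≤ (2 * J - 2 * γ - 1) * x2 := mul_nonneg (by linarith) (by linarith)
    have k2 : 0 ≤ (J - γ + 2 * J * e) * (x1 + c - x) := mul_nonneg (by nlinarith) (by linarith)
    have k3 : 0 ≤ (J - γ - 2 * J * e) * x1 := mul_nonneg (by linarith) h10
    have k4 : 2 * J * e * c ≤ 1 / 4 * c := mul_le_mul_of_nonneg_right he2 h7
    have k5 : 0 ≤ γ * c := mul_nonneg (by linarith) h7
    linarith
  rcases h with ⟨a, b⟩ | ⟨a, a', b⟩ | ⟨a, b⟩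
  · apply big
    have k1 : 0 ≤ (1 / 2 + e - p) * (2 * J * x + c - t) := mul_nonneg (by linarith) (by linarith)
    have k4 : 2 * J * p * x = x := by rw [hp, one_mul]
    have k5 : 0 ≤ p * c := by positivity
    linarith
  · apply big
    have k1 : 0 ≤ (γ - 1 / 2 - e) * (t - (2 * J * x - c)) := mul_nonneg (by nlinarith) (by linarith)
    have k5 : 0 ≤ e * c := by positivity
    linarith
  · have k0 : x - c ≤ t := by nlinarith
    have k1 : 0 ≤ (q - 1 / 2) * (t - x + c) := mul_nonneg (by linarith) (by linarith)
    have k2 : q * c ≤ 1 * c := mul_le_mul_of_nonneg_right (by linarith) h7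
    linarith

lemma far_far_low {x x1 x2 X t t1 t2 W L1 L2 : ℝ} (hx0 : x ≤ 0) (ht0 : 0 ≤ t)
    (h10 : 0 ≤ x1) (h20 : 0 ≤ x2) (hX : X ≤ x1 + c) (h12 : x2 ≤ x1)
    (ht : t ≤ t1 + c ∨ t ≤ t2 + c ∨ t ≤ (2 * J + 1) * X + c)
    (h : W ≤ x - q * t + c)
    (hL1 : InFar J γ q c x1 t1 L1) (hL2 : InFar J γ q c x2 t2 L2) :
    W + (1 / 2 + 1 / (4 * (2 * J + 1))) * t ≤ L1 + L2 - 3 / 4 * x2 + 20 * J * c := by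
  have hJ := P.hJ; have h6 := P.h2; have h7 := P.hc
  have h4 := P.q_ge
  have e3 : 2 * c ≤ J * c := by nlinarith
  have main := P.far_far_aux h10 h20 hX h12 ht hL1 hL2
  have he3 : t / (4 * (2 * J + 1)) = 1 / (4 * (2 * J + 1)) * t := by ring
  rw [he3] at main
  have k1 : 0 ≤ (q - 1 / 2) * t := mul_nonneg (by linarith) (by linarith)
  linarith

/-- Second input of frequency at most one, first input near the curve. -/
lemma near_small {x x1 x2 t t1 t2 W L1 L2 : ℝ} (hx0 : 0 ≤ x) (h10 : 0 ≤ x1)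
    (hx2 : x2 ≤ 0) (hxx1 : x ≤ x1 + c) (hxx1' : x1 ≤ x + c)
    (ht0 : 0 ≤ t) (ht10 : 0 ≤ t1) (ht20 : 0 ≤ t2)
    (h : OutHigh J γ p q c x t W)
    (ht : x2 + 2 * J * x1 - c ≤ t ∨ x2 + 2 * J * x1 - c ≤ t1 ∨ x2 + 2 * J * x1 - c ≤ t2)
    (hL1 : -γ * x1 + (1 - p) * t1 - c ≤ L1) (hL2 : (1 - q) * t2 - c ≤ L2) :
    W ≤ L1 - 1 / 4 * x2 + 10 * J * c ∨ W ≤ -γ * x1 + L2 - 1 / 4 * x2 + 10 * J * c := by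
  have hJ := P.hJ; have h6 := P.h2; have h7 := P.hc
  have h2'' := P.g_ge; have h3 := P.p_pos; have h4 := P.q_ge; have h5 := P.q_le
  have h8 := P.hq; have hp := P.hp; have pl := P.p_le
  have e1 : γ * c ≤ J * c := by nlinarith
  have e3 : 2 * c ≤ J * c := by nlinarith
  have g1 : 0 ≤ γ * (x + c - x1) := mul_nonneg (by linarith) (by linarith)
  have g2 : 0 ≤ (1 - p) * t1 := mul_nonneg (by linarith) ht10
  have hW : W ≤ -γ * x + (J + 1) * c ∨ W ≤ (1 - γ) * x - p * t + c := by
    rcases h with ⟨a, b⟩ | ⟨a, a', b⟩ | ⟨a, b⟩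
    · exact Or.inr b
    · left
      have := mul_le_mul_of_nonneg_left a (by linarith : 0 ≤ γ)
      nlinarith
    · left
      have := mul_le_mul_of_nonneg_left a (by linarith : 0 ≤ q)
      have e2 : q * c ≤ 1 * c := by nlinarith
      have e3 : γ * x ≥ 0 := by positivity
      nlinarith
  rcases hW with hW | hW
  · left; linarith
  · have k4 : 2 * J * p * x1 = x1 := by rw [hp, one_mul]
    have k5 : 0 ≤ (1 / 4 - p) * (-x2) := mul_nonneg (by linarith) (by linarith)
    have k6 : p * c ≤ 1 * c := mul_le_mul_of_nonneg_right (by linarith) h7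
    have k7 : 0 ≤ p * t := mul_nonneg h3.le ht0
    rcases ht with ht | ht | ht
    · left
      have k1 : 0 ≤ p * (t - (x2 + 2 * J * x1 - c)) := mul_nonneg h3.le (by linarith)
      linarith
    · left
      have k1 : 0 ≤ p * (t1 - (x2 + 2 * J * x1 - c)) := mul_nonneg h3.le (by linarith)
      have k8 : 0 ≤ (1 - 2 * p) * t1 := mul_nonneg (by linarith) ht10
      linarith
    · right
      have k1 : 0 ≤ p * (t2 - (x2 + 2 * J * x1 - c)) := mul_nonneg h3.le (by linarith)
      have k8 : 0 ≤ (1 - q - p) * t2 := mul_nonneg (by linarith) ht20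
      linarith

end Par

/-! ### The `X^s` weights in logarithmic variables -/

/-- The section of `D₁ ∪ D₅` in terms of `k` and `σ`. -/
def Reg1 (j : ℕ) (k σ : ℝ) : Prop :=
  (1 ≤ |k| ∧ |σ| ≤ 2 * (2 * (j : ℝ) + 1) / 3 * |k| ^ (2 * j)) ∨
  (|k| ≤ 1 ∧ |σ| ≤ 2 * (2 * (j : ℝ) + 1) * |k| ^ (2 * j + 1))
/-- The section of `D₂` in terms of `k` and `σ`. -/
def Reg2 (j : ℕ) (k σ : ℝ) : Prop :=
  1 ≤ |k| ∧ 2 * (2 * (j : ℝ) + 1) / 3 * |k| ^ (2 * j) < |σ| ∧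
    |σ| ≤ 2 * (2 * (j : ℝ) + 1) * |k| ^ (2 * j + 1)
/-- The section of `D₃ ∪ D₄` in terms of `k` and `σ`; the condition on `|k|` is void there. -/
def Reg3 (j : ℕ) (k σ : ℝ) : Prop := 2 * (2 * (j : ℝ) + 1) * |k| ^ (2 * j + 1) < |σ|

/-- `v` is the `X^s` weight at `(k, σ)` attached to a region containing `(k, σ)`. It is a relation
because `D₁` and `D₅` meet `D₂`, `D₃` and `D₄` in frequencies `|k| = 1`. -/
def WRel (j : ℕ) (s k σ v : ℝ) : Prop :=
  (Reg1 j k σ ∧ v = jap k ^ s * jap σ ^ ((2 * (j : ℝ) - 1) / (2 * (j : ℝ)))) ∨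
  (Reg2 j k σ ∧ v = jap k ^ ((1 - 2 * (j : ℝ)) * s - 1) * jap σ ^ (s + 1)) ∨
  (Reg3 j k σ ∧ v = jap k ^ (-s / (j : ℝ) - 1) * jap σ ^ (s / (j : ℝ) + 1))

lemma jap_ge_one (x : ℝ) : 1 ≤ jap x := by
  unfold jap; rw [Real.one_le_sqrt]; nlinarith [sq_nonneg x]
lemma jap_pos (x : ℝ) : 0 < jap x := by linarith [jap_ge_one x]
lemma abs_le_jap (x : ℝ) : |x| ≤ jap x := by
  unfold jap; apply Real.le_sqrt_of_sq_le; rw [sq_abs]; linarith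
lemma jap_le (x : ℝ) : jap x ≤ 1 + |x| := by
  unfold jap; rw [Real.sqrt_le_left (by positivity)]
  nlinarith [abs_nonneg x, sq_abs x]
lemma log_jap_nonneg (x : ℝ) : 0 ≤ Real.log (jap x) := Real.log_nonneg (jap_ge_one x)

lemma log_two_le_one : Real.log 2 ≤ 1 := by
  have := Real.log_two_lt_d9; linarith

lemma le_log_jap {P C x : ℝ} (hP : 0 < P) (hC : 0 < C) (h : P ≤ C * |x|) :
    Real.log P - Real.log C ≤ Real.log (jap x) := by
  rw [sub_le_iff_le_add, ← Real.log_mul (jap_pos x).ne' hC.ne', mul_comm]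
  exact Real.log_le_log hP (h.trans (by gcongr; exact abs_le_jap x))

lemma log_jap_le {P C x : ℝ} (hP : 0 < P) (hC : 0 < C) (h : 1 + |x| ≤ C * P) :
    Real.log (jap x) ≤ Real.log P + Real.log C := by
  rw [← Real.log_mul hP.ne' hC.ne', mul_comm]
  exact Real.log_le_log (jap_pos x) ((jap_le x).trans h)

lemma log_jap_high {k : ℝ} (hk : 1 ≤ |k|) :
    Real.log |k| ≤ Real.log (jap k) ∧ Real.log (jap k) ≤ Real.log |k| + 1 := by
  have h0 : 0 < |k| := by linarith
  refine ⟨Real.log_le_log h0 (abs_le_jap k), ?_⟩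
  have := log_jap_le (P := |k|) (C := 2) (x := k) h0 two_pos (by linarith)
  linarith [log_two_le_one]

lemma log_jap_low {k : ℝ} (hk : |k| ≤ 1) : Real.log (jap k) ≤ 1 := by
  have := log_jap_le (P := 1) (C := 2) (x := k) one_pos two_pos (by linarith)
  linarith [log_two_le_one, Real.log_one]

/-- The logarithm of a number exceeding every multiplicative constant in the comparisons below. -/
def cE (j : ℕ) : ℝ := Real.log (16 * (2 * (j : ℝ) + 1))
/-- The additive slack in the logarithmic description of the weights: `cE j` times a bound for the
exponents. -/
def cc (j : ℕ) : ℝ := 4 * (j : ℝ) ^ 2 * cE j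

section
variable {j : ℕ} (hj : 2 ≤ j)
include hj
lemma J2 : (2 : ℝ) ≤ j := by exact_mod_cast hj
lemma cE_ge : 1 ≤ cE j := by
  have := J2 hj
  unfold cE
  rw [Real.le_log_iff_exp_le (by positivity)]
  have := Real.exp_one_lt_d9
  linarith
lemma log_le_cE {C : ℝ} (h0 : 0 < C) (h : C ≤ 16 * (2 * (j : ℝ) + 1)) : Real.log C ≤ cE j :=
  Real.log_le_log h0 h

lemma par_of {s : ℝ} (hs₁ : -(j : ℝ) + 1 / 2 ≤ s) (hs₂ : s ≤ -(j : ℝ) / 2) :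
    Par (j : ℝ) (-s) (1 / (2 * (j : ℝ))) (-s / j) (cc j) := by
  have := J2 hj
  have := cE_ge hj
  constructor
  · assumption
  · field_simp
  · field_simp
  · linarith
  · linarith
  · unfold cc; positivity

variable {s k σ v : ℝ}

lemma wrel_pos (hv : WRel j s k σ v) : 0 < v := by
  have := jap_pos k; have := jap_pos σ
  rcases hv with ⟨-, rfl⟩ | ⟨-, rfl⟩ | ⟨-, rfl⟩ <;> positivity

lemma log_wt (a b : ℝ) : Real.log (jap k ^ a * jap σ ^ b) =
    a * Real.log (jap k) + b * Real.log (jap σ) := by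
  have h1 := jap_pos k; have h2 := jap_pos σ
  rw [Real.log_mul (by positivity) (by positivity), Real.log_rpow h1, Real.log_rpow h2]

lemma wrel_log (hv : WRel j s k σ v) :
    (Reg1 j k σ ∧ Real.log v = s * Real.log (jap k)
      + (1 - 1 / (2 * (j : ℝ))) * Real.log (jap σ)) ∨
    (Reg2 j k σ ∧ Real.log v = ((1 - 2 * (j : ℝ)) * s - 1) * Real.log (jap k)
      + (s + 1) * Real.log (jap σ)) ∨
    (Reg3 j k σ ∧ Real.log v = (-s / j - 1) * Real.log (jap k)
      + (s / j + 1) * Real.log (jap σ)) := by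
  have := J2 hj
  rcases hv with ⟨a, rfl⟩ | ⟨a, rfl⟩ | ⟨a, rfl⟩
  · left; refine ⟨a, ?_⟩; rw [log_wt hj]; congr 2; field_simp
  · right; left; exact ⟨a, log_wt hj _ _⟩
  · right; right; exact ⟨a, log_wt hj _ _⟩

lemma reg_low (hk : |k| ≤ 1) :
    (Reg1 j k σ ∨ Reg2 j k σ → Real.log (jap σ) ≤ cE j) := by
  have hJ := J2 hj
  intro h
  have e1 : |k| ^ (2 * j) ≤ 1 := pow_le_one₀ (abs_nonneg k) hk
  have e2 : |k| ^ (2 * j + 1) ≤ 1 := pow_le_one₀ (abs_nonneg k) hk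
  have h2 : |σ| ≤ 2 * (2 * (j : ℝ) + 1) := by
    rcases h with (⟨-, h⟩ | ⟨-, h⟩) | ⟨-, -, h⟩
    · nlinarith
    · nlinarith
    · nlinarith
  have := log_jap_le (P := 1) (C := 16 * (2 * (j : ℝ) + 1)) (x := σ) one_pos (by positivity)
    (by linarith)
  rw [Real.log_one, zero_add] at this
  exact this

lemma reg1_high (hk : 1 ≤ |k|) (h : Reg1 j k σ) :
    Real.log (jap σ) ≤ 2 * j * Real.log |k| + cE j := by
  have hJ := J2 hj
  have h0 : 0 < |k| := by linarith
  have e1 : 1 ≤ |k| ^ (2 * j) := one_le_pow₀ hk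
  have := log_jap_le (P := |k| ^ (2 * j)) (C := 16 * (2 * (j : ℝ) + 1)) (x := σ) (by positivity)
    (by positivity) (by
      rcases h with ⟨-, h⟩ | ⟨h', h⟩
      · nlinarith
      · have : |k| = 1 := le_antisymm h' hk
        rw [this] at h ⊢; simp at h ⊢; linarith)
  rw [Real.log_pow] at this; push_cast at this
  exact this

lemma far_high (hk : 1 ≤ |k|) (h : |k| ^ (2 * j) / 8 ≤ |σ|) :
    2 * j * Real.log |k| - cE j ≤ Real.log (jap σ) := by
  have hJ := J2 hj
  have h0 : 0 < |k| := by linarith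
  have := le_log_jap (P := |k| ^ (2 * j)) (C := 8) (x := σ) (by positivity)
    (by positivity) (by linarith)
  rw [Real.log_pow] at this; push_cast at this
  have := log_le_cE hj (C := 8) (by norm_num) (by linarith)
  linarith

lemma reg2_high (h : Reg2 j k σ) :
    |k| ^ (2 * j) / 8 < |σ| ∧ Real.log (jap σ) ≤ (2 * j + 1) * Real.log |k| + cE j := by
  have hJ := J2 hj
  obtain ⟨hk, h1, h2⟩ := h
  have h0 : 0 < |k| := by linarith
  have e1 : 1 ≤ |k| ^ (2 * j) := one_le_pow₀ hk
  have e2 : 1 ≤ |k| ^ (2 * j + 1) := one_le_pow₀ hk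
  refine ⟨by nlinarith, ?_⟩
  have := log_jap_le (P := |k| ^ (2 * j + 1)) (C := 16 * (2 * (j : ℝ) + 1)) (x := σ) (by positivity)
    (by positivity) (by nlinarith)
  rw [Real.log_pow] at this; push_cast at this
  exact this

lemma reg3_high (hk : 1 ≤ |k|) (h : Reg3 j k σ) :
    |k| ^ (2 * j) / 8 < |σ| ∧ (2 * j + 1) * Real.log |k| ≤ Real.log (jap σ) := by
  have hJ := J2 hj
  unfold Reg3 at h
  have h0 : 0 < |k| := by linarith
  have e1 : 1 ≤ |k| ^ (2 * j) := one_le_pow₀ hk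
  have e2 : |k| ^ (2 * j) ≤ |k| ^ (2 * j + 1) := pow_le_pow_right₀ hk (by omega)
  refine ⟨by nlinarith, ?_⟩
  have := le_log_jap (P := |k| ^ (2 * j + 1)) (C := 1) (x := σ) (by positivity)
    (by positivity) (by nlinarith)
  rw [Real.log_pow] at this; push_cast at this
  simpa using this

variable (hs₁ : -(j : ℝ) + 1 / 2 ≤ s) (hs₂ : s ≤ -(j : ℝ) / 2)
include hs₁ hs₂

/-- Lower bound for the weight of an input of frequency at most one. -/
lemma in_low (hv : WRel j s k σ v) (hk : |k| ≤ 1) :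
    (1 - -s / j) * Real.log (jap σ) - cc j ≤ Real.log v := by
  have P := par_of hj hs₁ hs₂
  have hJ := P.hJ; have hp := P.p_pos; have hpl := P.p_le; have hq := P.q_ge; have hq' := P.q_le
  have h1 := P.h1; have h2 := P.h2; have hE := cE_ge hj
  have ha := log_jap_low hk
  have ha0 := log_jap_nonneg k
  have ht0 := log_jap_nonneg σ
  have hqs : s / j = - (-s / j) := by ring
  have hl := wrel_log hj hv
  have hr := reg_low hj (σ := σ) hk
  rw [hqs] at hl
  unfold cc
  generalize 1 / (2 * (j : ℝ)) = p at *
  generalize -s / (j : ℝ) = q at *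
  generalize Real.log (jap k) = a at *
  generalize Real.log (jap σ) = t at *
  have e1 : (j : ℝ) * 1 ≤ j * cE j := by gcongr
  have e2 : (j : ℝ) * (j * cE j) ≥ 2 * (j * cE j) := by gcongr
  have e3 : -s * a ≤ j * 1 := by
    apply mul_le_mul _ ha ha0 (by linarith); linarith
  rcases hl with ⟨h, e⟩ | ⟨h, e⟩ | ⟨h, e⟩ <;> rw [e]
  · nlinarith
  · have := hr (Or.inr h)
    have e4 : -s * t ≤ j * cE j := by
      apply mul_le_mul _ this ht0 (by linarith); linarith
    have : 0 ≤ ((1 - 2 * (j : ℝ)) * s - 1) * a := by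
      apply mul_nonneg _ ha0; nlinarith
    nlinarith
  · nlinarith

/-- Lower bound for the weight of an input near the curve. The threshold `|k|^{2j}/8` lies inside
`D₁`; in the rest of `D₁` the weights of `D₁` and `D₂` are comparable. -/
lemma in_near (hv : WRel j s k σ v) (hk : 1 ≤ |k|) (hn : |σ| ≤ |k| ^ (2 * j) / 8) :
    s * Real.log |k| + (1 - 1 / (2 * (j : ℝ))) * Real.log (jap σ) - cc j ≤ Real.log v := by
  have P := par_of hj hs₁ hs₂
  have hJ := P.hJ; have h1 := P.h1; have h2 := P.h2; have hE := cE_ge hj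
  have ha := log_jap_high hk
  rcases wrel_log hj hv with ⟨h, e⟩ | ⟨h, e⟩ | ⟨h, e⟩
  · rw [e]; unfold cc
    have e1 : (j : ℝ) * 1 ≤ j * cE j := by gcongr
    have e2 : (j : ℝ) * (j * cE j) ≥ 2 * (j * cE j) := by gcongr
    nlinarith
  · have := (reg2_high hj h).1; linarith
  · have := (reg3_high hj hk h).1; linarith

lemma in_far (hv : WRel j s k σ v) (hk : 1 ≤ |k|) (hn : |k| ^ (2 * j) / 8 < |σ|) :
    InFar (j : ℝ) (-s) (-s / j) (cc j) (Real.log |k|) (Real.log (jap σ)) (Real.log v) := by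
  have P := par_of hj hs₁ hs₂
  have hJ := P.hJ; have hp := P.p_pos; have hpl := P.p_le; have hq := P.q_ge; have hq' := P.q_le
  have h1 := P.h1; have h2 := P.h2; have hE := cE_ge hj; have hp := P.hp
  have ha := log_jap_high hk
  have ht0 := log_jap_nonneg σ
  have hl0 : 0 ≤ Real.log |k| := Real.log_nonneg hk
  have hqs : s / j = - (-s / j) := by ring
  have hl := wrel_log hj hv
  have hf := far_high hj (σ := σ) hk hn.le
  have e1 : (j : ℝ) * 1 ≤ j * cE j := by gcongr
  have e2 : (j : ℝ) * (j * cE j) ≥ 2 * (j * cE j) := by gcongr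
  rw [hqs] at hl
  have hr1 := reg1_high (σ := σ) hj hk
  have hr2 := reg2_high (k := k) (σ := σ) hj
  have hr3 := reg3_high (σ := σ) hj hk
  unfold InFar cc
  generalize 1 / (2 * (j : ℝ)) = p at *
  generalize -s / (j : ℝ) = q at *
  generalize Real.log (jap k) = a at *
  generalize Real.log |k| = x at *
  generalize Real.log (jap σ) = t at *
  refine ⟨by nlinarith, ?_⟩
  rcases hl with ⟨h, e⟩ | ⟨h, e⟩ | ⟨h, e⟩ <;> rw [e]
  · left
    have hr := hr1 h
    refine ⟨by nlinarith, ?_⟩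
    have e3 : -s * a ≤ -s * (x + 1) := by apply mul_le_mul_of_nonneg_left ha.2; linarith
    have e4 : (-s - p) * (2 * j * x - cE j) ≤ (-s - p) * t := by
      apply mul_le_mul_of_nonneg_left hf; linarith
    have e5 : 2 * j * p * x = x := by rw [hp, one_mul]
    have e6 : -s * cE j ≤ j * cE j := by gcongr; linarith
    have e7 : 0 ≤ p * cE j := by positivity
    nlinarith
  · left
    have hr := hr2 h
    refine ⟨by nlinarith, ?_⟩
    have : ((1 - 2 * (j : ℝ)) * s - 1) * x ≤ ((1 - 2 * (j : ℝ)) * s - 1) * a := by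
      apply mul_le_mul_of_nonneg_left ha.1; nlinarith
    nlinarith
  · right
    have hr := hr3 h
    refine ⟨by nlinarith, ?_⟩
    have : (1 - q) * a ≤ (1 - q) * (x + 1) := by
      apply mul_le_mul_of_nonneg_left ha.2; linarith
    nlinarith

lemma out_low (hv : WRel j s k σ v) (hk0 : k ≠ 0) (hk : |k| ≤ 1) :
    Real.log (|k| * (jap σ)⁻¹ * v) ≤
      Real.log |k| - (-s / j) * Real.log (jap σ) + cc j := by
  have P := par_of hj hs₁ hs₂
  have hJ := P.hJ; have hp := P.p_pos; have hpl := P.p_le; have hq := P.q_ge; have hq' := P.q_le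
  have h1 := P.h1; have h2 := P.h2; have hE := cE_ge hj; have hqq := P.hq
  have ha := log_jap_low hk
  have ha0 := log_jap_nonneg k
  have ht0 := log_jap_nonneg σ
  have hqs : s / j = - (-s / j) := by ring
  have hl := wrel_log hj hv
  have hr := reg_low hj (σ := σ) hk
  rw [hqs] at hl
  rw [Real.log_mul (by have := jap_pos σ; positivity) (wrel_pos hj hv).ne',
    Real.log_mul (by positivity) (by have := jap_pos σ; positivity), Real.log_inv]
  unfold cc
  generalize 1 / (2 * (j : ℝ)) = p at *
  generalize -s / (j : ℝ) = q at *
  generalize Real.log (jap k) = a at *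
  generalize Real.log (jap σ) = t at *
  have e1 : (j : ℝ) * 1 ≤ j * cE j := by gcongr
  have e2 : (j : ℝ) * (j * cE j) ≥ 2 * (j * cE j) := by gcongr
  have e3 : 0 ≤ -s * a := by
    apply mul_nonneg _ ha0; linarith
  rcases hl with ⟨h, e⟩ | ⟨h, e⟩ | ⟨h, e⟩ <;> rw [e]
  · have := hr (Or.inl h)
    have : (q - p) * t ≤ 1 * cE j := by
      apply mul_le_mul _ this ht0 (by linarith); linarith
    nlinarith
  · have e5 : ((1 - 2 * (j : ℝ)) * s - 1) * a ≤ ((1 - 2 * (j : ℝ)) * s - 1) * 1 := by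
      apply mul_le_mul_of_nonneg_left ha; nlinarith
    have e6 : (2 * (j : ℝ) - 1) * -s ≤ (2 * (j : ℝ) - 1) * j := by
      apply mul_le_mul_of_nonneg_left <;> linarith
    have e7 : (j : ℝ) * (j * 1) ≤ j * (j * cE j) := by gcongr
    have e8 : q * t ≤ -s * t := by
      apply mul_le_mul_of_nonneg_right _ ht0; nlinarith
    nlinarith
  · nlinarith

lemma out_high (hv : WRel j s k σ v) (hk : 1 ≤ |k|) :
    OutHigh (j : ℝ) (-s) (1 / (2 * (j : ℝ))) (-s / j) (cc j) (Real.log |k|) (Real.log (jap σ))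
      (Real.log (|k| * (jap σ)⁻¹ * v)) := by
  have P := par_of hj hs₁ hs₂
  have hJ := P.hJ; have hp := P.p_pos; have hpl := P.p_le; have hq := P.q_ge; have hq' := P.q_le
  have h1 := P.h1; have h2 := P.h2; have hE := cE_ge hj; have hp := P.hp
  have ha := log_jap_high hk
  have ht0 := log_jap_nonneg σ
  have hl0 : 0 ≤ Real.log |k| := Real.log_nonneg hk
  have hqs : s / j = - (-s / j) := by ring
  have hl := wrel_log hj hv
  have e1 : (j : ℝ) * 1 ≤ j * cE j := by gcongr
  have e2 : (j : ℝ) * (j * cE j) ≥ 2 * (j * cE j) := by gcongr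
  rw [hqs] at hl
  have hr1 := reg1_high (σ := σ) hj hk
  have hr2 := reg2_high (k := k) (σ := σ) hj
  have hr2' : Reg2 j k σ → 2 * j * Real.log |k| - cE j ≤ Real.log (jap σ) :=
    fun h => far_high hj hk (hr2 h).1.le
  have hr3 := reg3_high (σ := σ) hj hk
  rw [Real.log_mul (by have := jap_pos σ; positivity) (wrel_pos hj hv).ne',
    Real.log_mul (by positivity) (by have := jap_pos σ; positivity), Real.log_inv]
  unfold OutHigh cc
  generalize 1 / (2 * (j : ℝ)) = p at *
  generalize -s / (j : ℝ) = q at *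
  generalize Real.log (jap k) = a at *
  generalize Real.log |k| = x at *
  generalize Real.log (jap σ) = t at *
  rcases hl with ⟨h, e⟩ | ⟨h, e⟩ | ⟨h, e⟩ <;> rw [e]
  · left
    have hr := hr1 h
    refine ⟨by nlinarith, ?_⟩
    have e3 : -s * x ≤ -s * a := by apply mul_le_mul_of_nonneg_left ha.1; linarith
    nlinarith
  · right; left
    have hr := hr2 h
    refine ⟨by nlinarith [hr2' h], by nlinarith [hr.2], ?_⟩
    have e5 : ((1 - 2 * (j : ℝ)) * s - 1) * a ≤ ((1 - 2 * (j : ℝ)) * s - 1) * (x + 1) := by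
      apply mul_le_mul_of_nonneg_left ha.2; nlinarith
    have e6 : (2 * (j : ℝ) - 1) * -s ≤ (2 * (j : ℝ) - 1) * j := by
      apply mul_le_mul_of_nonneg_left <;> linarith
    have e7 : (j : ℝ) * (j * 1) ≤ j * (j * cE j) := by gcongr
    nlinarith
  · right; right
    have hr := hr3 h
    refine ⟨by linarith [hr.2], ?_⟩
    have : (1 - q) * x ≤ (1 - q) * a := by
      apply mul_le_mul_of_nonneg_left ha.1; linarith
    nlinarith
end

/-! ### The resonance function -/

lemma pow_sub_bounds (m : ℕ) {x y : ℝ} (hy : 0 ≤ y) (h : y ≤ x) :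
    (x - y) * x ^ m ≤ x ^ (m + 1) - y ^ (m + 1) ∧
    x ^ (m + 1) - y ^ (m + 1) ≤ (m + 1 : ℝ) * ((x - y) * x ^ m) := by
  have hx : 0 ≤ x := hy.trans h
  induction m with
  | zero => simp
  | succ m ih =>
    obtain ⟨a, b⟩ := ih
    have e : x ^ (m + 1 + 1) - y ^ (m + 1 + 1) =
      x * (x ^ (m+1) - y ^ (m+1)) + (x - y) * y ^ (m+1) := by ring
    have h1 : 0 ≤ (x - y) * y ^ (m + 1) := mul_nonneg (by linarith) (by positivity)
    have h2 : (x - y) * y ^ (m + 1) ≤ (x - y) * x ^ (m + 1) :=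
      mul_le_mul_of_nonneg_left (pow_le_pow_left₀ hy h _) (by linarith)
    rw [e]
    have h3 := mul_le_mul_of_nonneg_left a hx
    have h4 := mul_le_mul_of_nonneg_left b hx
    have e2 : x * ((x - y) * x ^ m) = (x - y) * x ^ (m + 1) := by ring
    have e3 : x * ((m + 1 : ℝ) * ((x - y) * x ^ m)) = (m+1 : ℝ) * ((x - y) * x ^ (m + 1)) := by ring
    push_cast
    constructor <;> nlinarith

/-- The resonance function when the largest modulus is `p + q`, with `p` and `q` the other two. -/
lemma res_core {j : ℕ} (hj : 2 ≤ j) {p q : ℝ} (hp : 0 ≤ p) (hq : 0 ≤ q) :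
    2 * (p * q * (p + q) * (p + q) ^ (2 * j - 2)) ≤
      (p + q) ^ (2 * j + 1) - p ^ (2 * j + 1) - q ^ (2 * j + 1) ∧
    (p + q) ^ (2 * j + 1) - p ^ (2 * j + 1) - q ^ (2 * j + 1) ≤
      4 * j * (p * q * (p + q) * (p + q) ^ (2 * j - 2)) := by
  obtain ⟨i, rfl⟩ : ∃ i, j = i + 1 := ⟨j - 1, by omega⟩
  have e : 2 * (i + 1) - 2 = 2 * i := by omega
  rw [e]
  have b1 := pow_sub_bounds (2 * i + 1) hp (show p ≤ p + q by linarith)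
  have b2 := pow_sub_bounds (2 * i + 1) hq (show q ≤ p + q by linarith)
  have e1 : p + q - p = q := by ring
  have e2 : p + q - q = p := by ring
  rw [e1] at b1
  rw [e2] at b2
  have e3 : (p + q) ^ (2 * (i + 1) + 1) - p ^ (2 * (i + 1) + 1) - q ^ (2 * (i + 1) + 1)
    = p * ((p + q) ^ (2 * i + 1 + 1) - p ^ (2 * i + 1 + 1))
      + q * ((p + q) ^ (2 * i + 1 + 1) - q ^ (2 * i + 1 + 1)) := by ring
  have e4 : p * q * (p + q) * (p + q) ^ (2 * i) = p * (q * (p + q) ^ (2 * i + 1)) := by ring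
  have e5 : p * q * (p + q) * (p + q) ^ (2 * i) = q * (p * (p + q) ^ (2 * i + 1)) := by ring
  have c1 := mul_le_mul_of_nonneg_left b1.1 hp
  have c2 := mul_le_mul_of_nonneg_left b1.2 hp
  have c3 := mul_le_mul_of_nonneg_left b2.1 hq
  have c4 := mul_le_mul_of_nonneg_left b2.2 hq
  rw [e3]
  push_cast at *
  constructor
  · nlinarith
  · nlinarith

/-- The size `|k| |k₁| |k₂| max(|k|, |k₁|, |k₂|)^{2j-2}` of the resonance function. -/
def resP (j : ℕ) (k k1 k2 : ℝ) : ℝ := |k| * |k1| * |k2| * (max |k| (max |k1| |k2|)) ^ (2 * j - 2)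

lemma resP_swap (j : ℕ) (k k1 k2 : ℝ) : resP j k k2 k1 = resP j k k1 k2 := by
  unfold resP; rw [max_comm |k2|]; ring

/-- The resonance function `kⁿ - k₁ⁿ - k₂ⁿ`, with `n = 2j+1`, is comparable to `resP`. -/
lemma res_bounds {j : ℕ} (hj : 2 ≤ j) {k k1 k2 : ℝ} (h : k = k1 + k2) :
    2 * resP j k k1 k2 ≤ |k ^ (2 * j + 1) - k1 ^ (2 * j + 1) - k2 ^ (2 * j + 1)| ∧
    |k ^ (2 * j + 1) - k1 ^ (2 * j + 1) - k2 ^ (2 * j + 1)| ≤ 4 * j * resP j k k1 k2 := by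
  have odd : Odd (2 * j + 1) := ⟨j, rfl⟩
  -- `p + q` is the largest modulus
  have key : ∀ p q H P : ℝ, 0 ≤ p → 0 ≤ q →
      (H = (p + q) ^ (2 * j + 1) - p ^ (2 * j + 1) - q ^ (2 * j + 1) ∨
       H = -((p + q) ^ (2 * j + 1) - p ^ (2 * j + 1) - q ^ (2 * j + 1))) →
      P = p * q * (p + q) * (p + q) ^ (2 * j - 2) → 2 * P ≤ |H| ∧ |H| ≤ 4 * j * P := by
    intro p q H P hp hq hH hP
    have hc := res_core hj hp hq
    have h0 : 0 ≤ p * q * (p + q) * (p + q) ^ (2 * j - 2) := by positivity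
    rw [← hP] at hc h0
    have : |H| = (p + q) ^ (2 * j + 1) - p ^ (2 * j + 1) - q ^ (2 * j + 1) := by
      rcases hH with h | h <;> rw [h]
      · rw [abs_of_nonneg]; linarith
      · rw [abs_neg, abs_of_nonneg]; linarith
    rw [this]; exact hc
  subst h
  have mx : ∀ p q : ℝ, 0 ≤ p → 0 ≤ q → max (p + q) (max p q) = p + q := by
    intro p q hp hq; rw [max_eq_left]; apply max_le <;> linarith
  unfold resP
  rcases le_total 0 k1 with h1 | h1 <;> rcases le_total 0 k2 with h2 | h2
  · apply key k1 k2 _ _ h1 h2 (Or.inl rfl)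
    rw [abs_of_nonneg h1, abs_of_nonneg h2, abs_of_nonneg (by linarith), mx _ _ h1 h2]; ring
  · rcases le_total 0 (k1 + k2) with h3 | h3
    · apply key (k1 + k2) (-k2) _ _ h3 (by linarith)
      · right; rw [odd.neg_pow]; ring
      · rw [abs_of_nonneg h1, abs_of_nonpos h2, abs_of_nonneg h3,
          show max k1 (-k2) = k1 from max_eq_left (by linarith),
          max_eq_right (show k1 + k2 ≤ k1 by linarith)]; ring
    · apply key (-(k1 + k2)) (k1) _ _ (by linarith) h1
      · left; rw [show -(k1 + k2) + k1 = -k2 by ring, odd.neg_pow, odd.neg_pow]; ring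
      · rw [abs_of_nonneg h1, abs_of_nonpos h2, abs_of_nonpos h3,
          show max k1 (-k2) = -k2 from max_eq_right (by linarith),
          max_eq_right (show -(k1 + k2) ≤ -k2 by linarith)]; ring
  · rcases le_total 0 (k1 + k2) with h3 | h3
    · apply key (k1 + k2) (-k1) _ _ h3 (by linarith)
      · right; rw [odd.neg_pow]; ring
      · rw [abs_of_nonneg h2, abs_of_nonpos h1, abs_of_nonneg h3,
          show max (-k1) k2 = k2 from max_eq_right (by linarith),
          max_eq_right (show k1 + k2 ≤ k2 by linarith)]; ring
    · apply key (-(k1 + k2)) (k2) _ _ (by linarith) h2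
      · left; rw [show -(k1 + k2) + k2 = -k1 by ring, odd.neg_pow, odd.neg_pow]; ring
      · rw [abs_of_nonneg h2, abs_of_nonpos h1, abs_of_nonpos h3,
          show max (-k1) k2 = -k1 from max_eq_left (by linarith),
          max_eq_right (show -(k1 + k2) ≤ -k1 by linarith)]; ring
  · apply key (-k1) (-k2) _ _ (by linarith) (by linarith)
    · right; rw [show -k1 + -k2 = -(k1 + k2) by ring, odd.neg_pow, odd.neg_pow, odd.neg_pow]; ring
    · rw [abs_of_nonpos h1, abs_of_nonpos h2, abs_of_nonpos (by linarith), neg_add,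
        mx (-k1) (-k2) (by linarith) (by linarith)]; ring

/-! ### Pointwise bound for the kernel: case analysis -/

/-- The logarithm of the multiplier `φ(k) = |k|^{-1/4} ⟨k⟩^{-1/2}`. -/
def lphi (k : ℝ) : ℝ := -(1 / 4) * Real.log |k| - 1 / 2 * Real.log (jap k)

/-- One of the six admissible logarithmic upper bounds for the output multiplier `W` in terms of
the weights `L1`, `L2` of the inputs. In the first three the weight of the second input is replaced
by that of the `Y^s` norm. -/
def Half (j : ℕ) (s k k1 k2 σ σ1 σ2 W L1 L2 K : ℝ) : Prop :=
  (W ≤ L1 + s * Real.log (jap k2) + lphi k1 + K) ∨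
  (W ≤ L1 + s * Real.log (jap k2) + lphi k2 + K) ∨
  (W ≤ L1 + s * Real.log (jap k2) + lphi k + K) ∨
  (W ≤ L1 + L2 - (1 / 2 + 1 / (4 * (2 * (j : ℝ) + 1))) * Real.log (jap σ) + lphi k2 + K) ∨
  (1 ≤ |k| ∧ W ≤ L1 + L2 - 1 / (2 * (j : ℝ)) * Real.log (jap σ1)
    - (1 - 1 / (2 * (j : ℝ))) * Real.log (jap σ2) + K) ∨
  (1 ≤ |k1| ∧ W ≤ L1 + L2 - 1 / (2 * (j : ℝ)) * Real.log (jap σ)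
    - (1 - 1 / (2 * (j : ℝ))) * Real.log (jap σ2) + K)

/-- A configuration of three frequencies `k = k1 + k2`, modulations satisfying the resonance identity,
and corresponding weights. -/
structure Conf (j : ℕ) (s k k1 k2 σ σ1 σ2 w w1 w2 : ℝ) : Prop where
  hj : 2 ≤ j
  hs₁ : -(j : ℝ) + 1 / 2 ≤ s
  hs₂ : s ≤ -(j : ℝ) / 2
  k0 : k ≠ 0
  k10 : k1 ≠ 0
  k20 : k2 ≠ 0
  hk : k = k1 + k2
  hσ : σ1 + σ2 - σ = k ^ (2 * j + 1) - k1 ^ (2 * j + 1) - k2 ^ (2 * j + 1)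
  hw : WRel j s k σ w
  hw1 : WRel j s k1 σ1 w1
  hw2 : WRel j s k2 σ2 w2

lemma lphi_high {k : ℝ} (hk : 1 ≤ |k|) : -(3 / 4) * Real.log |k| - 1 ≤ lphi k := by
  have := log_jap_high hk
  unfold lphi; linarith

lemma lphi_low {k : ℝ} (hk : |k| ≤ 1) : -(1 / 4) * Real.log |k| - 1 ≤ lphi k := by
  have := log_jap_low hk
  unfold lphi; linarith

namespace Conf
variable {j : ℕ} {s k k1 k2 σ σ1 σ2 w w1 w2 : ℝ} (C : Conf j s k k1 k2 σ σ1 σ2 w w1 w2)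
include C

lemma swap : Conf j s k k2 k1 σ σ2 σ1 w w2 w1 where
  hj := C.hj
  hs₁ := C.hs₁
  hs₂ := C.hs₂
  k0 := C.k0
  k10 := C.k20
  k20 := C.k10
  hk := by rw [C.hk, add_comm]
  hσ := by linarith [C.hσ]
  hw := C.hw
  hw1 := C.hw2
  hw2 := C.hw1

lemma M_pos : 0 < max |k| (max |k1| |k2|) := lt_max_of_lt_left (abs_pos.2 C.k0)
lemma P_pos : 0 < resP j k k1 k2 := by
  have := C.M_pos; have := abs_pos.2 C.k0; have := abs_pos.2 C.k10; have := abs_pos.2 C.k20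
  unfold resP; positivity
lemma log_P : Real.log (resP j k k1 k2) = Real.log |k| + Real.log |k1| + Real.log |k2| +
    (2 * j - 2) * Real.log (max |k| (max |k1| |k2|)) := by
  have h0 := C.M_pos; have h1 := abs_pos.2 C.k0; have h2 := abs_pos.2 C.k10
  have h3 := abs_pos.2 C.k20; have := C.hj
  unfold resP
  rw [Real.log_mul (by positivity) (by positivity), Real.log_mul (by positivity) (by positivity),
    Real.log_mul (by positivity) (by positivity), Real.log_pow, Nat.cast_sub (by omega)]
  push_cast; ring
lemma ub : |k| ≤ max |k| (max |k1| |k2|) ∧ |k1| ≤ max |k| (max |k1| |k2|) ∧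
    |k2| ≤ max |k| (max |k1| |k2|) := by
  refine ⟨le_max_left _ _, ?_, ?_⟩ <;> simp
lemma ubl : Real.log |k| ≤ Real.log (max |k| (max |k1| |k2|)) ∧
    Real.log |k1| ≤ Real.log (max |k| (max |k1| |k2|)) ∧
    Real.log |k2| ≤ Real.log (max |k| (max |k1| |k2|)) := by
  obtain ⟨a, b, c⟩ := C.ub
  exact ⟨Real.log_le_log (abs_pos.2 C.k0) a, Real.log_le_log (abs_pos.2 C.k10) b,
    Real.log_le_log (abs_pos.2 C.k20) c⟩
lemma tri : |k| ≤ |k1| + |k2| ∧ |k1| ≤ |k| + |k2| ∧ |k2| ≤ |k| + |k1| := by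
  have := C.hk
  refine ⟨this ▸ abs_add_le _ _, ?_, ?_⟩
  · rw [show k1 = k - k2 by linarith]; exact abs_sub _ _
  · rw [show k2 = k - k1 by linarith]; exact abs_sub _ _
lemma logM {x : ℝ} (hx : 0 < x) (h : max |k| (max |k1| |k2|) ≤ 2 * x) :
    Real.log (max |k| (max |k1| |k2|)) - 1 ≤ Real.log x := by
  have := Real.log_le_log C.M_pos h
  rw [Real.log_mul two_pos.ne' hx.ne'] at this
  linarith [log_two_le_one]
/-- Two of the three frequencies are at least half the largest. -/
lemma half_max :
    (max |k| (max |k1| |k2|) ≤ 2 * |k| ∧ max |k| (max |k1| |k2|) ≤ 2 * |k1|) ∨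
    (max |k| (max |k1| |k2|) ≤ 2 * |k| ∧ max |k| (max |k1| |k2|) ≤ 2 * |k2|) ∨
    (max |k| (max |k1| |k2|) ≤ 2 * |k1| ∧ max |k| (max |k1| |k2|) ≤ 2 * |k2|) := by
  obtain ⟨a, b, c⟩ := C.tri
  simp only [max_le_iff]
  have := abs_nonneg k; have := abs_nonneg k1; have := abs_nonneg k2
  by_contra! h
  obtain ⟨h1, h2, h3⟩ := h
  grind
lemma par : Par (j : ℝ) (-s) (1 / (2 * (j : ℝ))) (-s / j) (cc j) := par_of C.hj C.hs₁ C.hs₂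
lemma c_ge : cE j ≤ cc j := by
  have h := J2 C.hj; have := cE_ge C.hj
  have : (2 : ℝ) ^ 2 * cE j ≤ (j : ℝ) ^ 2 * cE j := by gcongr
  unfold cc; linarith
lemma res : 2 * resP j k k1 k2 ≤ |σ1 + σ2 - σ| ∧ |σ1 + σ2 - σ| ≤ 4 * j * resP j k k1 k2 := by
  rw [C.hσ]; exact res_bounds C.hj C.hk

lemma t_ge {x D : ℝ} (hD : 0 < D) (hD' : D ≤ 16 * (2 * (j : ℝ) + 1))
    (h : resP j k k1 k2 ≤ D * |x|) : Real.log |k| + Real.log |k1| + Real.log |k2| +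
    (2 * j - 2) * Real.log (max |k| (max |k1| |k2|)) - cc j ≤ Real.log (jap x) := by
  have := le_log_jap C.P_pos hD h
  have := log_le_cE C.hj hD hD'
  have := C.c_ge
  rw [C.log_P] at *
  linarith

lemma t_le {x D Q : ℝ} (hD : 0 < D) (hD' : D ≤ 16 * (2 * (j : ℝ) + 1)) (hQ : 0 < Q)
    (h : 1 + |x| ≤ D * Q) : Real.log (jap x) ≤ Real.log Q + cc j := by
  have := log_jap_le hQ hD h
  have := log_le_cE C.hj hD hD'
  have := C.c_ge
  linarith

lemma y_high (h2 : 1 ≤ |k2|) : s * Real.log |k2| - cc j ≤ s * Real.log (jap k2) := by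
  have := log_jap_high h2
  have := J2 C.hj; have := cE_ge C.hj; have := C.hs₁; have := C.hs₂
  have : (j : ℝ) * 1 ≤ j * cE j := by gcongr
  unfold cc
  nlinarith
lemma y_low (h2 : |k2| ≤ 1) : - cc j ≤ s * Real.log (jap k2) := by
  have := log_jap_low h2
  have := log_jap_nonneg k2
  have := J2 C.hj; have := cE_ge C.hj; have := C.hs₁; have := C.hs₂
  have : (j : ℝ) * 1 ≤ j * cE j := by gcongr
  unfold cc
  nlinarith
lemma cc_ge : 1 ≤ cc j := (cE_ge C.hj).trans C.c_ge

lemma L1_ge (h1 : 1 ≤ |k1|) : s * Real.log |k1| - 2 * j * cc j ≤ Real.log w1 := by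
  have hp := C.par; have := J2 C.hj; have := C.cc_ge; have h5 := hp.h2
  have hx : 0 ≤ Real.log |k1| := Real.log_nonneg h1
  rcases le_or_gt |σ1| (|k1| ^ (2 * j) / 8) with h | h
  · have a := in_near C.hj C.hs₁ C.hs₂ C.hw1 h1 h
    have := hp.p_le; have := log_jap_nonneg σ1
    nlinarith
  · have a := hp.far_ge hx (in_far C.hj C.hs₁ C.hs₂ C.hw1 h1 h)
    nlinarith

/-- Output modulation dominant. If both inputs are near the curve, the kernel
`⟨σ₁⟩^{-p} ⟨σ₂⟩^{-(1-p)}` is used; an input far from the curve gains a power of its frequency. -/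
lemma case_sd_high (h0 : 1 ≤ |k|) (h1 : 1 ≤ |k1|) (h2 : 1 ≤ |k2|)
    (hsd : resP j k k1 k2 ≤ 2 * |σ|) :
    Half j s k k1 k2 σ σ1 σ2 (Real.log (|k| * (jap σ)⁻¹ * w)) (Real.log w1) (Real.log w2)
      (40 * (j : ℝ) ^ 2 * cc j) ∨
    Half j s k k2 k1 σ σ2 σ1 (Real.log (|k| * (jap σ)⁻¹ * w)) (Real.log w2) (Real.log w1)
      (40 * (j : ℝ) ^ 2 * cc j) := by
  have hJ := J2 C.hj
  have hp := C.par
  have hc := C.cc_ge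
  have := hp.h1; have := hp.h2; have := hp.p_le; have := hp.p_pos
  obtain ⟨u0, u1, u2⟩ := C.ubl
  have ho := hp.sd_high u0 u1 u2 (out_high C.hj C.hs₁ C.hs₂ C.hw h0)
    (C.t_ge two_pos (by linarith) hsd)
  have q1 : (j : ℝ) * cc j ≥ 2 * cc j := by gcongr
  have q2 : (j : ℝ) ^ 2 * cc j ≥ 2 * (j * cc j) := by nlinarith
  rcases le_or_gt |σ1| (|k1| ^ (2 * j) / 8) with n1 | n1
  · rcases le_or_gt |σ2| (|k2| ^ (2 * j) / 8) with n2 | n2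
    · left; right; right; right; right; left
      refine ⟨h0, ?_⟩
      have a1 := in_near C.hj C.hs₁ C.hs₂ C.hw1 h1 n1
      have a2 := in_near C.hj C.hs₁ C.hs₂ C.hw2 h2 n2
      have := log_jap_nonneg σ1
      nlinarith
    · right; left
      have a := hp.far_ge (Real.log_nonneg h2) (in_far C.hj C.hs₁ C.hs₂ C.hw2 h2 n2)
      have := C.swap.y_high h1
      have := lphi_high h2
      have : Real.log |k2| ≤ (2 * j - 2 * -s) * Real.log |k2| := by
        have := Real.log_nonneg h2; nlinarith
      nlinarith [Real.log_nonneg h2]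
  · left; left
    have a := hp.far_ge (Real.log_nonneg h1) (in_far C.hj C.hs₁ C.hs₂ C.hw1 h1 n1)
    have := C.y_high h2
    have := lphi_high h1
    have : Real.log |k1| ≤ (2 * j - 2 * -s) * Real.log |k1| := by
      have := Real.log_nonneg h1; nlinarith
    nlinarith [Real.log_nonneg h1]

lemma case_sd_low (h0 : |k| ≤ 1) (h1 : 1 ≤ |k1|) (h2 : 1 ≤ |k2|)
    (hsd : resP j k k1 k2 ≤ 2 * |σ|) :
    Half j s k k1 k2 σ σ1 σ2 (Real.log (|k| * (jap σ)⁻¹ * w)) (Real.log w1) (Real.log w2)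
      (40 * (j : ℝ) ^ 2 * cc j) := by
  have hJ := J2 C.hj
  have hp := C.par
  have hc := C.cc_ge
  obtain ⟨u0, u1, u2⟩ := C.ubl
  have ho := hp.sd_low (Real.log_nonpos (abs_nonneg _) h0) u1 u2
    (out_low C.hj C.hs₁ C.hs₂ C.hw C.k0 h0) (C.t_ge two_pos (by linarith) hsd)
  have q1 : (j : ℝ) * cc j ≥ 2 * cc j := by gcongr
  have q2 : (j : ℝ) ^ 2 * cc j ≥ 2 * (j * cc j) := by nlinarith
  right; right; left
  have := C.L1_ge h1
  have := C.y_high h2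
  have := lphi_low h0
  have := Real.log_nonpos (abs_nonneg _) h0
  nlinarith

/-- The output has low frequency, both inputs may be near the curve, and `σ1` is dominant. -/
lemma case_near_near_low (h0 : |k| ≤ 1) (h1 : 1 ≤ |k1|) (h2 : 1 ≤ |k2|)
    (n1 : |σ1| ≤ |k1| ^ (2 * j) / 8) (hsd : resP j k k1 k2 ≤ 2 * |σ1|) :
    Half j s k k1 k2 σ σ1 σ2 (Real.log (|k| * (jap σ)⁻¹ * w)) (Real.log w1) (Real.log w2)
      (40 * (j : ℝ) ^ 2 * cc j) := by
  have hJ := J2 C.hj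
  have hp := C.par
  have hc := C.cc_ge
  obtain ⟨u0, u1, u2⟩ := C.ubl
  obtain ⟨v0, v1, v2⟩ := C.tri
  have m1 := C.logM (x := |k1|) (by linarith) (by simp only [max_le_iff]; grind)
  have m2 := C.logM (x := |k2|) (by linarith) (by simp only [max_le_iff]; grind)
  have ho := hp.near_near_low (Real.log_nonpos (abs_nonneg _) h0)
    ((Real.log_nonneg h1).trans u1) (log_jap_nonneg σ) u1 u2 (by linarith) (by linarith)
    (out_low C.hj C.hs₁ C.hs₂ C.hw C.k0 h0) (C.t_ge two_pos (by linarith) hsd)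
    (L := Real.log w1) (by have := in_near C.hj C.hs₁ C.hs₂ C.hw1 h1 n1; linarith)
  have q1 : (j : ℝ) * cc j ≥ 2 * cc j := by gcongr
  have q2 : (j : ℝ) ^ 2 * cc j ≥ 2 * (j * cc j) := by nlinarith
  right; right; left
  have := C.y_high h2
  have := lphi_low h0
  have := Real.log_nonpos (abs_nonneg _) h0
  nlinarith

lemma log_Mpow (m : ℕ) : Real.log ((max |k| (max |k1| |k2|)) ^ m) =
    m * Real.log (max |k| (max |k1| |k2|)) := Real.log_pow _ _

lemma P_le_low (h0 : |k| ≤ 1) : resP j k k1 k2 ≤ (max |k| (max |k1| |k2|)) ^ (2 * j) := by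
  have := C.M_pos; have := C.ub; have := C.hj
  unfold resP
  rw [show (max |k| (max |k1| |k2|)) ^ (2 * j) = 1 * (max |k| (max |k1| |k2|)) *
    (max |k| (max |k1| |k2|)) * (max |k| (max |k1| |k2|)) ^ (2 * j - 2) by
      rw [one_mul, ← sq, ← pow_add]; congr 1; omega]
  gcongr
  · exact C.ub.2.1
  · exact C.ub.2.2

lemma P_le : resP j k k1 k2 ≤ (max |k| (max |k1| |k2|)) ^ (2 * j + 1) := by
  have := C.M_pos; have := C.ub; have := C.hj
  unfold resP
  rw [show (max |k| (max |k1| |k2|)) ^ (2 * j + 1) = (max |k| (max |k1| |k2|)) *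
    (max |k| (max |k1| |k2|)) *
    (max |k| (max |k1| |k2|)) * (max |k| (max |k1| |k2|)) ^ (2 * j - 2) by
      rw [← pow_three', ← pow_add]; congr 1; omega]
  gcongr
  · exact C.ub.1
  · exact C.ub.2.1
  · exact C.ub.2.2

lemma P_ge (h0 : 1 ≤ |k|) (h1 : 1 ≤ |k1|) (h2 : 1 ≤ |k2|) :
    (max |k| (max |k1| |k2|)) ^ (2 * j) ≤ 2 * resP j k k1 k2 := by
  have hM := C.M_pos; have hu := C.ub; have := C.hj
  unfold resP
  set M := max |k| (max |k1| |k2|)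
  have hm : 2 ≤ 2 * j := by omega
  have hM1 : 1 ≤ M := h0.trans hu.1
  rw [show M ^ (2 * j) = M ^ 2 * M ^ (2 * j - 2) by rw [← pow_add]; congr 1; omega, ← mul_assoc]
  gcongr
  have hh := C.half_max
  rcases le_total |k| |k1| with a | a <;> rcases le_total |k| |k2| with b | b <;>
    rcases le_total |k1| |k2| with c | c
  all_goals
    obtain ⟨v0, v1, v2⟩ := C.tri
    have hMM : M = |k| ∨ M = |k1| ∨ M = |k2| := by
      rcases max_choice |k| (max |k1| |k2|) with h | h
      · exact Or.inl h
      · rcases max_choice |k1| |k2| with h' | h'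
        · right; left; exact h.trans h'
        · right; right; exact h.trans h'
    have : |k| * |k1| ≤ |k| * |k1| * |k2| := le_mul_of_one_le_right (by positivity) h2
    have : |k| * |k2| ≤ |k| * |k1| * |k2| := by
      rw [mul_right_comm]; exact le_mul_of_one_le_right (by positivity) h1
    have : |k1| * |k2| ≤ |k| * |k1| * |k2| := by
      rw [mul_assoc]; exact le_mul_of_one_le_left (by positivity) h0
    rcases hMM with h | h | h <;> rw [h] at hu ⊢ <;> nlinarith

lemma case_far_near_low (h0 : |k| ≤ 1) (h1 : 1 ≤ |k1|) (h2 : 1 ≤ |k2|)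
    (n1 : |k1| ^ (2 * j) / 8 < |σ1|) (n2 : |σ2| ≤ |k2| ^ (2 * j) / 8)
    (hsd : 2 * |σ| ≤ resP j k k1 k2) :
    Half j s k k1 k2 σ σ1 σ2 (Real.log (|k| * (jap σ)⁻¹ * w)) (Real.log w1) (Real.log w2)
      (40 * (j : ℝ) ^ 2 * cc j) := by
  have hJ := J2 C.hj
  have hp := C.par
  have hc := C.cc_ge
  obtain ⟨u0, u1, u2⟩ := C.ubl
  obtain ⟨v0, v1, v2⟩ := C.tri
  have m1 := C.logM (x := |k1|) (by linarith) (by simp only [max_le_iff]; grind)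
  have ht : Real.log (jap σ1) ≤ 2 * j * Real.log (max |k| (max |k1| |k2|)) + cc j := by
    have hr := C.res.2
    have hP := C.P_le_low h0
    have e1 : |k2| ^ (2 * j) ≤ (max |k| (max |k1| |k2|)) ^ (2 * j) := by gcongr; exact C.ub.2.2
    have e2 : 1 ≤ |k2| ^ (2 * j) := one_le_pow₀ h2
    have := C.t_le (x := σ1) (D := 16 * (2 * (j : ℝ) + 1))
      (Q := (max |k| (max |k1| |k2|)) ^ (2 * j)) (by positivity) le_rfl (by linarith) (by
        have : |σ1| ≤ |σ1 + σ2 - σ| + |σ| + |σ2| := by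
          rw [show σ1 = (σ1 + σ2 - σ) + σ - σ2 by ring]
          refine (abs_sub _ _).trans ?_
          have := abs_add_le (σ1 + σ2 - σ) σ
          simp only [add_sub_cancel_right, sub_add_cancel]
          simp at this
          linarith
        have : 4 * j * resP j k k1 k2 ≤ 4 * j * (max |k| (max |k1| |k2|)) ^ (2 * j) := by gcongr
        nlinarith)
    rw [C.log_Mpow] at this; push_cast at this; exact this
  have ho := hp.far_near_low (Real.log_nonpos (abs_nonneg _) h0)
    ((Real.log_nonneg h1).trans u1) (log_jap_nonneg σ) u1 u2 (by linarith)
    (out_low C.hj C.hs₁ C.hs₂ C.hw C.k0 h0) ht (in_far C.hj C.hs₁ C.hs₂ C.hw1 h1 n1)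
  have q1 : (j : ℝ) * cc j ≥ 2 * cc j := by gcongr
  have q2 : (j : ℝ) ^ 2 * cc j ≥ 2 * (j * cc j) := by nlinarith
  right; right; left
  have := C.y_high h2
  have := lphi_low h0
  have := Real.log_nonpos (abs_nonneg _) h0
  nlinarith

lemma abs1_le : |σ1| ≤ |σ1 + σ2 - σ| + |σ| + |σ2| := by
  have := abs_add_le (σ1 + σ2 - σ) σ
  have h2 := abs_sub ((σ1 + σ2 - σ) + σ) σ2
  rw [show (σ1 + σ2 - σ) + σ - σ2 = σ1 by ring] at h2
  linarith
lemma abs_le_abs1 : |σ1 + σ2 - σ| ≤ |σ1| + |σ2| + |σ| := by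
  have := abs_add_le (σ1) σ2
  have h2 := abs_sub (σ1 + σ2) σ
  linarith

/-- Only the first input is far from the curve; its modulation is comparable to the resonance
function. -/
lemma case_far_near_high (h0 : 1 ≤ |k|) (h1 : 1 ≤ |k1|) (h2 : 1 ≤ |k2|)
    (n1 : |k1| ^ (2 * j) / 8 < |σ1|) (n2 : |σ2| ≤ |k2| ^ (2 * j) / 8)
    (hsd : 2 * |σ| ≤ resP j k k1 k2) :
    Half j s k k1 k2 σ σ1 σ2 (Real.log (|k| * (jap σ)⁻¹ * w)) (Real.log w1) (Real.log w2)
      (40 * (j : ℝ) ^ 2 * cc j) := by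
  have hJ := J2 C.hj
  have hp := C.par
  have hc := C.cc_ge
  obtain ⟨u0, u1, u2⟩ := C.ubl
  obtain ⟨v0, v1, v2⟩ := C.tri
  have hr := C.res
  have hP := C.P_ge h0 h1 h2
  have hP0 := C.P_pos
  have e1 : |k2| ^ (2 * j) ≤ (max |k| (max |k1| |k2|)) ^ (2 * j) := by gcongr; exact C.ub.2.2
  have e2 : 1 ≤ |k2| ^ (2 * j) := one_le_pow₀ h2
  have ht : Real.log (jap σ1) ≤ Real.log (resP j k k1 k2) + cc j := by
    refine C.t_le (x := σ1) (D := 16 * (2 * (j : ℝ) + 1)) (by positivity) le_rfl hP0 ?_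
    have := C.abs1_le
    nlinarith
  have ht' := C.t_ge (x := σ1) two_pos (by linarith) (by have := C.abs_le_abs1; linarith)
  have hm := C.half_max
  have lm : ∀ x : ℝ, 1 ≤ x → max |k| (max |k1| |k2|) ≤ 2 * x →
      Real.log (max |k| (max |k1| |k2|)) - cc j ≤ Real.log x := by
    intro x hx h; have := C.logM (by linarith) h; linarith
  rw [C.log_P] at ht
  have ho := hp.far_near_high (Real.log_nonneg h0) (Real.log_nonneg h1) (Real.log_nonneg h2)
    u0 u1 u2 (log_jap_nonneg σ)
    (by
      rcases hm with ⟨a, b⟩ | ⟨a, b⟩ | ⟨a, b⟩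
      · exact Or.inl ⟨lm _ h0 a, lm _ h1 b⟩
      · exact Or.inr (Or.inl ⟨lm _ h0 a, lm _ h2 b⟩)
      · exact Or.inr (Or.inr ⟨lm _ h1 a, lm _ h2 b⟩))
    (out_high C.hj C.hs₁ C.hs₂ C.hw h0) ht' ht (in_far C.hj C.hs₁ C.hs₂ C.hw1 h1 n1)
  have q1 : (j : ℝ) * cc j ≥ 2 * cc j := by gcongr
  have q2 : (j : ℝ) ^ 2 * cc j ≥ 2 * (j * cc j) := by nlinarith
  rcases ho with ho | ho
  · right; right; left
    have := C.y_high h2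
    have := lphi_high h0
    nlinarith
  · right; right; right; right; right
    refine ⟨h1, ?_⟩
    have := in_near C.hj C.hs₁ C.hs₂ C.hw2 h2 n2
    nlinarith

lemma case_far_far (h1 : 1 ≤ |k1|) (h2 : 1 ≤ |k2|)
    (n1 : |k1| ^ (2 * j) / 8 < |σ1|) (n2 : |k2| ^ (2 * j) / 8 < |σ2|)
    (hsd : 2 * |σ| ≤ resP j k k1 k2) (h12 : |k2| ≤ |k1|) :
    Half j s k k1 k2 σ σ1 σ2 (Real.log (|k| * (jap σ)⁻¹ * w)) (Real.log w1) (Real.log w2)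
      (40 * (j : ℝ) ^ 2 * cc j) := by
  have hJ := J2 C.hj
  have hp := C.par
  have hc := C.cc_ge
  obtain ⟨u0, u1, u2⟩ := C.ubl
  obtain ⟨v0, v1, v2⟩ := C.tri
  have hP := C.P_le
  have hP0 := C.P_pos
  have m1 := C.logM (x := |k1|) (by linarith) (by simp only [max_le_iff]; grind)
  have e2 : 1 ≤ (max |k| (max |k1| |k2|)) ^ (2 * j + 1) := one_le_pow₀ (h1.trans C.ub.2.1)
  have ht : Real.log (jap σ) ≤ (2 * j + 1) * Real.log (max |k| (max |k1| |k2|)) + cc j := by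
    have := C.t_le (x := σ) (D := 16 * (2 * (j : ℝ) + 1))
      (Q := (max |k| (max |k1| |k2|)) ^ (2 * j + 1)) (by positivity) le_rfl (by linarith) (by
        nlinarith)
    rw [C.log_Mpow] at this; push_cast at this; exact this
  have i1 := in_far C.hj C.hs₁ C.hs₂ C.hw1 h1 n1
  have i2 := in_far C.hj C.hs₁ C.hs₂ C.hw2 h2 n2
  have l12 := Real.log_le_log (by linarith) h12
  have q1 : (j : ℝ) * cc j ≥ 2 * cc j := by gcongr
  have q2 : (j : ℝ) ^ 2 * cc j ≥ 2 * (j * cc j) := by nlinarith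
  have := lphi_high h2
  right; right; right; left
  rcases le_total 1 |k| with h0 | h0
  · have ho := hp.far_far_high (Real.log_nonneg h0) u0 (Real.log_nonneg h1) (Real.log_nonneg h2)
      (by linarith) l12 (Or.inr (Or.inr ht)) (out_high C.hj C.hs₁ C.hs₂ C.hw h0) i1 i2
    linarith
  · have ho := hp.far_far_low (Real.log_nonpos (abs_nonneg _) h0) (log_jap_nonneg σ)
      (Real.log_nonneg h1) (Real.log_nonneg h2)
      (by linarith) l12 (Or.inr (Or.inr ht)) (out_low C.hj C.hs₁ C.hs₂ C.hw C.k0 h0) i1 i2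
    linarith

/-- An input frequency is at most one. -/
lemma case_small (h2 : |k2| ≤ 1) :
    Half j s k k1 k2 σ σ1 σ2 (Real.log (|k| * (jap σ)⁻¹ * w)) (Real.log w1) (Real.log w2)
      (40 * (j : ℝ) ^ 2 * cc j) ∨
    Half j s k k2 k1 σ σ2 σ1 (Real.log (|k| * (jap σ)⁻¹ * w)) (Real.log w2) (Real.log w1)
      (40 * (j : ℝ) ^ 2 * cc j) := by
  have hJ := J2 C.hj
  have hp := C.par
  have hc := C.cc_ge
  obtain ⟨u0, u1, u2⟩ := C.ubl
  obtain ⟨v0, v1, v2⟩ := C.tri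
  have q1 : (j : ℝ) * cc j ≥ 2 * cc j := by gcongr
  have q2 : (j : ℝ) ^ 2 * cc j ≥ 2 * (j * cc j) := by nlinarith
  have y2 := C.y_low h2
  have p2 := lphi_low h2
  have l2 := Real.log_nonpos (abs_nonneg _) h2
  have hp1 := hp.p_le; have hp0 := hp.p_pos; have hq := hp.q_le
  have hg1 := hp.h1; have hg2 := hp.h2
  -- a lower bound for the weight of the first input, uniform in all variables, is enough
  have crude : -(4 * j * cc j) ≤ Real.log w1 →
    Half j s k k1 k2 σ σ1 σ2 (Real.log (|k| * (jap σ)⁻¹ * w)) (Real.log w1) (Real.log w2)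
      (40 * (j : ℝ) ^ 2 * cc j) := by
    intro h
    right; left
    rcases le_total 1 |k| with h0 | h0
    · have := hp.out_crude (Real.log_nonneg h0) (log_jap_nonneg σ)
        (out_high C.hj C.hs₁ C.hs₂ C.hw h0)
      nlinarith [Real.log_nonneg h0]
    · have := out_low C.hj C.hs₁ C.hs₂ C.hw C.k0 h0
      have := Real.log_nonpos (abs_nonneg _) h0
      have : 0 ≤ (-s / j) * Real.log (jap σ) :=
        mul_nonneg (by linarith [hp.q_ge]) (log_jap_nonneg _)
      nlinarith
  rcases le_total |k1| 1 with h1 | h1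
  · left; apply crude
    have := in_low C.hj C.hs₁ C.hs₂ C.hw1 h1
    have : 0 ≤ (1 - -s / j) * Real.log (jap σ1) := mul_nonneg (by linarith) (log_jap_nonneg _)
    nlinarith
  rcases le_or_gt |k1| 2 with h1' | h1'
  · left; apply crude
    have := C.L1_ge h1
    have : Real.log |k1| ≤ 1 := (Real.log_le_log (by linarith) h1').trans log_two_le_one
    have := Real.log_nonneg h1
    nlinarith
  rcases le_or_gt |σ1| (|k1| ^ (2 * j) / 8) with n1 | n1
  swap
  · left; apply crude
    have a := hp.far_ge (Real.log_nonneg h1) (in_far C.hj C.hs₁ C.hs₂ C.hw1 h1 n1)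
    have : 0 ≤ (2 * j - 2 * -s) * Real.log |k1| := mul_nonneg (by linarith) (Real.log_nonneg h1)
    nlinarith
  -- now `k` and `k1` are comparable, and `k1` is near the curve
  have h0 : 1 ≤ |k| := by linarith
  have m0 := C.logM (x := |k|) (by linarith) (by simp only [max_le_iff]; grind)
  have m1 := C.logM (x := |k1|) (by linarith) (by simp only [max_le_iff]; grind)
  have hr := C.res
  have ha := C.abs_le_abs1
  have hdom : resP j k k1 k2 ≤ 2 * |σ| ∨ resP j k k1 k2 ≤ 2 * |σ1| ∨ resP j k k1 k2 ≤ 2 * |σ2| := by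
    by_contra! h; linarith [h.1, h.2.1, h.2.2, hr.1, C.P_pos]
  have hge : ∀ x : ℝ, resP j k k1 k2 ≤ 2 * |x| →
      Real.log |k2| + 2 * j * Real.log |k1| - 2 * cc j ≤ Real.log (jap x) := by
    intro x hx
    have := C.t_ge two_pos (by linarith) hx
    have : (2 * (j : ℝ) - 2) * Real.log |k1| ≤
      (2 * j - 2) * Real.log (max |k| (max |k1| |k2|)) := by
      apply mul_le_mul_of_nonneg_left u1; linarith
    nlinarith
  have i1 := in_near C.hj C.hs₁ C.hs₂ C.hw1 h1 n1
  have i2 := in_low C.hj C.hs₁ C.hs₂ C.hw2 h2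
  have hp' : Par (j : ℝ) (-s) (1 / (2 * (j : ℝ))) (-s / j) (2 * cc j) :=
    ⟨hp.hJ, hp.hp, hp.hq, hp.h1, hp.h2, by linarith⟩
  have oh : OutHigh (j : ℝ) (-s) (1 / (2 * (j : ℝ))) (-s / j) (2 * cc j) (Real.log |k|)
      (Real.log (jap σ)) (Real.log (|k| * (jap σ)⁻¹ * w)) := by
    rcases out_high C.hj C.hs₁ C.hs₂ C.hw h0 with ⟨a, b⟩ | ⟨a, a', b⟩ | ⟨a, b⟩
    · left; constructor <;> linarith
    · right; left; refine ⟨?_, ?_, ?_⟩ <;> linarith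
    · right; right; constructor <;> linarith
  have ho := hp'.near_small (t1 := Real.log (jap σ1)) (t2 := Real.log (jap σ2))
    (L1 := Real.log w1) (L2 := Real.log w2) (Real.log_nonneg h0)
    (Real.log_nonneg h1) l2 (x1 := Real.log |k1|) (by linarith) (by linarith) (log_jap_nonneg σ)
    (log_jap_nonneg σ1) (log_jap_nonneg σ2) oh
    (by
      rcases hdom with h | h | h
      · exact Or.inl (hge _ h)
      · exact Or.inr (Or.inl (hge _ h))
      · exact Or.inr (Or.inr (hge _ h)))
    (by linarith) (by linarith)
  rcases ho with ho | ho
  · left; right; left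
    linarith
  · right; left
    have := C.swap.y_high h1
    linarith

/-- The pointwise comparison of weights, in logarithmic form. -/
theorem half :
    Half j s k k1 k2 σ σ1 σ2 (Real.log (|k| * (jap σ)⁻¹ * w)) (Real.log w1) (Real.log w2)
      (40 * (j : ℝ) ^ 2 * cc j) ∨
    Half j s k k2 k1 σ σ2 σ1 (Real.log (|k| * (jap σ)⁻¹ * w)) (Real.log w2) (Real.log w1)
      (40 * (j : ℝ) ^ 2 * cc j) := by
  rcases le_total |k2| 1 with h2 | h2
  · exact C.case_small h2
  rcases le_total |k1| 1 with h1 | h1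
  · exact (C.swap.case_small h1).symm
  have hsw := resP_swap j k k1 k2
  rcases le_total (resP j k k1 k2) (2 * |σ|) with hsd | hsd
  · rcases le_total 1 |k| with h0 | h0
    · exact C.case_sd_high h0 h1 h2 hsd
    · exact Or.inl (C.case_sd_low h0 h1 h2 hsd)
  have hr := C.res
  have ha := C.abs_le_abs1
  rcases le_or_gt |σ1| (|k1| ^ (2 * j) / 8) with n1 | n1 <;>
    rcases le_or_gt |σ2| (|k2| ^ (2 * j) / 8) with n2 | n2
  · rcases le_total 1 |k| with h0 | h0
    -- one modulation is of the order of the resonance function, so three frequencies above one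
    -- exclude that all three modulations are small
    · exfalso
      have := C.P_ge h0 h1 h2
      have e1 : |k1| ^ (2 * j) ≤ (max |k| (max |k1| |k2|)) ^ (2 * j) := by gcongr; exact C.ub.2.1
      have e2 : |k2| ^ (2 * j) ≤ (max |k| (max |k1| |k2|)) ^ (2 * j) := by gcongr; exact C.ub.2.2
      linarith [C.P_pos]
    · rcases le_total (resP j k k1 k2) (2 * |σ1|) with h | h
      · exact Or.inl (C.case_near_near_low h0 h1 h2 n1 h)
      · exact Or.inr (C.swap.case_near_near_low h0 h2 h1 n2 (by rw [hsw]; linarith [hr.1, C.P_pos]))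
  · rcases le_total 1 |k| with h0 | h0
    · exact Or.inr (C.swap.case_far_near_high h0 h2 h1 n2 n1 (by rwa [hsw]))
    · exact Or.inr (C.swap.case_far_near_low h0 h2 h1 n2 n1 (by rwa [hsw]))
  · rcases le_total 1 |k| with h0 | h0
    · exact Or.inl (C.case_far_near_high h0 h1 h2 n1 n2 hsd)
    · exact Or.inl (C.case_far_near_low h0 h1 h2 n1 n2 hsd)
  · rcases le_total |k2| |k1| with h | h
    · exact Or.inl (C.case_far_far h1 h2 n1 n2 hsd h)
    · exact Or.inr (C.swap.case_far_far h2 h1 n2 n1 (by rwa [hsw]) h)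
end Conf

/-! ### Bilinear operators with square-integrable kernels -/

/-- Counting measure times Lebesgue measure. The frequency spacing `1/λ` is not included. -/
abbrev muX : Measure (ℤ × ℝ) := (Measure.count : Measure ℤ).prod volume

instance : muX.IsNegInvariant := by
  constructor
  have := ((Measure.measurePreserving_neg (Measure.count : Measure ℤ)).prod
    (Measure.measurePreserving_neg (volume : Measure ℝ))).map_eq
  exact this

section cs
variable {α : Type*} [MeasurableSpace α] {μ : Measure α}

lemma rpow_half_sq (x : ℝ≥0∞) : (x ^ (1 / 2 : ℝ)) ^ 2 = x := by
  rw [← ENNReal.rpow_natCast, ← ENNReal.rpow_mul]; norm_num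

lemma sq_rpow_half (x : ℝ≥0∞) : (x ^ 2) ^ (1 / 2 : ℝ) = x := by
  rw [← ENNReal.rpow_natCast, ← ENNReal.rpow_mul]; norm_num

lemma le_rpow_half {x y : ℝ≥0∞} (h : x ^ 2 ≤ y) : x ≤ y ^ (1 / 2 : ℝ) := by
  rw [← sq_rpow_half x]; exact ENNReal.rpow_le_rpow h (by norm_num)

lemma cs_half {f g : α → ℝ≥0∞} (hf : AEMeasurable f μ) (hg : AEMeasurable g μ) :
    ∫⁻ a, f a * g a ∂μ ≤ (∫⁻ a, f a ^ 2 ∂μ) ^ (1 / 2 : ℝ) * (∫⁻ a, g a ^ 2 ∂μ) ^ (1 / 2 : ℝ) := by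
  have := ENNReal.lintegral_mul_le_Lp_mul_Lq μ Real.HolderConjugate.two_two hf hg
  simpa using this

lemma cs_sq {f g : α → ℝ≥0∞} (hf : AEMeasurable f μ) (hg : AEMeasurable g μ) :
    (∫⁻ a, f a * g a ∂μ) ^ 2 ≤ (∫⁻ a, f a ^ 2 ∂μ) * (∫⁻ a, g a ^ 2 ∂μ) := by
  calc _ ≤ ((∫⁻ a, f a ^ 2 ∂μ) ^ (1 / 2 : ℝ) * (∫⁻ a, g a ^ 2 ∂μ) ^ (1 / 2 : ℝ)) ^ 2 := by
        gcongr; exact cs_half hf hg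
    _ = _ := by rw [mul_pow, rpow_half_sq, rpow_half_sq]

lemma cs_tsum (f g : ℤ → ℝ≥0∞) : (∑' a, f a * g a) ^ 2 ≤ (∑' a, f a ^ 2) * (∑' a, g a ^ 2) := by
  have := cs_sq (μ := (Measure.count : Measure ℤ)) (f := f) (g := g)
    measurable_from_top.aemeasurable measurable_from_top.aemeasurable
  simpa only [lintegral_count] using this

/-- Minkowski's inequality in `L²` for a series of nonnegative functions. -/
lemma minkowski_tsum {c : ℤ → α → ℝ≥0∞} (hc : ∀ i, Measurable (c i)) :
    ∫⁻ a, (∑' i, c i a) ^ 2 ∂μ ≤ (∑' i, (∫⁻ a, c i a ^ 2 ∂μ) ^ (1 / 2 : ℝ)) ^ 2 := by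
  calc _ = ∫⁻ a, ∑' i, ∑' k, c i a * c k a ∂μ := by
        congr 1; ext a
        rw [sq, ← ENNReal.tsum_mul_right]
        congr 1; ext i
        rw [ENNReal.tsum_mul_left]
    _ = ∑' i, ∑' k, ∫⁻ a, c i a * c k a ∂μ := by
        rw [lintegral_tsum]
        · congr 1; ext i
          rw [lintegral_tsum]
          exact fun k => ((hc i).mul (hc k)).aemeasurable
        · exact fun i => (Measurable.tsum fun k => (hc i).mul (hc k)).aemeasurable
    _ ≤ ∑' i, ∑' k, (∫⁻ a, c i a ^ 2 ∂μ) ^ (1 / 2 : ℝ) * (∫⁻ a, c k a ^ 2 ∂μ) ^ (1 / 2 : ℝ) := by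
        gcongr with i k
        exact cs_half (hc i).aemeasurable (hc k).aemeasurable
    _ = _ := by
        rw [sq, ← ENNReal.tsum_mul_right]
        congr 1; ext i
        rw [ENNReal.tsum_mul_left]

/-- Converse to Cauchy–Schwarz. -/
lemma l2_of_dual [SigmaFinite μ] {B : α → ℝ≥0∞} (hB : Measurable B) {A : ℝ≥0∞}
    (h : ∀ u : α → ℝ≥0∞, Measurable u → (∫⁻ a, u a * B a ∂μ) ^ 2 ≤ A * ∫⁻ a, u a ^ 2 ∂μ) :
    ∫⁻ a, B a ^ 2 ∂μ ≤ A := by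
  set u : ℕ → α → ℝ≥0∞ := fun n => (spanningSets μ n).indicator (fun a => min (B a) n) with hu
  have hum : ∀ n, Measurable (u n) := fun n =>
    (hB.min measurable_const).indicator (measurableSet_spanningSets μ n)
  have hmono : Monotone u := by
    intro n m hnm a
    simp only [hu]
    by_cases ha : a ∈ spanningSets μ n
    · rw [Set.indicator_of_mem ha, Set.indicator_of_mem (monotone_spanningSets μ hnm ha)]
      gcongr
    · rw [Set.indicator_of_notMem ha]; exact zero_le
  have hle : ∀ n a, u n a ≤ B a := by
    intro n a
    simp only [hu]
    exact (Set.indicator_apply_le fun _ => min_le_left _ _)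
  have hsup : ∀ a, ⨆ n, u n a ^ 2 = B a ^ 2 := by
    intro a
    apply le_antisymm
    · exact iSup_le fun n => by gcongr; exact hle n a
    · have hc : Filter.Tendsto (fun n : ℕ => min (B a) (n : ℝ≥0∞)) Filter.atTop (nhds (B a)) := by
        have := (tendsto_const_nhds (x := B a)).min ENNReal.tendsto_nat_nhds_top
        simpa using this
      have hc2 : Filter.Tendsto (fun n : ℕ => u n a ^ 2) Filter.atTop (nhds (B a ^ 2)) := by
        apply (((ENNReal.continuous_pow 2).tendsto _).comp hc).congr'
        filter_upwards [Filter.eventually_ge_atTop (spanningSetsIndex μ a)] with n hn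
        have : a ∈ spanningSets μ n :=
          monotone_spanningSets μ hn (mem_spanningSetsIndex μ a)
        simp only [hu, Function.comp, Set.indicator_of_mem this]
      exact le_of_tendsto' hc2 fun n => le_iSup (fun n => u n a ^ 2) n
  have hintg : ∫⁻ a, B a ^ 2 ∂μ = ⨆ n, ∫⁻ a, u n a ^ 2 ∂μ := by
    rw [← lintegral_iSup (fun n => (hum n).pow_const 2)]
    · simp only [hsup]
    · intro n m hnm a; dsimp only; gcongr; exact hmono hnm a
  rw [hintg]
  refine iSup_le fun n => ?_
  set I := ∫⁻ a, u n a ^ 2 ∂μ with hI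
  have hfin : I ≠ ∞ := by
    have : I ≤ ∫⁻ a, (spanningSets μ n).indicator (fun _ => (n : ℝ≥0∞) ^ 2) a ∂μ := by
      apply lintegral_mono; intro a
      simp only [hu]
      by_cases ha : a ∈ spanningSets μ n
      · rw [Set.indicator_of_mem ha, Set.indicator_of_mem ha]; gcongr; exact min_le_right _ _
      · rw [Set.indicator_of_notMem ha]; simp
    rw [lintegral_indicator_const (measurableSet_spanningSets μ n)] at this
    exact ne_top_of_le_ne_top (ENNReal.mul_ne_top (by simp) (measure_spanningSets_lt_top μ n).ne)
      this
  have h1 : I ≤ ∫⁻ a, u n a * B a ∂μ := by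
    apply lintegral_mono; intro a; dsimp only; rw [sq]; gcongr; exact hle n a
  have h2 : I * I ≤ A * I := by
    rw [← sq]; exact le_trans (by gcongr) (h _ (hum n))
  rcases eq_or_ne I 0 with h0 | h0
  · rw [h0]; exact zero_le
  · exact (ENNReal.mul_le_mul_iff_left h0 hfin).1 h2
end cs

/-- The squared `L²` norm. -/
def nsq (F : ℤ × ℝ → ℝ≥0∞) : ℝ≥0∞ := ∫⁻ p, F p ^ 2 ∂muX

/-- The change of variables `(p, p₁) ↦ (p₁, p - p₁)` preserves the measure. -/
lemma conv_nsq {F1 F2 : ℤ × ℝ → ℝ≥0∞} (h1 : Measurable F1) (h2 : Measurable F2) :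
    ∫⁻ p, ∫⁻ p1, (F1 p1 * F2 (p - p1)) ^ 2 ∂muX ∂muX = nsq F1 * nsq F2 := by
  rw [lintegral_lintegral_swap]
  · have : ∀ p1, ∫⁻ p, (F1 p1 * F2 (p - p1)) ^ 2 ∂muX = F1 p1 ^ 2 * nsq F2 := by
      intro p1
      simp only [mul_pow]
      rw [lintegral_const_mul]
      · congr 1
        exact lintegral_sub_right_eq_self (fun p => F2 p ^ 2) p1
      · exact (h2.comp (measurable_id.sub_const p1)).pow_const 2
    simp only [this]
    rw [lintegral_mul_const _ (h1.pow_const 2)]; rfl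
  · apply Measurable.aemeasurable
    exact ((h1.comp measurable_snd).mul (h2.comp (measurable_fst.sub measurable_snd))).pow_const 2

/-- A kernel uniformly square-integrable in the inner variable gives an operator bounded on `L²`. -/
lemma op_inner {F1 F2 : ℤ × ℝ → ℝ≥0∞} (h1 : Measurable F1) (h2 : Measurable F2)
    {κ : ℤ × ℝ → ℤ × ℝ → ℝ≥0∞} (hκ : Measurable (Function.uncurry κ)) {A : ℝ≥0∞}
    (hA : ∀ p, ∫⁻ p1, κ p p1 ^ 2 ∂muX ≤ A) :
    nsq (fun p => ∫⁻ p1, κ p p1 * (F1 p1 * F2 (p - p1)) ∂muX) ≤ A * (nsq F1 * nsq F2) := by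
  rw [← conv_nsq h1 h2, nsq]
  have hm : Measurable fun q : (ℤ × ℝ) × (ℤ × ℝ) => (F1 q.2 * F2 (q.1 - q.2)) ^ 2 :=
    ((h1.comp measurable_snd).mul (h2.comp (measurable_fst.sub measurable_snd))).pow_const 2
  rw [← lintegral_const_mul _ (Measurable.lintegral_prod_right hm)]
  apply lintegral_mono; intro p
  refine (cs_sq ?_ ?_).trans (mul_le_mul' (hA p) le_rfl)
  · exact (hκ.of_uncurry_left).aemeasurable
  · exact (h1.mul (h2.comp (measurable_id.const_sub p))).aemeasurable

/-- A kernel uniformly square-integrable in the outer variable gives an operator bounded on `L²`, by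
duality. -/
lemma op_outer {F1 F2 : ℤ × ℝ → ℝ≥0∞} (h1 : Measurable F1) (h2 : Measurable F2)
    {κ : ℤ × ℝ → ℤ × ℝ → ℝ≥0∞} (hκ : Measurable (Function.uncurry κ)) {A : ℝ≥0∞}
    (hA : ∀ p1, ∫⁻ p, κ p p1 ^ 2 ∂muX ≤ A) :
    nsq (fun p => ∫⁻ p1, κ p p1 * (F1 p1 * F2 (p - p1)) ∂muX) ≤ A * (nsq F1 * nsq F2) := by
  have hm : Measurable fun q : (ℤ × ℝ) × (ℤ × ℝ) => κ q.1 q.2 * (F1 q.2 * F2 (q.1 - q.2)) :=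
    hκ.mul ((h1.comp measurable_snd).mul (h2.comp (measurable_fst.sub measurable_snd)))
  apply l2_of_dual (Measurable.lintegral_prod_right hm)
  intro u hu
  have hmu : Measurable fun q : (ℤ × ℝ) × (ℤ × ℝ) => κ q.1 q.2 * (u q.1 * F2 (q.1 - q.2)) :=
    hκ.mul ((hu.comp measurable_fst).mul (h2.comp (measurable_fst.sub measurable_snd)))
  have e : ∫⁻ p, u p * ∫⁻ p1, κ p p1 * (F1 p1 * F2 (p - p1)) ∂muX ∂muX =
      ∫⁻ p1, F1 p1 * ∫⁻ p, κ p p1 * (u p * F2 (p - p1)) ∂muX ∂muX := by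
    have e1 : ∀ p, u p * ∫⁻ p1, κ p p1 * (F1 p1 * F2 (p - p1)) ∂muX =
        ∫⁻ p1, u p * (κ p p1 * (F1 p1 * F2 (p - p1))) ∂muX := fun p =>
      (lintegral_const_mul _ (hm.comp measurable_prodMk_left)).symm
    have e2 : ∀ p1, F1 p1 * ∫⁻ p, κ p p1 * (u p * F2 (p - p1)) ∂muX =
        ∫⁻ p, F1 p1 * (κ p p1 * (u p * F2 (p - p1))) ∂muX := fun p1 =>
      (lintegral_const_mul _ (hmu.comp measurable_prodMk_right)).symm
    simp only [e1, e2]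
    rw [lintegral_lintegral_swap]
    · congr 1; ext p1; congr 1; ext p; ring
    · exact ((hu.comp measurable_fst).mul hm).aemeasurable
  rw [e]
  refine (cs_sq h1.aemeasurable (Measurable.lintegral_prod_left hmu).aemeasurable).trans ?_
  have key : ∫⁻ p1, (∫⁻ p, κ p p1 * (u p * F2 (p - p1)) ∂muX) ^ 2 ∂muX ≤ A * (nsq u * nsq F2) := by
    have hm'' : Measurable fun q : (ℤ × ℝ) × (ℤ × ℝ) => (u q.1 * F2 (q.1 - q.2)) ^ 2 :=
      ((hu.comp measurable_fst).mul (h2.comp (measurable_fst.sub measurable_snd))).pow_const 2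
    have e3 : ∫⁻ p1, ∫⁻ p, (u p * F2 (p - p1)) ^ 2 ∂muX ∂muX = nsq u * nsq F2 := by
      rw [lintegral_lintegral_swap]
      · have : ∀ p, ∫⁻ p1, (u p * F2 (p - p1)) ^ 2 ∂muX = u p ^ 2 * nsq F2 := by
          intro p
          simp only [mul_pow]
          rw [lintegral_const_mul]
          · congr 1
            exact lintegral_sub_left_eq_self (fun p => F2 p ^ 2) p
          · exact (h2.comp (measurable_id.const_sub p)).pow_const 2
        simp only [this]
        rw [lintegral_mul_const _ (hu.pow_const 2)]; rfl
      · exact (hm''.comp measurable_swap).aemeasurable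
    rw [← e3, ← lintegral_const_mul _ (Measurable.lintegral_prod_left hm'')]
    apply lintegral_mono; intro p1
    refine (cs_sq ?_ ?_).trans (mul_le_mul' (hA p1) le_rfl)
    · exact (hκ.of_uncurry_right).aemeasurable
    · exact (hu.mul (h2.comp (measurable_id.sub_const p1))).aemeasurable
  calc _ ≤ nsq F1 * (A * (nsq u * nsq F2)) := mul_le_mul' le_rfl key
    _ = _ := by unfold nsq; ring

/-! ### Lattice sums and one-dimensional integrals -/

lemma scale_lintegral {h : ℝ → ℝ≥0∞} (hh : Measurable h) {a : ℝ} (ha : 0 < a) (x : ℝ) :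
    ∫⁻ t, h (a * t - x) = ENNReal.ofReal a⁻¹ * ∫⁻ t, h t := by
  have h1 : ∫⁻ t, h (a * t - x) = ∫⁻ y, h (y - x) ∂(Measure.map (fun t => a * t) volume) := by
    exact (lintegral_map (f := fun y => h (y - x)) (hh.comp (measurable_id.sub_const x))
      (measurable_const_mul a)).symm
  rw [h1, Real.map_volume_mul_left ha.ne', lintegral_smul_measure,
    lintegral_sub_right_eq_self h x, abs_of_pos (inv_pos.2 ha)]
  rfl

/-- A lattice sum of spacing `2/λ ≤ 2` is dominated by `λ` times the integral. -/
lemma lattice_sum {lam : ℝ} (hl : 1 ≤ lam) (x : ℝ) :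
    ∑' m : ℤ, ENNReal.ofReal ((1 + (2 * (m : ℝ) / lam - x) ^ 2)⁻¹)
      ≤ ENNReal.ofReal (5 * Real.pi * lam) := by
  have l0 : 0 < lam := by linarith
  set h : ℝ → ℝ≥0∞ := fun y => ENNReal.ofReal ((1 + y ^ 2)⁻¹) with hh
  have hm : Measurable h := by
    apply ENNReal.measurable_ofReal.comp; fun_prop
  have key : ∀ m : ℤ, h (2 * (m : ℝ) / lam - x) ≤
      ENNReal.ofReal 10 * ∫⁻ t in Set.Ioc (m : ℝ) (m + 1), h (2 / lam * t - x) := by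
    intro m
    have : ∫⁻ t in Set.Ioc (m : ℝ) (m + 1), ENNReal.ofReal ((1 + (2 * (m : ℝ) / lam - x) ^ 2)⁻¹) ≤
        ∫⁻ t in Set.Ioc (m : ℝ) (m + 1), ENNReal.ofReal 10 * h (2 / lam * t - x) := by
      apply setLIntegral_mono' measurableSet_Ioc
      intro t ht
      simp only [hh]
      rw [← ENNReal.ofReal_mul (by norm_num)]
      apply ENNReal.ofReal_le_ofReal
      rw [← div_eq_mul_inv, inv_eq_one_div, div_le_div_iff₀ (by positivity) (by positivity)]
      have e : 2 / lam * t - x = (2 * (m : ℝ) / lam - x) + 2 * (t - m) / lam := by ring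
      have b1 : 0 ≤ 2 * (t - m) / lam := by
        apply div_nonneg _ l0.le; linarith [ht.1]
      have b2 : 2 * (t - m) / lam ≤ 2 := by
        rw [div_le_iff₀ l0]; nlinarith [ht.2]
      rw [e]
      nlinarith [sq_nonneg (2 * (m : ℝ) / lam - x - 2 * (t - m) / lam)]
    rw [setLIntegral_const, Real.volume_Ioc, lintegral_const_mul] at this
    · simpa using this
    · exact hm.comp (by fun_prop)
  calc _ ≤ ∑' m : ℤ, ENNReal.ofReal 10 * ∫⁻ t in Set.Ioc (m : ℝ) (m + 1), h (2 / lam * t - x) :=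
        ENNReal.tsum_le_tsum key
    _ = ENNReal.ofReal 10 * ∫⁻ t, h (2 / lam * t - x) := by
        rw [ENNReal.tsum_mul_left, ← lintegral_iUnion (fun _ => measurableSet_Ioc)
          (Set.pairwise_disjoint_Ioc_intCast ℝ), iUnion_Ioc_intCast, setLIntegral_univ]
    _ = ENNReal.ofReal 10 * (ENNReal.ofReal (2 / lam)⁻¹ * ENNReal.ofReal Real.pi) := by
        rw [scale_lintegral hm (by positivity), hh]
        rw [← ofReal_integral_eq_lintegral_ofReal integrable_inv_one_add_sq
          (Filter.Eventually.of_forall fun y => by positivity), integral_univ_inv_one_add_sq]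
    _ = _ := by
        rw [← ENNReal.ofReal_mul (by positivity), ← ENNReal.ofReal_mul (by norm_num)]
        congr 1; field_simp; norm_num

/-- The function `u ↦ (u+κ)^n - (u-κ)^n` is even with nonnegative coefficients, and the term
`2 n κ u^{2j}` makes it grow at least like `u^{2j}`. -/
lemma even_part_diff {n : ℕ} {κ u v : ℝ} {j : ℕ} (hj : 2 ≤ j) (hn : n = 2 * j + 1) (hκ : 1 ≤ κ)
    (hv : 0 ≤ v) (h : v ≤ u) :
    (u - v) ^ (2 * j) ≤ ((u + κ) ^ n - (u - κ) ^ n) - ((v + κ) ^ n - (v - κ) ^ n) := by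
  have hodd : Odd n := ⟨j, hn⟩
  have e : ∀ y : ℝ, (y + κ) ^ n - (y - κ) ^ n =
      ∑ i ∈ Finset.range (n + 1), (y ^ i + (-y) ^ i) * (κ ^ (n - i) * (n.choose i : ℝ)) := by
    intro y
    have : (y - κ) ^ n = -((-y + κ) ^ n) := by
      rw [show y - κ = -(-y + κ) by ring, hodd.neg_pow]
    rw [this, sub_neg_eq_add, add_pow, add_pow, ← Finset.sum_add_distrib]
    apply Finset.sum_congr rfl; intro i _; ring
  rw [e u, e v, ← Finset.sum_sub_distrib]
  have hmono : ∀ i, 0 ≤ (u ^ i + (-u) ^ i) - (v ^ i + (-v) ^ i) := by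
    intro i
    rcases Nat.even_or_odd i with hi | hi
    · rw [hi.neg_pow, hi.neg_pow]
      linarith [pow_le_pow_left₀ hv h i]
    · rw [hi.neg_pow, hi.neg_pow]; linarith
  have hterm : ∀ i ∈ Finset.range (n + 1), 0 ≤ (u ^ i + (-u) ^ i) * (κ ^ (n - i) * (n.choose i : ℝ))
      - (v ^ i + (-v) ^ i) * (κ ^ (n - i) * (n.choose i : ℝ)) := by
    intro i _
    rw [← sub_mul]
    exact mul_nonneg (hmono i) (by positivity)
  refine le_trans ?_ (Finset.single_le_sum hterm (Finset.mem_range.2 (by omega : 2 * j < n + 1)))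
  rw [← sub_mul]
  have hev : Even (2 * j) := even_two_mul j
  rw [hev.neg_pow, hev.neg_pow]
  have c1 : (1 : ℝ) ≤ κ ^ (n - 2 * j) * (n.choose (2 * j) : ℝ) := by
    have : (1 : ℝ) ≤ (n.choose (2 * j) : ℝ) := by
      exact_mod_cast Nat.succ_le_of_lt (Nat.choose_pos (by omega))
    nlinarith [one_le_pow₀ hκ (n := n - 2 * j)]
  have c2 : (u - v) ^ (2 * j) + v ^ (2 * j) ≤ u ^ (2 * j) := by
    have := pow_add_pow_le (sub_nonneg.2 h) hv (by omega : 2 * j ≠ 0)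
    simpa using this
  have c3 : 0 ≤ (u - v) ^ (2 * j) := hev.pow_nonneg _
  nlinarith [mul_le_mul_of_nonneg_left c1 (by linarith : 0 ≤ 2 * (u ^ (2 * j) - v ^ (2 * j)))]


/-- Quantitative version of the statement that `u ↦ (u+κ)^n - (u-κ)^n` takes each value at most
twice, at points `±u₀`. -/
lemma phase_gap_pos {j : ℕ} (hj : 2 ≤ j) {κ : ℝ} (hκ : 1 ≤ κ) (X : ℝ) :
    ∃ u0 : ℝ, ∀ u : ℝ, (|u| - u0) ^ (2 * j) ≤
      |(u + κ) ^ (2 * j + 1) - (u - κ) ^ (2 * j + 1) - X| := by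
  set G : ℝ → ℝ := fun u => (u + κ) ^ (2 * j + 1) - (u - κ) ^ (2 * j + 1) with hG
  have hodd : Odd (2 * j + 1) := ⟨j, rfl⟩
  have hdiff : ∀ u v, 0 ≤ v → v ≤ u → (u - v) ^ (2 * j) ≤ G u - G v := fun u v hv h =>
    even_part_diff hj rfl hκ hv h
  have heven : ∀ u, G u = G |u| := by
    intro u
    rcases abs_cases u with ⟨h, _⟩ | ⟨h, _⟩
    · rw [h]
    · rw [h]; simp only [hG]
      rw [show -u + κ = -(u - κ) by ring, show -u - κ = -(u + κ) by ring, hodd.neg_pow,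
        hodd.neg_pow]
      ring
  have hev : Even (2 * j) := even_two_mul j
  rcases le_total X (G 0) with hX | hX
  · refine ⟨0, fun u => ?_⟩
    change _ ≤ |G u - X|
    rw [heven u]
    have := hdiff |u| 0 le_rfl (abs_nonneg u)
    linarith [le_abs_self (G |u| - X)]
  · have hcont : ContinuousOn G (Set.Icc 0 (max 1 (X - G 0))) := by
      simp only [hG]; fun_prop
    have h0 : (0 : ℝ) ≤ max 1 (X - G 0) := le_trans zero_le_one (le_max_left _ _)
    have hU : X ≤ G (max 1 (X - G 0)) := by
      have h1 := hdiff (max 1 (X - G 0)) 0 le_rfl h0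
      have h2 : max 1 (X - G 0) ≤ (max 1 (X - G 0)) ^ (2 * j) :=
        le_self_pow₀ (le_max_left _ _) (by omega)
      rw [sub_zero] at h1
      linarith [le_max_right 1 (X - G 0)]
    obtain ⟨u0, hu0, hu0X⟩ := intermediate_value_Icc h0 hcont ⟨hX, hU⟩
    refine ⟨u0, fun u => ?_⟩
    change _ ≤ |G u - X|
    rw [heven u, ← hu0X]
    rcases le_total u0 |u| with h | h
    · exact (hdiff _ _ hu0.1 h).trans (le_abs_self _)
    · have := hdiff _ _ (abs_nonneg u) h
      rw [← hev.neg_pow, neg_sub, abs_sub_comm]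
      exact this.trans (le_abs_self _)

lemma phase_gap {j : ℕ} (hj : 2 ≤ j) {κ : ℝ} (hκ : 1 ≤ |κ|) (X : ℝ) :
    ∃ u0 : ℝ, ∀ u : ℝ, (|u| - u0) ^ (2 * j) ≤
      |(u + κ) ^ (2 * j + 1) - (u - κ) ^ (2 * j + 1) - X| := by
  rcases abs_cases κ with ⟨h, _⟩ | ⟨h, _⟩
  · rw [h] at hκ; exact phase_gap_pos hj hκ X
  · rw [h] at hκ
    obtain ⟨u0, hu⟩ := phase_gap_pos hj hκ (-X)
    refine ⟨u0, fun u => (hu u).trans_eq ?_⟩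
    rw [← abs_neg]; congr 1; ring

lemma jap_rpow_le {j : ℕ} (hj : 2 ≤ j) {d y : ℝ} (h : d ^ (2 * j) ≤ 2 ^ (2 * j + 1) * |y|) :
    jap y ^ (-(1 / (j : ℝ))) ≤ 16 * (1 + d ^ 2)⁻¹ := by
  have j0 : (0 : ℝ) < j := by positivity
  have h1 := jap_ge_one y
  have h2 := abs_le_jap y
  have hp := jap_pos y
  have h3 : (d ^ 2 / 8) ^ j ≤ jap y := by
    rw [div_pow, div_le_iff₀ (by positivity), ← pow_mul]
    have : (2 : ℝ) ^ (2 * j + 1) ≤ 8 ^ j := by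
      rw [show (8 : ℝ) = 2 ^ 3 by norm_num, ← pow_mul]
      exact pow_le_pow_right₀ (by norm_num) (by omega)
    calc d ^ (2 * j) ≤ 2 ^ (2 * j + 1) * |y| := h
      _ ≤ 8 ^ j * jap y := by gcongr
      _ = _ := mul_comm _ _
  have h4 : d ^ 2 / 8 ≤ jap y ^ (1 / (j : ℝ)) := by
    calc d ^ 2 / 8 = ((d ^ 2 / 8) ^ j) ^ (1 / (j : ℝ)) := by
          rw [one_div, Real.pow_rpow_inv_natCast (by positivity) (by omega)]
      _ ≤ _ := Real.rpow_le_rpow (by positivity) h3 (by positivity)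
  have h5 : 1 ≤ jap y ^ (1 / (j : ℝ)) := Real.one_le_rpow h1 (by positivity)
  rw [Real.rpow_neg hp.le, ← div_eq_mul_inv, inv_eq_one_div, div_le_div_iff₀ (by positivity) (by positivity)]
  linarith

/-- The resonance sum: the phase `k₁ ↦ k₁^n - (k₁-κ)^n` separates the lattice points well enough
for `⟨·⟩^{-1/j}` to be summable, with a sum of the order of the density `λ`. -/
lemma kernel_sum {j : ℕ} (hj : 2 ≤ j) {lam : ℝ} (hl : 1 ≤ lam) {κ : ℝ} (hκ : 1 ≤ |κ|) (x : ℝ) :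
    ∑' m : ℤ, ENNReal.ofReal (jap (((m : ℝ) / lam) ^ (2 * j + 1)
      - ((m : ℝ) / lam - κ) ^ (2 * j + 1) - x) ^ (-(1 / (j : ℝ))))
      ≤ ENNReal.ofReal (160 * Real.pi * lam) := by
  obtain ⟨u0, hu⟩ := phase_gap hj hκ (2 ^ (2 * j + 1) * x)
  have key : ∀ m : ℤ, ENNReal.ofReal (jap (((m : ℝ) / lam) ^ (2 * j + 1)
      - ((m : ℝ) / lam - κ) ^ (2 * j + 1) - x) ^ (-(1 / (j : ℝ)))) ≤
      ENNReal.ofReal 16 * (ENNReal.ofReal ((1 + (2 * (m : ℝ) / lam - (κ + u0)) ^ 2)⁻¹) +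
        ENNReal.ofReal ((1 + (2 * (m : ℝ) / lam - (κ - u0)) ^ 2)⁻¹)) := by
    intro m
    rw [← ENNReal.ofReal_add (by positivity) (by positivity), ← ENNReal.ofReal_mul (by norm_num)]
    apply ENNReal.ofReal_le_ofReal
    set u := 2 * (m : ℝ) / lam - κ with hud
    have e1 : (m : ℝ) / lam = (u + κ) / 2 := by rw [hud]; ring
    have e2 : (m : ℝ) / lam - κ = (u - κ) / 2 := by rw [hud]; ring
    have e3 : 2 * (m : ℝ) / lam - (κ + u0) = u - u0 := by rw [hud]; ring
    have e4 : 2 * (m : ℝ) / lam - (κ - u0) = u + u0 := by rw [hud]; ring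
    rw [e2, e1, e3, e4]
    have h1 : (|u| - u0) ^ (2 * j) ≤ 2 ^ (2 * j + 1) * |((u + κ) / 2) ^ (2 * j + 1)
        - ((u - κ) / 2) ^ (2 * j + 1) - x| := by
      refine (hu u).trans_eq ?_
      rw [← abs_of_pos (by positivity : (0 : ℝ) < 2 ^ (2 * j + 1)), ← abs_mul,
        abs_of_pos (by positivity : (0 : ℝ) < 2 ^ (2 * j + 1))]
      congr 1
      rw [div_pow, div_pow]; field_simp
    refine (jap_rpow_le hj h1).trans ?_
    gcongr
    rcases abs_cases u with ⟨h, _⟩ | ⟨h, _⟩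
    · rw [h]; linarith [(by positivity : 0 ≤ (1 + (u + u0) ^ 2)⁻¹)]
    · rw [h, show (-u - u0) ^ 2 = (u + u0) ^ 2 by ring]
      linarith [(by positivity : 0 ≤ (1 + (u - u0) ^ 2)⁻¹)]
  refine (ENNReal.tsum_le_tsum key).trans ?_
  rw [ENNReal.tsum_mul_left, ENNReal.tsum_add]
  refine (mul_le_mul' le_rfl (add_le_add (lattice_sum hl _) (lattice_sum hl _))).trans ?_
  have l0 : 0 < lam := by linarith
  rw [← ENNReal.ofReal_add (by positivity) (by positivity), ← ENNReal.ofReal_mul (by norm_num)]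
  apply ENNReal.ofReal_le_ofReal
  linarith

/-- Total mass of `⟨·⟩^{-a}`. -/
def japI (a : ℝ) : ℝ := ∫ x : ℝ, jap x ^ (-a)

lemma jap_rpow_eq (x a : ℝ) : jap x ^ (-a) = (1 + ‖x‖ ^ 2) ^ (-a / 2) := by
  unfold jap
  rw [Real.sqrt_eq_rpow, ← Real.rpow_mul (by positivity), Real.norm_eq_abs, sq_abs]
  congr 1; ring

lemma measurable_jap : Measurable jap := by unfold jap; fun_prop

lemma japI_nonneg (a : ℝ) : 0 ≤ japI a :=
  integral_nonneg fun x => Real.rpow_nonneg (jap_pos x).le _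

lemma lintegral_jap {a : ℝ} (ha : 1 < a) (c : ℝ) :
    ∫⁻ x : ℝ, ENNReal.ofReal (jap (x - c) ^ (-a)) = ENNReal.ofReal (japI a) := by
  rw [lintegral_sub_right_eq_self (fun x => ENNReal.ofReal (jap x ^ (-a))) c, japI]
  rw [ofReal_integral_eq_lintegral_ofReal]
  · simp only [jap_rpow_eq]
    exact integrable_rpow_neg_one_add_norm_sq (by simpa using ha)
  · exact Filter.Eventually.of_forall fun x => Real.rpow_nonneg (jap_pos x).le _

lemma jap_add_le (a b : ℝ) : jap (a + b) ≤ jap a + jap b := by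
  unfold jap
  apply Real.sqrt_le_iff.2
  refine ⟨by positivity, ?_⟩
  have h1 := Real.sq_sqrt (by positivity : 0 ≤ 1 + a ^ 2)
  have h2 := Real.sq_sqrt (by positivity : 0 ≤ 1 + b ^ 2)
  have h3 : |a| ≤ √(1 + a ^ 2) := by apply Real.abs_le_sqrt; linarith
  have h4 : |b| ≤ √(1 + b ^ 2) := by apply Real.abs_le_sqrt; linarith
  have h5 : |a| * |b| ≤ √(1 + a ^ 2) * √(1 + b ^ 2) := by gcongr
  have h6 : a * b ≤ |a| * |b| := by rw [← abs_mul]; exact le_abs_self _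
  nlinarith

lemma jap_neg (a : ℝ) : jap (-a) = jap a := by unfold jap; rw [neg_sq]

/-- One of `|a|`, `|b|` is at least `|a - b|/2`; the corresponding factor gives the decay in
`a - b`. -/
lemma jap_prod_le {p : ℝ} (hp0 : 0 ≤ p) (hp : p ≤ 1 / 2) (a b : ℝ) :
    jap a ^ (-p) * jap b ^ (-(2 - p)) ≤
      2 * jap (a - b) ^ (-p) * (jap a ^ (-(3 / 2 : ℝ)) + jap b ^ (-(3 / 2 : ℝ))) := by
  have ha := jap_pos a
  have hb := jap_pos b
  have hc := jap_pos (a - b)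
  have ha1 := jap_ge_one a
  have hb1 := jap_ge_one b
  have hsum : jap (a - b) ≤ jap a + jap b := by
    have := jap_add_le a (-b); rwa [jap_neg, ← sub_eq_add_neg] at this
  have two : ∀ z, 0 < z → jap (a - b) ≤ 2 * z → z ^ (-p) ≤ 2 * jap (a - b) ^ (-p) := by
    intro z hz h
    calc z ^ (-p) ≤ (jap (a - b) / 2) ^ (-p) :=
          Real.rpow_le_rpow_of_nonpos (by positivity) (by linarith) (by linarith)
      _ = 2 ^ p * jap (a - b) ^ (-p) := by
          rw [Real.div_rpow hc.le (by norm_num), Real.rpow_neg (by norm_num : (0:ℝ) ≤ 2),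
            div_inv_eq_mul, mul_comm]
      _ ≤ 2 ^ (1 : ℝ) * jap (a - b) ^ (-p) := by
          gcongr
          · norm_num
          · linarith
      _ = _ := by rw [Real.rpow_one]
  have nn : ∀ z e : ℝ, 0 ≤ jap z ^ e := fun z e => Real.rpow_nonneg (jap_pos z).le _
  rcases le_total (jap b) (jap a) with h | h
  · have h1 := two (jap a) ha (by linarith)
    have h2 : jap b ^ (-(2 - p)) ≤ jap b ^ (-(3 / 2 : ℝ)) :=
      Real.rpow_le_rpow_of_exponent_le hb1 (by linarith)
    calc _ ≤ (2 * jap (a - b) ^ (-p)) * jap b ^ (-(3 / 2 : ℝ)) :=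
          mul_le_mul h1 h2 (nn _ _) (by linarith [nn (a - b) (-p)])
      _ ≤ _ := by
          apply mul_le_mul_of_nonneg_left _ (by linarith [nn (a - b) (-p)])
          linarith [nn a (-(3 / 2 : ℝ))]
  · have h1 := two (jap b) hb (by linarith)
    have h2 : jap a ^ (-p) * jap b ^ (-(2 - 2 * p)) ≤ jap a ^ (-(3 / 2 : ℝ)) := by
      calc _ ≤ jap a ^ (-p) * jap a ^ (-(2 - 2 * p)) := by
            apply mul_le_mul_of_nonneg_left _ (nn _ _)
            exact Real.rpow_le_rpow_of_nonpos ha h (by linarith)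
        _ = jap a ^ (-p + -(2 - 2 * p)) := (Real.rpow_add ha _ _).symm
        _ ≤ _ := Real.rpow_le_rpow_of_exponent_le ha1 (by linarith)
    have e : jap b ^ (-(2 - p)) = jap b ^ (-(2 - 2 * p)) * jap b ^ (-p) := by
      rw [← Real.rpow_add hb]; congr 1; ring
    calc _ = (jap a ^ (-p) * jap b ^ (-(2 - 2 * p))) * jap b ^ (-p) := by rw [e]; ring
      _ ≤ jap a ^ (-(3 / 2 : ℝ)) * (2 * jap (a - b) ^ (-p)) :=
          mul_le_mul h2 h1 (nn _ _) (nn _ _)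
      _ = (2 * jap (a - b) ^ (-p)) * jap a ^ (-(3 / 2 : ℝ)) := mul_comm _ _
      _ ≤ _ := by
          apply mul_le_mul_of_nonneg_left _ (by linarith [nn (a - b) (-p)])
          linarith [nn b (-(3 / 2 : ℝ))]

lemma lintegral_jap_prod {p : ℝ} (hp0 : 0 ≤ p) (hp : p ≤ 1 / 2) (α β : ℝ) :
    ∫⁻ x : ℝ, ENNReal.ofReal (jap (x - α) ^ (-p) * jap (x - β) ^ (-(2 - p))) ≤
      ENNReal.ofReal (4 * japI (3 / 2)) * ENNReal.ofReal (jap (α - β) ^ (-p)) := by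
  have nn : ∀ z e : ℝ, 0 ≤ jap z ^ e := fun z e => Real.rpow_nonneg (jap_pos z).le _
  calc _ ≤ ∫⁻ x : ℝ, ENNReal.ofReal (2 * jap (α - β) ^ (-p)) *
        (ENNReal.ofReal (jap (x - α) ^ (-(3 / 2 : ℝ))) +
          ENNReal.ofReal (jap (x - β) ^ (-(3 / 2 : ℝ)))) := by
        apply lintegral_mono; intro x
        dsimp only
        rw [← ENNReal.ofReal_add (nn _ _) (nn _ _),
          ← ENNReal.ofReal_mul (mul_nonneg (by norm_num) (nn _ _))]
        apply ENNReal.ofReal_le_ofReal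
        have := jap_prod_le hp0 hp (x - α) (x - β)
        rwa [show x - α - (x - β) = -(α - β) by ring, jap_neg] at this
    _ = ENNReal.ofReal (2 * jap (α - β) ^ (-p)) *
        (ENNReal.ofReal (japI (3 / 2)) + ENNReal.ofReal (japI (3 / 2))) := by
        have m1 : ∀ c : ℝ, Measurable fun x => ENNReal.ofReal (jap (x - c) ^ (-(3 / 2 : ℝ))) :=
          fun c => ((measurable_jap.comp (measurable_id.sub_const c)).pow_const _).ennreal_ofReal
        rw [lintegral_const_mul _ (by exact (m1 α).add (m1 β)), lintegral_add_left (m1 α),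
          lintegral_jap (by norm_num), lintegral_jap (by norm_num)]
    _ = _ := by
        rw [← ENNReal.ofReal_add (japI_nonneg _) (japI_nonneg _),
          ← ENNReal.ofReal_mul (mul_nonneg (by norm_num) (nn _ _)),
          ← ENNReal.ofReal_mul (by linarith [japI_nonneg (3 / 2)])]
        congr 1; ring

/-- `φ(k) = |k|^{-1/4} ⟨k⟩^{-1/2}`, with `φ(0) = 0`: a multiplier whose square has sum of the order
of the lattice density. -/
def phiF (k : ℝ) : ℝ := |k| ^ (-(1 / 4) : ℝ) * jap k ^ (-(1 / 2) : ℝ)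

lemma phiF_nonneg (k : ℝ) : 0 ≤ phiF k :=
  mul_nonneg (Real.rpow_nonneg (abs_nonneg _) _) (Real.rpow_nonneg (jap_pos k).le _)

lemma phiF_neg (k : ℝ) : phiF (-k) = phiF k := by unfold phiF; rw [abs_neg, jap_neg]

lemma phiF_sq_le {lam : ℝ} (hl : 0 < lam) {m : ℝ} (hm : 0 ≤ m) :
    phiF ((m + 1) / lam) ^ 2 ≤
      4 * lam * (Real.arctan √((m + 1) / lam) - Real.arctan √(m / lam)) := by
  set y := (m + 1) / lam with hy
  have hy0 : 0 < y := by positivity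
  set u := √y with hu
  set v := √(m / lam) with hv
  have hu0 : 0 < u := Real.sqrt_pos.2 hy0
  have hv0 : 0 ≤ v := Real.sqrt_nonneg _
  have hu2 : u ^ 2 = y := Real.sq_sqrt hy0.le
  have hv2 : v ^ 2 = m / lam := Real.sq_sqrt (by positivity)
  have hvu : v < u := Real.sqrt_lt_sqrt (by positivity) (by rw [hy]; gcongr; linarith)
  have h1 : phiF y ^ 2 = u⁻¹ * (jap y)⁻¹ := by
    unfold phiF
    rw [mul_pow, abs_of_pos hy0, ← Real.rpow_natCast, ← Real.rpow_mul hy0.le,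
      ← Real.rpow_natCast, ← Real.rpow_mul (jap_pos y).le, hu, Real.sqrt_eq_rpow,
      ← Real.rpow_neg hy0.le, ← Real.rpow_neg_one]
    norm_num
  have h2 : (1 + y) / 2 ≤ jap y := by
    have := jap_ge_one y; have := abs_le_jap y; rw [abs_of_pos hy0] at this; linarith
  have h3 : (u - v) / (1 + u ^ 2) ≤ Real.arctan u - Real.arctan v := by
    have := Convex.mul_sub_le_image_sub_of_le_deriv (convex_Icc v u)
      (f := Real.arctan) (C := (1 + u ^ 2)⁻¹) Real.continuous_arctan.continuousOn
      Real.differentiable_arctan.differentiableOn ?_ v (Set.left_mem_Icc.2 hvu.le) u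
      (Set.right_mem_Icc.2 hvu.le) hvu.le
    · rw [div_eq_inv_mul]; exact this
    · intro x hx
      rw [interior_Icc] at hx
      rw [Real.deriv_arctan]
      change _ ≤ 1 / (1 + x ^ 2)
      rw [one_div]
      have : 0 ≤ x := hv0.trans hx.1.le
      gcongr
      exact hx.2.le
  have h4 : (u - v) * (u + v) = 1 / lam := by
    have : (u - v) * (u + v) = u ^ 2 - v ^ 2 := by ring
    rw [this, hu2, hv2, hy]; ring
  have h5 : 1 / lam ≤ (u - v) * (2 * u) := by
    rw [← h4]; apply mul_le_mul_of_nonneg_left _ (by linarith); linarith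
  have h5' : 1 ≤ lam * ((u - v) * (2 * u)) := by
    rw [div_le_iff₀ hl] at h5; linarith
  rw [h1]
  calc u⁻¹ * (jap y)⁻¹ ≤ u⁻¹ * ((1 + y) / 2)⁻¹ := by gcongr
    _ ≤ 4 * lam * ((u - v) / (1 + u ^ 2)) := by
        rw [hu2, inv_div, ← mul_div_assoc, ← mul_div_assoc, ← div_eq_inv_mul]
        gcongr
        rw [div_le_iff₀ hu0]; nlinarith
    _ ≤ _ := by gcongr

lemma phiF_tsum {lam : ℝ} (hl : 0 < lam) :
    ∑' m : ℤ, ENNReal.ofReal (phiF ((m : ℝ) / lam) ^ 2) ≤ ENNReal.ofReal (4 * Real.pi * lam) := by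
  have h : ∑' n : ℕ, ENNReal.ofReal (phiF (((n : ℝ) + 1) / lam) ^ 2) ≤
      ENNReal.ofReal (2 * Real.pi * lam) := by
    apply ENNReal.tsum_le_of_sum_range_le
    intro N
    rw [← ENNReal.ofReal_sum_of_nonneg (fun _ _ => sq_nonneg _)]
    apply ENNReal.ofReal_le_ofReal
    calc _ ≤ ∑ n ∈ Finset.range N, (4 * lam * Real.arctan √(((n + 1 : ℕ) : ℝ) / lam)
          - 4 * lam * Real.arctan √((n : ℝ) / lam)) := by
          apply Finset.sum_le_sum; intro n _
          have := phiF_sq_le hl (Nat.cast_nonneg n)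
          push_cast; linarith
      _ ≤ _ := by
          rw [Finset.sum_range_sub (fun n : ℕ => 4 * lam * Real.arctan √((n : ℝ) / lam))]
          have := Real.arctan_lt_pi_div_two √((N : ℝ) / lam)
          simp only [Nat.cast_zero, zero_div, Real.sqrt_zero, Real.arctan_zero]
          nlinarith
  rw [tsum_of_nat_of_neg_add_one ENNReal.summable ENNReal.summable]
  have e1 : ∑' n : ℕ, ENNReal.ofReal (phiF ((((n : ℕ) : ℤ) : ℝ) / lam) ^ 2) =
      ∑' n : ℕ, ENNReal.ofReal (phiF (((n : ℝ) + 1) / lam) ^ 2) := by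
    rw [tsum_eq_zero_add' ENNReal.summable]
    simp [phiF]
  have e2 : ∑' n : ℕ, ENNReal.ofReal (phiF (((-((n : ℤ) + 1) : ℤ) : ℝ) / lam) ^ 2) =
      ∑' n : ℕ, ENNReal.ofReal (phiF (((n : ℝ) + 1) / lam) ^ 2) := by
    congr 1; ext n
    rw [← phiF_neg]; congr 3; push_cast; ring
  rw [e1, e2]
  refine (add_le_add h h).trans ?_
  rw [← ENNReal.ofReal_add (by positivity) (by positivity)]
  apply ENNReal.ofReal_le_ofReal; linarith

/-! ### Discrete convolutions of fibre norms -/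

/-- The convolution of `F` and `G` with kernel `κ` inserted. -/
def bil (κ : ℤ × ℝ → ℤ × ℝ → ℝ≥0∞) (F G : ℤ × ℝ → ℝ≥0∞) (p : ℤ × ℝ) : ℝ≥0∞ :=
  ∫⁻ p1, κ p p1 * (F p1 * G (p - p1)) ∂muX

lemma lintegral_muX {f : ℤ × ℝ → ℝ≥0∞} (hf : Measurable f) :
    ∫⁻ p, f p ∂muX = ∑' m : ℤ, ∫⁻ τ : ℝ, f (m, τ) := by
  rw [lintegral_prod _ hf.aemeasurable, lintegral_count]

lemma measurable_slice {f : ℤ × ℝ → ℝ≥0∞} (hf : Measurable f) (m : ℤ) :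
    Measurable fun τ : ℝ => f (m, τ) := hf.comp measurable_prodMk_left

/-- The `L²` norm of the fibre at frequency `m`. -/
def fib (F : ℤ × ℝ → ℝ≥0∞) (m : ℤ) : ℝ≥0∞ := (∫⁻ τ : ℝ, F (m, τ) ^ 2) ^ (1 / 2 : ℝ)

/-- The `L¹` norm of the fibre at frequency `m`. -/
def fib1 (F : ℤ × ℝ → ℝ≥0∞) (m : ℤ) : ℝ≥0∞ := ∫⁻ τ : ℝ, F (m, τ)

/-- Squared `ℓ² L¹` norm. -/
def ysq (F : ℤ × ℝ → ℝ≥0∞) : ℝ≥0∞ := ∑' m, fib1 F m ^ 2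

lemma nsq_eq {F : ℤ × ℝ → ℝ≥0∞} (hF : Measurable F) : nsq F = ∑' m, fib F m ^ 2 := by
  unfold nsq fib
  simp only [rpow_half_sq]
  exact lintegral_muX (hF.pow_const 2)

/-- Young's inequality `L² * L¹ → L²`. -/
lemma young {f y : ℝ → ℝ≥0∞} (hf : Measurable f) (hy : Measurable y) :
    ∫⁻ t, (∫⁻ t1, f t1 * y (t - t1)) ^ 2 ≤ (∫⁻ t, f t ^ 2) * (∫⁻ t, y t) ^ 2 := by
  have hm : Measurable fun q : ℝ × ℝ => f q.2 ^ 2 * y (q.1 - q.2) :=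
    ((hf.comp measurable_snd).pow_const 2).mul (hy.comp (measurable_fst.sub measurable_snd))
  have h1 : ∀ t, (∫⁻ t1, f t1 * y (t - t1)) ^ 2 ≤
      (∫⁻ t1, f t1 ^ 2 * y (t - t1)) * ∫⁻ t, y t := by
    intro t
    have hyt : Measurable fun t1 => y (t - t1) := hy.comp (measurable_id.const_sub t)
    have := cs_sq (μ := volume) (f := fun t1 => f t1 * y (t - t1) ^ (1 / 2 : ℝ))
      (g := fun t1 => y (t - t1) ^ (1 / 2 : ℝ)) (hf.mul (hyt.pow_const _)).aemeasurable
      (hyt.pow_const _).aemeasurable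
    simp only [mul_assoc, ← sq, rpow_half_sq, mul_pow] at this
    rwa [lintegral_sub_left_eq_self (fun t1 => y t1) t] at this
  calc _ ≤ ∫⁻ t, (∫⁻ t1, f t1 ^ 2 * y (t - t1)) * ∫⁻ t, y t := lintegral_mono h1
    _ = (∫⁻ t, ∫⁻ t1, f t1 ^ 2 * y (t - t1)) * ∫⁻ t, y t :=
        lintegral_mul_const _ (Measurable.lintegral_prod_right hm)
    _ = ((∫⁻ t, f t ^ 2) * ∫⁻ t, y t) * ∫⁻ t, y t := by
        rw [lintegral_lintegral_swap hm.aemeasurable]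
        congr 1
        rw [← lintegral_mul_const _ (hf.pow_const 2)]
        congr 1; ext t1
        rw [lintegral_const_mul _ (by exact hy.comp (measurable_id.sub_const t1)),
          lintegral_sub_right_eq_self (fun t => y t) t1]
    _ = _ := by rw [sq, mul_assoc]

lemma disc_swap (x1 x2 : ℤ → ℝ≥0∞) :
    ∑' m, ∑' m1, (x1 m1 * x2 (m - m1)) ^ 2 = (∑' m, x1 m ^ 2) * ∑' m, x2 m ^ 2 := by
  rw [ENNReal.tsum_comm, ← ENNReal.tsum_mul_right]
  congr 1; ext m1
  simp only [mul_pow]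
  rw [ENNReal.tsum_mul_left]
  congr 1
  exact (Equiv.subRight m1).tsum_eq (fun m => x2 m ^ 2)

lemma disc_inner {ψ : ℤ → ℤ → ℝ≥0∞} {A : ℝ≥0∞} (hψ : ∀ m, ∑' m1, ψ m m1 ^ 2 ≤ A)
    (x1 x2 : ℤ → ℝ≥0∞) :
    ∑' m, (∑' m1, ψ m m1 * (x1 m1 * x2 (m - m1))) ^ 2 ≤
      A * ((∑' m, x1 m ^ 2) * ∑' m, x2 m ^ 2) := by
  rw [← disc_swap, ← ENNReal.tsum_mul_left]
  exact ENNReal.tsum_le_tsum fun m => (cs_tsum _ _).trans (mul_le_mul' (hψ m) le_rfl)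

lemma disc_outer {φ : ℤ → ℝ≥0∞} {A : ℝ≥0∞} (hφ : ∑' m, φ m ^ 2 ≤ A) (x1 x2 : ℤ → ℝ≥0∞) :
    ∑' m, (∑' m1, φ m * (x1 m1 * x2 (m - m1))) ^ 2 ≤
      A * ((∑' m, x1 m ^ 2) * ∑' m, x2 m ^ 2) := by
  refine le_trans ?_ (mul_le_mul' hφ le_rfl)
  rw [← ENNReal.tsum_mul_right]
  apply ENNReal.tsum_le_tsum; intro m
  rw [ENNReal.tsum_mul_left, mul_pow]
  refine mul_le_mul' le_rfl ((cs_tsum _ _).trans_eq ?_)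
  congr 1
  exact (Equiv.subLeft m).tsum_eq (fun m => x2 m ^ 2)

lemma measurable_bil_integrand {κ : ℤ × ℝ → ℤ × ℝ → ℝ≥0∞} (hκ : Measurable (Function.uncurry κ))
    {F G : ℤ × ℝ → ℝ≥0∞} (hF : Measurable F) (hG : Measurable G) :
    Measurable fun q : (ℤ × ℝ) × (ℤ × ℝ) => κ q.1 q.2 * (F q.2 * G (q.1 - q.2)) :=
  hκ.mul ((hF.comp measurable_snd).mul (hG.comp (measurable_fst.sub measurable_snd)))

lemma measurable_bil {κ : ℤ × ℝ → ℤ × ℝ → ℝ≥0∞} (hκ : Measurable (Function.uncurry κ))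
    {F G : ℤ × ℝ → ℝ≥0∞} (hF : Measurable F) (hG : Measurable G) : Measurable (bil κ F G) :=
  Measurable.lintegral_prod_right (measurable_bil_integrand hκ hF hG)

/-- Reduction of a bilinear operator to a discrete convolution of fibre norms. -/
lemma bil_disc {κ : ℤ × ℝ → ℤ × ℝ → ℝ≥0∞} (hκ : Measurable (Function.uncurry κ))
    {F G : ℤ × ℝ → ℝ≥0∞} (hF : Measurable F) (hG : Measurable G) {b : ℤ → ℤ → ℝ≥0∞}
    (hb : ∀ m m1, ∫⁻ τ, (∫⁻ τ1, κ (m, τ) (m1, τ1) * (F (m1, τ1) * G (m - m1, τ - τ1))) ^ 2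
      ≤ b m m1 ^ 2) :
    nsq (bil κ F G) ≤ ∑' m, (∑' m1, b m m1) ^ 2 := by
  have hI := measurable_bil_integrand hκ hF hG
  have e : ∀ p, bil κ F G p = ∑' m1 : ℤ, ∫⁻ τ1, κ p (m1, τ1) * (F (m1, τ1) * G (p - (m1, τ1))) :=
    fun p => lintegral_muX (hI.comp measurable_prodMk_left)
  unfold nsq
  rw [lintegral_muX ((measurable_bil hκ hF hG).pow_const 2)]
  apply ENNReal.tsum_le_tsum; intro m
  simp only [e]
  have hm : ∀ m1 : ℤ, Measurable fun τ : ℝ =>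
      ∫⁻ τ1, κ (m, τ) (m1, τ1) * (F (m1, τ1) * G ((m, τ) - (m1, τ1))) := by
    intro m1
    apply Measurable.lintegral_prod_right (f := fun τ τ1 =>
      κ (m, τ) (m1, τ1) * (F (m1, τ1) * G ((m, τ) - (m1, τ1))))
    exact hI.comp ((measurable_prodMk_left.comp measurable_fst).prodMk
      (measurable_prodMk_left.comp measurable_snd))
  refine (minkowski_tsum hm).trans ?_
  gcongr with m1
  calc _ ≤ (b m m1 ^ 2) ^ (1 / 2 : ℝ) := ENNReal.rpow_le_rpow (hb m m1) (by norm_num)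
    _ = _ := sq_rpow_half _

/-- A kernel depending on frequencies only, with `Y` measured in `L¹` in `τ`. -/
lemma bil_young {ψ : ℤ → ℤ → ℝ≥0∞} {F Y : ℤ × ℝ → ℝ≥0∞} (hF : Measurable F) (hY : Measurable Y) :
    nsq (bil (fun p p1 => ψ p.1 p1.1) F Y) ≤
      ∑' m, (∑' m1, ψ m m1 * (fib F m1 * fib1 Y (m - m1))) ^ 2 := by
  apply bil_disc _ hF hY
  · intro m m1
    have hc : ∀ τ, ∫⁻ τ1, ψ m m1 * (F (m1, τ1) * Y (m - m1, τ - τ1)) =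
        ψ m m1 * ∫⁻ τ1, F (m1, τ1) * Y (m - m1, τ - τ1) := fun τ =>
      lintegral_const_mul _ ((measurable_slice hF m1).mul
        ((measurable_slice hY (m - m1)).comp (measurable_id.const_sub τ)))
    simp only [hc, mul_pow]
    rw [lintegral_const_mul]
    · refine mul_le_mul' le_rfl ?_
      refine (young (measurable_slice hF m1) (measurable_slice hY (m - m1))).trans_eq ?_
      unfold fib fib1; rw [rpow_half_sq]
    · apply Measurable.pow_const
      apply Measurable.lintegral_prod_right (f := fun τ τ1 : ℝ => F (m1, τ1) * Y (m - m1, τ - τ1))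
      exact ((measurable_slice hF m1).comp measurable_snd).mul
        ((measurable_slice hY (m - m1)).comp (measurable_fst.sub measurable_snd))
  · have : Measurable fun q : ℤ × ℤ => ψ q.1 q.2 := measurable_from_prod_countable_left
      fun _ => measurable_from_top
    exact this.comp ((measurable_fst.comp measurable_fst).prodMk
      (measurable_fst.comp measurable_snd))

/-- A kernel with a factor square-integrable in the output `τ`: the `τ`-convolution is bounded in
`L^∞`. -/
lemma bil_sup {ψ : ℤ → ℤ → ℝ≥0∞} {ω : ℤ × ℝ → ℝ≥0∞} (hω : Measurable ω) {J : ℝ≥0∞}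
    (hJ : ∀ m : ℤ, ∫⁻ τ : ℝ, ω (m, τ) ^ 2 ≤ J ^ 2)
    {F G : ℤ × ℝ → ℝ≥0∞} (hF : Measurable F) (hG : Measurable G) :
    nsq (bil (fun p p1 => ω p * ψ p.1 p1.1) F G) ≤
      J ^ 2 * ∑' m, (∑' m1, ψ m m1 * (fib F m1 * fib G (m - m1))) ^ 2 := by
  have hψ : Measurable fun q : ℤ × ℤ => ψ q.1 q.2 := measurable_from_prod_countable_left
      fun _ => measurable_from_top
  have hκ : Measurable (Function.uncurry fun p p1 : ℤ × ℝ => ω p * ψ p.1 p1.1) :=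
    (hω.comp measurable_fst).mul (hψ.comp ((measurable_fst.comp measurable_fst).prodMk
      (measurable_fst.comp measurable_snd)))
  have := bil_disc hκ hF hG (b := fun m m1 => J * (ψ m m1 * (fib F m1 * fib G (m - m1)))) ?_
  · refine this.trans_eq ?_
    simp only [ENNReal.tsum_mul_left, mul_pow]
  · intro m m1
    have hc : ∀ τ, ∫⁻ τ1, ω (m, τ) * ψ m m1 * (F (m1, τ1) * G (m - m1, τ - τ1)) ≤
        ω (m, τ) * (ψ m m1 * (fib F m1 * fib G (m - m1))) := by
      intro τ
      have mG := (measurable_slice hG (m - m1)).comp (measurable_id.const_sub τ)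
      rw [lintegral_const_mul _ (by exact (measurable_slice hF m1).mul mG), mul_assoc]
      refine mul_le_mul' le_rfl (mul_le_mul' le_rfl ?_)
      refine (cs_half (measurable_slice hF m1).aemeasurable mG.aemeasurable).trans_eq ?_
      unfold fib
      congr 2
      exact lintegral_sub_left_eq_self (fun τ1 => G (m - m1, τ1) ^ 2) τ
    calc _ ≤ ∫⁻ τ, (ω (m, τ) * (ψ m m1 * (fib F m1 * fib G (m - m1)))) ^ 2 := by
          apply lintegral_mono; intro τ
          exact pow_le_pow_left₀ zero_le (hc τ) 2
      _ ≤ _ := by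
          simp only [mul_pow (ω _), mul_pow J]
          rw [lintegral_mul_const _ ((measurable_slice hω m).pow_const 2)]
          exact mul_le_mul' (hJ m) le_rfl

/-! ### Boundedness of the six bilinear operators -/

lemma measurable_sig (j : ℕ) (lam : ℝ) : Measurable fun p : ℤ × ℝ => sigL j lam p.1 p.2 := by
  unfold sigL
  exact measurable_snd.sub
    (((measurable_from_top (f := fun m : ℤ => ((m : ℝ) / lam) ^ (2 * j + 1))).comp measurable_fst))

/-- The multiplier `φ` on the lattice. -/
def ph (lam : ℝ) (m : ℤ) : ℝ≥0∞ := ENNReal.ofReal (phiF ((m : ℝ) / lam))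

/-- Exponent slightly above `1/2`, making `⟨σ⟩^{-aj}` square integrable in `τ`. -/
def aj (j : ℕ) : ℝ := 1 / 2 + 1 / (4 * (2 * (j : ℝ) + 1))

/-- The multiplier `⟨σ⟩^{-a}` with `a = aj j`. -/
def ker4 (j : ℕ) (lam : ℝ) (p : ℤ × ℝ) : ℝ≥0∞ :=
  ENNReal.ofReal (jap (sigL j lam p.1 p.2) ^ (-aj j))

/-- The kernel `⟨σ₁⟩^{-p} ⟨σ₂⟩^{-(1-p)}`, `p = 1/(2j)`, for output frequencies at least one. -/
def ker5 (j : ℕ) (lam : ℝ) (p p1 : ℤ × ℝ) : ℝ≥0∞ :=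
  if 1 ≤ |(p.1 : ℝ) / lam| then
    ENNReal.ofReal (jap (sigL j lam p1.1 p1.2) ^ (-(1 / (2 * (j : ℝ)))) *
      jap (sigL j lam (p - p1).1 (p - p1).2) ^ (-(1 - 1 / (2 * (j : ℝ))))) else 0

/-- The kernel `⟨σ⟩^{-p} ⟨σ₂⟩^{-(1-p)}`, `p = 1/(2j)`, for first frequencies at least one. -/
def ker6 (j : ℕ) (lam : ℝ) (p p1 : ℤ × ℝ) : ℝ≥0∞ :=
  if 1 ≤ |(p1.1 : ℝ) / lam| then
    ENNReal.ofReal (jap (sigL j lam p.1 p.2) ^ (-(1 / (2 * (j : ℝ)))) *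
      jap (sigL j lam (p - p1).1 (p - p1).2) ^ (-(1 - 1 / (2 * (j : ℝ))))) else 0

/-- The sum of the six bilinear operators arising from the pointwise bound, in one of the two
orderings of the factors; `Y` is the second factor with its `Y^s` weight. -/
def halfOp (j : ℕ) (lam : ℝ) (F G Y : ℤ × ℝ → ℝ≥0∞) (p : ℤ × ℝ) : ℝ≥0∞ :=
  bil (fun _ p1 => ph lam p1.1) F Y p + bil (fun p p1 => ph lam (p.1 - p1.1)) F Y p
  + bil (fun p _ => ph lam p.1) F Y p
  + bil (fun p p1 => ker4 j lam p * ph lam (p.1 - p1.1)) F G p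
  + bil (ker5 j lam) F G p + bil (ker6 j lam) F G p

lemma measurable_ker4 (j : ℕ) (lam : ℝ) : Measurable (ker4 j lam) :=
  ((measurable_jap.comp (measurable_sig j lam)).pow_const _).ennreal_ofReal

lemma measurable_kfst (lam : ℝ) : Measurable fun p : ℤ × ℝ => |(p.1 : ℝ) / lam| :=
  (measurable_from_top (f := fun m : ℤ => |(m : ℝ) / lam|)).comp measurable_fst

lemma measurable_ker5 (j : ℕ) (lam : ℝ) : Measurable (Function.uncurry (ker5 j lam)) := by
  have hs := measurable_jap.comp (measurable_sig j lam)
  refine Measurable.ite (measurableSet_le measurable_const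
    ((measurable_kfst lam).comp measurable_fst)) ?_ measurable_const
  exact (((hs.comp measurable_snd).pow_const _).mul
    ((hs.comp (measurable_fst.sub measurable_snd)).pow_const _)).ennreal_ofReal

lemma measurable_ker6 (j : ℕ) (lam : ℝ) : Measurable (Function.uncurry (ker6 j lam)) := by
  have hs := measurable_jap.comp (measurable_sig j lam)
  refine Measurable.ite (measurableSet_le measurable_const
    ((measurable_kfst lam).comp measurable_snd)) ?_ measurable_const
  exact (((hs.comp measurable_fst).pow_const _).mul
    ((hs.comp (measurable_fst.sub measurable_snd)).pow_const _)).ennreal_ofReal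

lemma measurable_ph1 (lam : ℝ) : Measurable (Function.uncurry fun _ p1 : ℤ × ℝ => ph lam p1.1) :=
  (measurable_from_top (f := ph lam)).comp (measurable_fst.comp measurable_snd)
lemma measurable_ph2 (lam : ℝ) :
    Measurable (Function.uncurry fun p p1 : ℤ × ℝ => ph lam (p.1 - p1.1)) :=
  (measurable_from_top (f := ph lam)).comp
    ((measurable_fst.comp measurable_fst).sub (measurable_fst.comp measurable_snd))
lemma measurable_ph3 (lam : ℝ) : Measurable (Function.uncurry fun p _ : ℤ × ℝ => ph lam p.1) :=
  (measurable_from_top (f := ph lam)).comp (measurable_fst.comp measurable_fst)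
lemma measurable_ker4' (j : ℕ) (lam : ℝ) :
    Measurable (Function.uncurry fun p p1 : ℤ × ℝ => ker4 j lam p * ph lam (p.1 - p1.1)) :=
  ((measurable_ker4 j lam).comp measurable_fst).mul (measurable_ph2 lam)

/-- The constant in the operator bounds. -/
def cOp (j : ℕ) : ℝ :=
  4 * Real.pi + 4 * Real.pi * japI (2 * aj j) + 4 * japI (3 / 2) * (160 * Real.pi)

lemma ph_tsum {lam : ℝ} (hl : 1 ≤ lam) :
    ∑' m, ph lam m ^ 2 ≤ ENNReal.ofReal (4 * Real.pi * lam) := by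
  unfold ph
  simp only [← ENNReal.ofReal_pow (phiF_nonneg _)]
  exact phiF_tsum (by linarith)

lemma ofReal_sq_rpow (x e : ℝ) : (ENNReal.ofReal (jap x ^ e)) ^ 2 =
    ENNReal.ofReal (jap x ^ (2 * e)) := by
  rw [← ENNReal.ofReal_pow (Real.rpow_nonneg (jap_pos x).le _), ← Real.rpow_natCast,
    ← Real.rpow_mul (jap_pos x).le]
  congr 2; push_cast; ring

lemma ofReal_mul_sq (x y p : ℝ) :
    (ENNReal.ofReal (jap x ^ (-(p / 2)) * jap y ^ (-(1 - p / 2)))) ^ 2 =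
    ENNReal.ofReal (jap x ^ (-p) * jap y ^ (-(2 - p))) := by
  rw [ENNReal.ofReal_mul (Real.rpow_nonneg (jap_pos x).le _), mul_pow, ofReal_sq_rpow,
    ofReal_sq_rpow, ← ENNReal.ofReal_mul (Real.rpow_nonneg (jap_pos x).le _)]
  congr 3 <;> ring

lemma ennreal_add_sq_le (a b : ℝ≥0∞) : (a + b) ^ 2 ≤ 2 * a ^ 2 + 2 * b ^ 2 := by
  have := ENNReal.rpow_add_le_mul_rpow_add_rpow a b (p := 2) (by norm_num)
  norm_num at this
  rw [← mul_add]
  exact_mod_cast this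

lemma nsq_add_le {f g : ℤ × ℝ → ℝ≥0∞} (hf : Measurable f) {A B : ℝ≥0∞} (hA : nsq f ≤ A)
    (hg : Measurable g) (hB : nsq g ≤ B) : nsq (fun p => f p + g p) ≤ 2 * A + 2 * B := by
  calc nsq (fun p => f p + g p) ≤ ∫⁻ p, (2 * f p ^ 2 + 2 * g p ^ 2) ∂muX :=
        lintegral_mono fun p => ennreal_add_sq_le _ _
    _ = 2 * nsq f + 2 * nsq g := by
        rw [lintegral_add_left ((hf.pow_const 2).const_mul 2),
          lintegral_const_mul _ (hf.pow_const 2), lintegral_const_mul _ (hg.pow_const 2)]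
        rfl
    _ ≤ _ := by gcongr

lemma measurable_halfOp (j : ℕ) (lam : ℝ) {F G Y : ℤ × ℝ → ℝ≥0∞} (hF : Measurable F)
    (hG : Measurable G) (hY : Measurable Y) : Measurable (halfOp j lam F G Y) :=
  (((((measurable_bil (measurable_ph1 lam) hF hY).add
    (measurable_bil (measurable_ph2 lam) hF hY)).add
    (measurable_bil (measurable_ph3 lam) hF hY)).add
    (measurable_bil (measurable_ker4' j lam) hF hG)).add
    (measurable_bil (measurable_ker5 j lam) hF hG)).add
    (measurable_bil (measurable_ker6 j lam) hF hG)

/-- Integrating the product of two squared modulation weights in `τ` leaves the resonance sum. -/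
lemma resonance_mass {j : ℕ} (hj : 2 ≤ j) {lam : ℝ} (hl : 1 ≤ lam)
    {κ : ℝ} (hκ : 1 ≤ |κ|) (α β : ℤ → ℝ) (x : ℝ)
    (h : ∀ m, α m - β m = ((m : ℝ) / lam) ^ (2 * j + 1) - ((m : ℝ) / lam - κ) ^ (2 * j + 1) - x) :
    ∑' m : ℤ, ∫⁻ t : ℝ, ENNReal.ofReal (jap (t - α m) ^ (-(1 / (j : ℝ))) *
      jap (t - β m) ^ (-(2 - 1 / (j : ℝ)))) ≤
      ENNReal.ofReal (4 * japI (3 / 2) * (160 * Real.pi) * lam) := by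
  have hj' : (2 : ℝ) ≤ j := by exact_mod_cast hj
  have hp : 1 / (j : ℝ) ≤ 1 / 2 := one_div_le_one_div_of_le (by norm_num) hj'
  refine (ENNReal.tsum_le_tsum fun m => lintegral_jap_prod (by positivity) hp (α m) (β m)).trans ?_
  rw [ENNReal.tsum_mul_left]
  simp only [h]
  refine (mul_le_mul' le_rfl (kernel_sum hj hl hκ x)).trans_eq ?_
  rw [← ENNReal.ofReal_mul (by linarith [japI_nonneg (3 / 2)])]
  congr 1; ring

lemma ker5_bound {j : ℕ} (hj : 2 ≤ j) {lam : ℝ} (hl : 1 ≤ lam) (p : ℤ × ℝ) :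
     ∫⁻ p1, ker5 j lam p p1 ^ 2 ∂muX ≤
    ENNReal.ofReal (4 * japI (3 / 2) * (160 * Real.pi) * lam) := by
  have hm := (measurable_ker5 j lam).comp (measurable_prodMk_left (x := p))
  rw [lintegral_muX (f := fun p1 => ker5 j lam p p1 ^ 2) (hm.pow_const 2)]
  by_cases hk : 1 ≤ |(p.1 : ℝ) / lam|
  · have e := resonance_mass hj hl hk (fun m => ((m : ℝ) / lam) ^ (2 * j + 1))
      (fun m => p.2 - (((p.1 - m : ℤ) : ℝ) / lam) ^ (2 * j + 1)) p.2 ?_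
    · refine le_trans (le_of_eq ?_) e
      congr 1; ext m; congr 1; ext t
      simp only [ker5, hk, if_true]
      rw [show 1 / (2 * (j : ℝ)) = 1 / (j : ℝ) / 2 by rw [div_div, mul_comm], ofReal_mul_sq]
      unfold sigL
      rw [← jap_neg ((p - (m, t)).2 - _)]
      congr 4
      simp only [Prod.fst_sub, Prod.snd_sub]; ring
    · intro m
      have : Odd (2 * j + 1) := ⟨j, rfl⟩
      rw [show (m : ℝ) / lam - p.1 / lam = -(((p.1 - m : ℤ) : ℝ) / lam) by push_cast; ring,
        this.neg_pow]
      ring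
  · simp [ker5, hk]

lemma ker6_bound {j : ℕ} (hj : 2 ≤ j) {lam : ℝ} (hl : 1 ≤ lam) (p1 : ℤ × ℝ) :
     ∫⁻ p, ker6 j lam p p1 ^ 2 ∂muX ≤
    ENNReal.ofReal (4 * japI (3 / 2) * (160 * Real.pi) * lam) := by
  have hm := (measurable_ker6 j lam).comp (measurable_prodMk_right (y := p1))
  rw [lintegral_muX (f := fun p => ker6 j lam p p1 ^ 2) (hm.pow_const 2)]
  by_cases hk : 1 ≤ |(p1.1 : ℝ) / lam|
  · have e := resonance_mass hj hl hk (fun m => ((m : ℝ) / lam) ^ (2 * j + 1))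
      (fun m => p1.2 + (((m - p1.1 : ℤ) : ℝ) / lam) ^ (2 * j + 1)) p1.2 ?_
    · refine le_trans (le_of_eq ?_) e
      congr 1; ext m; congr 1; ext t
      simp only [ker6, hk, if_true]
      rw [show 1 / (2 * (j : ℝ)) = 1 / (j : ℝ) / 2 by rw [div_div, mul_comm], ofReal_mul_sq]
      unfold sigL
      congr 4
      simp only [Prod.fst_sub, Prod.snd_sub]; ring
    · intro m
      push_cast
      rw [sub_div]; ring
  · simp [ker6, hk]

/-- The factor `94` comes from iterating `(a+b)² ≤ 2a² + 2b²` over six terms. -/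
lemma half_op_bound {j : ℕ} (hj : 2 ≤ j) {lam : ℝ} (hl : 1 ≤ lam)
    {F G Y : ℤ × ℝ → ℝ≥0∞} (hF : Measurable F) (hG : Measurable G)
    (hY : Measurable Y) :
    nsq (halfOp j lam F G Y) ≤
      94 * (ENNReal.ofReal (cOp j * lam) * (nsq F * (nsq G + ysq Y))) := by
  have l0 : 0 < lam := by linarith
  have jI := japI_nonneg (2 * aj j)
  have jI' := japI_nonneg (3 / 2)
  have pi0 := Real.pi_pos
  have a1 : ENNReal.ofReal (4 * Real.pi * lam) ≤ ENNReal.ofReal (cOp j * lam) := by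
    apply ENNReal.ofReal_le_ofReal; unfold cOp; gcongr
    have : 0 ≤ 4 * Real.pi * japI (2 * aj j) := by positivity
    have : 0 ≤ 4 * japI (3 / 2) * (160 * Real.pi) := by positivity
    linarith
  have a2 : ENNReal.ofReal (4 * Real.pi * japI (2 * aj j) * lam) ≤ ENNReal.ofReal (cOp j * lam) := by
    apply ENNReal.ofReal_le_ofReal; unfold cOp; gcongr
    have : 0 ≤ 4 * japI (3 / 2) * (160 * Real.pi) := by positivity
    linarith
  have a3 : ENNReal.ofReal (4 * japI (3 / 2) * (160 * Real.pi) * lam) ≤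
      ENNReal.ofReal (cOp j * lam) := by
    apply ENNReal.ofReal_le_ofReal; unfold cOp; gcongr
    have : 0 ≤ 4 * Real.pi * japI (2 * aj j) := by positivity
    linarith
  set M := ENNReal.ofReal (cOp j * lam) * (nsq F * (nsq G + ysq Y)) with hM
  have toMY : ∀ {x A : ℝ≥0∞}, x ≤ A * (nsq F * ysq Y) → A ≤ ENNReal.ofReal (cOp j * lam) → x ≤ M :=
    fun h hA => h.trans (mul_le_mul' hA (mul_le_mul' le_rfl le_add_self))
  have toMG : ∀ {x A : ℝ≥0∞}, x ≤ A * (nsq F * nsq G) → A ≤ ENNReal.ofReal (cOp j * lam) → x ≤ M :=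
    fun h hA => h.trans (mul_le_mul' hA (mul_le_mul' le_rfl le_self_add))
  have hsub : ∀ m : ℤ, ∑' m1, ph lam (m - m1) ^ 2 ≤ ENNReal.ofReal (4 * Real.pi * lam) :=
    fun m => ((Equiv.subLeft m).tsum_eq fun m => ph lam m ^ 2).trans_le (ph_tsum hl)
  have b1 : nsq (bil (fun _ p1 => ph lam p1.1) F Y) ≤ M := by
    refine toMY ((bil_young (ψ := fun _ m1 => ph lam m1) hF hY).trans ?_) a1
    rw [nsq_eq hF]
    exact disc_inner (fun _ => ph_tsum hl) _ _
  have b2 : nsq (bil (fun p p1 => ph lam (p.1 - p1.1)) F Y) ≤ M := by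
    refine toMY ((bil_young (ψ := fun m m1 => ph lam (m - m1)) hF hY).trans ?_) a1
    rw [nsq_eq hF]
    exact disc_inner hsub _ _
  have b3 : nsq (bil (fun p _ => ph lam p.1) F Y) ≤ M := by
    refine toMY ((bil_young (ψ := fun m _ => ph lam m) hF hY).trans ?_) a1
    rw [nsq_eq hF]
    exact disc_outer (ph_tsum hl) _ _
  have b4 : nsq (bil (fun p p1 => ker4 j lam p * ph lam (p.1 - p1.1)) F G) ≤ M := by
    have haj : 1 < 2 * aj j := by
      unfold aj
      have : (0 : ℝ) < 1 / (4 * (2 * (j : ℝ) + 1)) := by positivity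
      linarith
    refine toMG (A := ENNReal.ofReal (4 * Real.pi * japI (2 * aj j) * lam)) ((bil_sup (ψ := fun m m1 => ph lam (m - m1)) (measurable_ker4 j lam)
      (J := ENNReal.ofReal (japI (2 * aj j)) ^ (1 / 2 : ℝ)) ?_ hF hG).trans ?_) a2
    · intro m
      rw [rpow_half_sq, ← lintegral_jap haj (((m : ℝ) / lam) ^ (2 * j + 1))]
      apply lintegral_mono; intro τ
      simp only [ker4, sigL]
      rw [ofReal_sq_rpow]
      apply le_of_eq; congr 2; ring
    · rw [rpow_half_sq, nsq_eq hF, nsq_eq hG]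
      refine (mul_le_mul' le_rfl (disc_inner hsub _ _)).trans_eq ?_
      rw [← mul_assoc, ← ENNReal.ofReal_mul jI]
      congr 2; ring
  have b5 : nsq (bil (ker5 j lam) F G) ≤ M :=
    toMG (op_inner hF hG (measurable_ker5 j lam) (ker5_bound hj hl)) a3
  have b6 : nsq (bil (ker6 j lam) F G) ≤ M :=
    toMG (op_outer hF hG (measurable_ker6 j lam) (ker6_bound hj hl)) a3
  have m1 := measurable_bil (measurable_ph1 lam) hF hY
  have m2 := measurable_bil (measurable_ph2 lam) hF hY
  have m3 := measurable_bil (measurable_ph3 lam) hF hY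
  have m4 := measurable_bil (measurable_ker4' j lam) hF hG
  have m5 := measurable_bil (measurable_ker5 j lam) hF hG
  have m6 := measurable_bil (measurable_ker6 j lam) hF hG
  refine (nsq_add_le ((((m1.add m2).add m3).add m4).add m5)
    (nsq_add_le (((m1.add m2).add m3).add m4) (nsq_add_le ((m1.add m2).add m3)
      (nsq_add_le (m1.add m2) (nsq_add_le m1 b1 m2 b2) m3 b3) m4 b4) m5 b5) m6 b6).trans_eq ?_
  ring

/-! ### From logarithms to kernels -/

lemma exp_lphi {k : ℝ} (hk : k ≠ 0) : Real.exp (lphi k) = phiF k := by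
  unfold lphi phiF
  rw [Real.rpow_def_of_pos (abs_pos.2 hk), Real.rpow_def_of_pos (jap_pos k), ← Real.exp_add]
  congr 1; ring

/-- The six-term majorant of the weighted convolution kernel, in one of the two orderings of the
factors. -/
def maj (j : ℕ) (s k k1 k2 σ σ1 σ2 w1 w2 : ℝ) : ℝ :=
  phiF k1 * (w1 * jap k2 ^ s) + phiF k2 * (w1 * jap k2 ^ s) + phiF k * (w1 * jap k2 ^ s)
  + jap σ ^ (-aj j) * phiF k2 * (w1 * w2)
  + (if 1 ≤ |k| then jap σ1 ^ (-(1 / (2 * (j : ℝ)))) * jap σ2 ^ (-(1 - 1 / (2 * (j : ℝ)))) else 0)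
    * (w1 * w2)
  + (if 1 ≤ |k1| then jap σ ^ (-(1 / (2 * (j : ℝ)))) * jap σ2 ^ (-(1 - 1 / (2 * (j : ℝ)))) else 0)
    * (w1 * w2)

lemma half_exp {j : ℕ} {s k k1 k2 σ σ1 σ2 V w1 w2 K : ℝ} (k0 : k ≠ 0) (k10 : k1 ≠ 0)
    (k20 : k2 ≠ 0) (hV : 0 < V) (h1 : 0 < w1) (h2 : 0 < w2)
    (h : Half j s k k1 k2 σ σ1 σ2 (Real.log V) (Real.log w1) (Real.log w2) K) :
    V ≤ Real.exp K * maj j s k k1 k2 σ σ1 σ2 w1 w2 := by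
  have nn : ∀ z e : ℝ, 0 ≤ jap z ^ e := fun z e => Real.rpow_nonneg (jap_pos z).le _
  have t1 : 0 ≤ phiF k1 * (w1 * jap k2 ^ s) :=
    mul_nonneg (phiF_nonneg _) (mul_nonneg h1.le (nn _ _))
  have t2 : 0 ≤ phiF k2 * (w1 * jap k2 ^ s) :=
    mul_nonneg (phiF_nonneg _) (mul_nonneg h1.le (nn _ _))
  have t3 : 0 ≤ phiF k * (w1 * jap k2 ^ s) :=
    mul_nonneg (phiF_nonneg _) (mul_nonneg h1.le (nn _ _))
  have t4 : 0 ≤ jap σ ^ (-aj j) * phiF k2 * (w1 * w2) :=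
    mul_nonneg (mul_nonneg (nn _ _) (phiF_nonneg _)) (by positivity)
  have t5 : 0 ≤ (if 1 ≤ |k| then jap σ1 ^ (-(1 / (2 * (j : ℝ)))) *
      jap σ2 ^ (-(1 - 1 / (2 * (j : ℝ)))) else 0) * (w1 * w2) := by
    apply mul_nonneg _ (by positivity)
    split_ifs
    · exact mul_nonneg (nn _ _) (nn _ _)
    · exact le_rfl
  have t6 : 0 ≤ (if 1 ≤ |k1| then jap σ ^ (-(1 / (2 * (j : ℝ)))) *
      jap σ2 ^ (-(1 - 1 / (2 * (j : ℝ)))) else 0) * (w1 * w2) := by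
    apply mul_nonneg _ (by positivity)
    split_ifs
    · exact mul_nonneg (nn _ _) (nn _ _)
    · exact le_rfl
  have key : ∀ t : ℝ, t ≤ maj j s k k1 k2 σ σ1 σ2 w1 w2 → ∀ L : ℝ, Real.log V ≤ L →
      Real.exp L = Real.exp K * t → V ≤ Real.exp K * maj j s k k1 k2 σ σ1 σ2 w1 w2 := by
    intro t ht L hL e
    calc V = Real.exp (Real.log V) := (Real.exp_log hV).symm
      _ ≤ Real.exp L := Real.exp_le_exp.2 hL
      _ = Real.exp K * t := e
      _ ≤ _ := by gcongr
  have rp : ∀ z e : ℝ, jap z ^ e = Real.exp (Real.log (jap z) * e) := fun z e =>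
    Real.rpow_def_of_pos (jap_pos z) e
  have el1 := Real.exp_log h1
  have el2 := Real.exp_log h2
  rcases h with h | h | h | h | ⟨hk, h⟩ | ⟨hk, h⟩
  · refine key (phiF k1 * (w1 * jap k2 ^ s)) (by unfold maj; linarith) _ h ?_
    rw [← exp_lphi k10, rp, ← el1, Real.log_exp]
    simp only [← Real.exp_add]; congr 1; ring
  · refine key (phiF k2 * (w1 * jap k2 ^ s)) (by unfold maj; linarith) _ h ?_
    rw [← exp_lphi k20, rp, ← el1, Real.log_exp]
    simp only [← Real.exp_add]; congr 1; ring
  · refine key (phiF k * (w1 * jap k2 ^ s)) (by unfold maj; linarith) _ h ?_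
    rw [← exp_lphi k0, rp, ← el1, Real.log_exp]
    simp only [← Real.exp_add]; congr 1; ring
  · refine key (jap σ ^ (-aj j) * phiF k2 * (w1 * w2)) (by unfold maj; linarith) _ h ?_
    rw [← exp_lphi k20, rp, ← el1, ← el2, Real.log_exp, Real.log_exp]
    unfold aj
    simp only [← Real.exp_add]; congr 1; ring
  · refine key ((if 1 ≤ |k| then jap σ1 ^ (-(1 / (2 * (j : ℝ)))) *
        jap σ2 ^ (-(1 - 1 / (2 * (j : ℝ)))) else 0) * (w1 * w2)) (by unfold maj; linarith) _ h ?_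
    rw [if_pos hk, rp, rp, ← el1, ← el2, Real.log_exp, Real.log_exp]
    simp only [← Real.exp_add]; congr 1; ring
  · refine key ((if 1 ≤ |k1| then jap σ ^ (-(1 / (2 * (j : ℝ)))) *
        jap σ2 ^ (-(1 - 1 / (2 * (j : ℝ)))) else 0) * (w1 * w2)) (by unfold maj; linarith) _ h ?_
    rw [if_pos hk, rp, rp, ← el1, ← el2, Real.log_exp, Real.log_exp]
    simp only [← Real.exp_add]; congr 1; ring

lemma maj_nonneg (j : ℕ) (s k k1 k2 σ σ1 σ2 : ℝ) {w1 w2 : ℝ} (h1 : 0 < w1) (h2 : 0 < w2) :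
    0 ≤ maj j s k k1 k2 σ σ1 σ2 w1 w2 := by
  have nn : ∀ z e : ℝ, 0 ≤ jap z ^ e := fun z e => Real.rpow_nonneg (jap_pos z).le _
  have n1 := phiF_nonneg k
  have n2 := phiF_nonneg k1
  have n3 := phiF_nonneg k2
  have := nn k2 s
  have := nn σ (-aj j)
  have i : ∀ (P : Prop) [Decidable P] (a b c d : ℝ),
      0 ≤ if P then jap a ^ b * jap c ^ d else 0 := by
    intro P _ a b c d
    split_ifs
    · exact mul_nonneg (nn _ _) (nn _ _)
    · exact le_rfl
  have := i (1 ≤ |k|) σ1 (-(1 / (2 * (j : ℝ)))) σ2 (-(1 - 1 / (2 * (j : ℝ))))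
  have := i (1 ≤ |k1|) σ (-(1 / (2 * (j : ℝ)))) σ2 (-(1 - 1 / (2 * (j : ℝ))))
  unfold maj
  positivity

/-- The pointwise bound for the weighted convolution kernel. -/
lemma Conf.exp_le {j : ℕ} {s k k1 k2 σ σ1 σ2 w w1 w2 : ℝ}
    (h : Conf j s k k1 k2 σ σ1 σ2 w w1 w2) :
    |k| * (jap σ)⁻¹ * w ≤ Real.exp (40 * (j : ℝ) ^ 2 * cc j) *
      (maj j s k k1 k2 σ σ1 σ2 w1 w2 + maj j s k k2 k1 σ σ2 σ1 w2 w1) := by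
  have p0 := wrel_pos h.hj h.hw
  have p1 := wrel_pos h.hj h.hw1
  have p2 := wrel_pos h.hj h.hw2
  have hV : 0 < |k| * (jap σ)⁻¹ * w :=
    mul_pos (mul_pos (abs_pos.2 h.k0) (inv_pos.2 (jap_pos σ))) p0
  have n1 := mul_nonneg (Real.exp_pos (40 * (j : ℝ) ^ 2 * cc j)).le
    (maj_nonneg j s k k1 k2 σ σ1 σ2 p1 p2)
  have n2 := mul_nonneg (Real.exp_pos (40 * (j : ℝ) ^ 2 * cc j)).le
    (maj_nonneg j s k k2 k1 σ σ2 σ1 p2 p1)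
  rcases h.half with h' | h'
  · have := half_exp h.k0 h.k10 h.k20 hV p1 p2 h'
    linarith
  · have := half_exp h.k0 h.k20 h.k10 hV p2 p1 h'
    linarith

/-- The integrand of `halfOp`. -/
def hInt (j : ℕ) (lam : ℝ) (F G Y : ℤ × ℝ → ℝ≥0∞) (p p1 : ℤ × ℝ) : ℝ≥0∞ :=
  ph lam p1.1 * (F p1 * Y (p - p1)) + ph lam (p.1 - p1.1) * (F p1 * Y (p - p1))
  + ph lam p.1 * (F p1 * Y (p - p1))
  + ker4 j lam p * ph lam (p.1 - p1.1) * (F p1 * G (p - p1))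
  + ker5 j lam p p1 * (F p1 * G (p - p1)) + ker6 j lam p p1 * (F p1 * G (p - p1))

lemma lintegral_hInt (j : ℕ) (lam : ℝ) {F G Y : ℤ × ℝ → ℝ≥0∞} (hF : Measurable F)
    (hG : Measurable G) (hY : Measurable Y) (p : ℤ × ℝ) :
    ∫⁻ p1, hInt j lam F G Y p p1 ∂muX = halfOp j lam F G Y p := by
  have m1 := (measurable_bil_integrand (measurable_ph1 lam) hF hY).comp
    (measurable_prodMk_left (x := p))
  have m2 := (measurable_bil_integrand (measurable_ph2 lam) hF hY).comp
    (measurable_prodMk_left (x := p))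
  have m3 := (measurable_bil_integrand (measurable_ph3 lam) hF hY).comp
    (measurable_prodMk_left (x := p))
  have m4 := (measurable_bil_integrand (measurable_ker4' j lam) hF hG).comp
    (measurable_prodMk_left (x := p))
  have m5 := (measurable_bil_integrand (measurable_ker5 j lam) hF hG).comp
    (measurable_prodMk_left (x := p))
  unfold hInt halfOp
  rw [lintegral_add_left (by exact ((((m1).add m2).add m3).add m4).add m5),
    lintegral_add_left (by exact (((m1).add m2).add m3).add m4),
    lintegral_add_left (by exact ((m1).add m2).add m3), lintegral_add_left (by exact (m1).add m2),
    lintegral_add_left (by exact m1)]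
  rfl

/-- The `X^s` weight as a function on `Ż_λ × ℝ`. -/
def wt (j : ℕ) (lam s : ℝ) (p : ℤ × ℝ) : ℝ :=
  open Classical in
  if p ∈ D1 j lam ∪ D5 j lam then
    jap ((p.1 : ℝ) / lam) ^ s * jap (sigL j lam p.1 p.2) ^ ((2 * (j : ℝ) - 1) / (2 * (j : ℝ)))
  else if p ∈ D2 j lam then
    jap ((p.1 : ℝ) / lam) ^ ((1 - 2 * (j : ℝ)) * s - 1) * jap (sigL j lam p.1 p.2) ^ (s + 1)
  else jap ((p.1 : ℝ) / lam) ^ (-s / (j : ℝ) - 1) * jap (sigL j lam p.1 p.2) ^ (s / (j : ℝ) + 1)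

lemma region_cover {j : ℕ} {lam : ℝ} (hl : 1 ≤ lam) {p : ℤ × ℝ} (hp : p.1 ≠ 0)
    (h1 : p ∉ D1 j lam ∪ D5 j lam) (h2 : p ∉ D2 j lam) : p ∈ D3 j lam ∪ D4 j lam := by
  have l0 : 0 < lam := by linarith
  have hk : 1 / lam ≤ |(p.1 : ℝ) / lam| := by
    rw [abs_div, abs_of_pos l0]
    gcongr
    exact_mod_cast Int.one_le_abs hp
  simp only [D1, D2, D3, D4, D5, Set.mem_union, Set.mem_ofPred_eq, not_or, not_and, not_le] at *
  rcases le_or_gt 1 |(p.1 : ℝ) / lam| with h | h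
  · exact Or.inl ⟨h, h2 h (h1.1 h)⟩
  · exact Or.inr ⟨hk, h.le, h1.2 hk h.le⟩

lemma reg1_of {j : ℕ} {lam : ℝ} {p : ℤ × ℝ} (h : p ∈ D1 j lam ∪ D5 j lam) :
    Reg1 j ((p.1 : ℝ) / lam) (sigL j lam p.1 p.2) :=
  h.imp id fun h => h.2

lemma reg3_of {j : ℕ} {lam : ℝ} {p : ℤ × ℝ} (h : p ∈ D3 j lam ∪ D4 j lam) :
    Reg3 j ((p.1 : ℝ) / lam) (sigL j lam p.1 p.2) :=
  h.elim (fun h => h.2) fun h => h.2.2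

lemma wt_rel {j : ℕ} {lam : ℝ} (hl : 1 ≤ lam) (s : ℝ) {p : ℤ × ℝ} (hp : p.1 ≠ 0) :
    WRel j s ((p.1 : ℝ) / lam) (sigL j lam p.1 p.2) (wt j lam s p) := by
  unfold wt
  split_ifs with h1 h2
  · exact Or.inl ⟨reg1_of h1, rfl⟩
  · exact Or.inr (Or.inl ⟨h2, rfl⟩)
  · exact Or.inr (Or.inr ⟨reg3_of (region_cover hl hp h1 h2), rfl⟩)

/-! ### Reduction of the convolution to the bilinear operators -/

lemma wt_pos (j : ℕ) (lam s : ℝ) (p : ℤ × ℝ) : 0 < wt j lam s p := by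
  have nn : ∀ z e : ℝ, 0 < jap z ^ e := fun z e => Real.rpow_pos_of_pos (jap_pos z) _
  unfold wt
  split_ifs <;> exact mul_pos (nn _ _) (nn _ _)

/-- `f` multiplied by the `X^s` weight. -/
def wF (j : ℕ) (lam s : ℝ) (f : ℤ → ℝ → ℝ≥0∞) (p : ℤ × ℝ) : ℝ≥0∞ :=
  ENNReal.ofReal (wt j lam s p) * f p.1 p.2

/-- `f` multiplied by the `Y^s` weight. -/
def yF (lam s : ℝ) (f : ℤ → ℝ → ℝ≥0∞) (p : ℤ × ℝ) : ℝ≥0∞ :=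
  ENNReal.ofReal (jap ((p.1 : ℝ) / lam) ^ s) * f p.1 p.2

lemma maj_ennreal (j : ℕ) (lam s : ℝ) (f₁ f₂ : ℤ → ℝ → ℝ≥0∞) (p p1 : ℤ × ℝ) :
    ENNReal.ofReal (maj j s ((p.1 : ℝ) / lam) ((p1.1 : ℝ) / lam) (((p - p1).1 : ℝ) / lam)
      (sigL j lam p.1 p.2) (sigL j lam p1.1 p1.2) (sigL j lam (p - p1).1 (p - p1).2)
      (wt j lam s p1) (wt j lam s (p - p1))) *
      (f₁ p1.1 p1.2 * f₂ (p - p1).1 (p - p1).2) =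
    hInt j lam (wF j lam s f₁) (wF j lam s f₂) (yF lam s f₂) p p1 := by
  have nn : ∀ z e : ℝ, 0 ≤ jap z ^ e := fun z e => Real.rpow_nonneg (jap_pos z).le _
  have n1 := phiF_nonneg ((p.1 : ℝ) / lam)
  have n2 := phiF_nonneg ((p1.1 : ℝ) / lam)
  have n3 := phiF_nonneg (((p - p1).1 : ℝ) / lam)
  have w1 := (wt_pos j lam s p1).le
  have w2 := (wt_pos j lam s (p - p1)).le
  have n4 := nn (((p - p1).1 : ℝ) / lam) s
  have n5 := nn (sigL j lam p.1 p.2) (-aj j)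
  have i : ∀ (P : Prop) [Decidable P] (a b c d : ℝ),
      0 ≤ if P then jap a ^ b * jap c ^ d else 0 := by
    intro P _ a b c d
    split_ifs
    · exact mul_nonneg (nn _ _) (nn _ _)
    · exact le_rfl
  have n6 := i (1 ≤ |(p.1 : ℝ) / lam|) (sigL j lam p1.1 p1.2) (-(1 / (2 * (j : ℝ))))
    (sigL j lam (p - p1).1 (p - p1).2) (-(1 - 1 / (2 * (j : ℝ))))
  have n7 := i (1 ≤ |(p1.1 : ℝ) / lam|) (sigL j lam p.1 p.2) (-(1 / (2 * (j : ℝ))))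
    (sigL j lam (p - p1).1 (p - p1).2) (-(1 - 1 / (2 * (j : ℝ))))
  have e5 : ker5 j lam p p1 = ENNReal.ofReal (if 1 ≤ |(p.1 : ℝ) / lam| then
      jap (sigL j lam p1.1 p1.2) ^ (-(1 / (2 * (j : ℝ)))) *
      jap (sigL j lam (p - p1).1 (p - p1).2) ^ (-(1 - 1 / (2 * (j : ℝ)))) else 0) := by
    unfold ker5; split_ifs <;> simp
  have e6 : ker6 j lam p p1 = ENNReal.ofReal (if 1 ≤ |(p1.1 : ℝ) / lam| then
      jap (sigL j lam p.1 p.2) ^ (-(1 / (2 * (j : ℝ)))) *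
      jap (sigL j lam (p - p1).1 (p - p1).2) ^ (-(1 - 1 / (2 * (j : ℝ)))) else 0) := by
    unfold ker6; split_ifs <;> simp
  unfold hInt
  rw [e5, e6]
  unfold maj ker4 ph wF yF
  rw [ENNReal.ofReal_add (by positivity) (by positivity),
    ENNReal.ofReal_add (by positivity) (by positivity),
    ENNReal.ofReal_add (by positivity) (by positivity),
    ENNReal.ofReal_add (by positivity) (by positivity),
    ENNReal.ofReal_add (by positivity) (by positivity),
    ENNReal.ofReal_mul n2, ENNReal.ofReal_mul w1, ENNReal.ofReal_mul n3, ENNReal.ofReal_mul w1,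
    ENNReal.ofReal_mul n1, ENNReal.ofReal_mul w1, ENNReal.ofReal_mul (by positivity),
    ENNReal.ofReal_mul n5, ENNReal.ofReal_mul w1, ENNReal.ofReal_mul n6, ENNReal.ofReal_mul w1,
    ENNReal.ofReal_mul n7, ENNReal.ofReal_mul w1, ← Prod.fst_sub]
  ring

/-- The constant in the pointwise kernel bound. -/
def eK (j : ℕ) : ℝ := Real.exp (40 * (j : ℝ) ^ 2 * cc j)

section main
variable {j : ℕ} {s lam : ℝ} {f₁ f₂ : ℤ → ℝ → ℝ≥0∞}

lemma conf_of (hj : 2 ≤ j) (hs₁ : -(j : ℝ) + 1 / 2 ≤ s) (hs₂ : s ≤ -(j : ℝ) / 2)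
    (hl : 1 ≤ lam) {p p1 : ℤ × ℝ} (h0 : p.1 ≠ 0) (h1 : p1.1 ≠ 0) (h2 : (p - p1).1 ≠ 0) {v : ℝ}
    (hv : WRel j s ((p.1 : ℝ) / lam) (sigL j lam p.1 p.2) v) :
    Conf j s ((p.1 : ℝ) / lam) ((p1.1 : ℝ) / lam) (((p - p1).1 : ℝ) / lam)
      (sigL j lam p.1 p.2) (sigL j lam p1.1 p1.2) (sigL j lam (p - p1).1 (p - p1).2)
      v (wt j lam s p1) (wt j lam s (p - p1)) where
  hj := hj
  hs₁ := hs₁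
  hs₂ := hs₂
  k0 := div_ne_zero (Int.cast_ne_zero.2 h0) (by linarith)
  k10 := div_ne_zero (Int.cast_ne_zero.2 h1) (by linarith)
  k20 := div_ne_zero (Int.cast_ne_zero.2 h2) (by linarith)
  hk := by rw [Prod.fst_sub]; push_cast; ring
  hσ := by unfold sigL; simp only [Prod.snd_sub]; ring
  hw := hv
  hw1 := wt_rel hl s h1
  hw2 := wt_rel hl s h2

lemma measurable_absSig (j : ℕ) (lam : ℝ) :
    Measurable fun p : ℤ × ℝ => |sigL j lam p.1 p.2| := by
  have := (measurable_sig j lam).norm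
  simpa only [Real.norm_eq_abs] using this

lemma measurableSet_D1 (j : ℕ) (lam : ℝ) : MeasurableSet (D1 j lam) :=
  (measurableSet_le measurable_const (measurable_kfst lam)).inter
    (measurableSet_le (measurable_absSig j lam)
      (((measurable_kfst lam).pow_const (2 * j)).const_mul _))

lemma measurableSet_D2 (j : ℕ) (lam : ℝ) : MeasurableSet (D2 j lam) :=
  (measurableSet_le measurable_const (measurable_kfst lam)).inter
    ((measurableSet_lt (((measurable_kfst lam).pow_const (2 * j)).const_mul _)
      (measurable_absSig j lam)).inter
    (measurableSet_le (measurable_absSig j lam)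
      (((measurable_kfst lam).pow_const (2 * j + 1)).const_mul _)))

lemma measurableSet_D3 (j : ℕ) (lam : ℝ) : MeasurableSet (D3 j lam) :=
  (measurableSet_le measurable_const (measurable_kfst lam)).inter
    (measurableSet_lt (((measurable_kfst lam).pow_const (2 * j + 1)).const_mul _)
      (measurable_absSig j lam))

lemma measurableSet_D4 (j : ℕ) (lam : ℝ) : MeasurableSet (D4 j lam) :=
  (measurableSet_le measurable_const (measurable_kfst lam)).inter
    ((measurableSet_le (measurable_kfst lam) measurable_const).inter
    (measurableSet_lt (((measurable_kfst lam).pow_const (2 * j + 1)).const_mul _)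
      (measurable_absSig j lam)))

lemma measurableSet_D5 (j : ℕ) (lam : ℝ) : MeasurableSet (D5 j lam) :=
  (measurableSet_le measurable_const (measurable_kfst lam)).inter
    ((measurableSet_le (measurable_kfst lam) measurable_const).inter
    (measurableSet_le (measurable_absSig j lam)
      (((measurable_kfst lam).pow_const (2 * j + 1)).const_mul _)))

lemma measurable_jw (j : ℕ) (lam a b : ℝ) : Measurable fun p : ℤ × ℝ =>
    jap ((p.1 : ℝ) / lam) ^ a * jap (sigL j lam p.1 p.2) ^ b :=
  (((measurable_from_top (f := fun m : ℤ => jap ((m : ℝ) / lam))).comp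
    measurable_fst).pow_const a).mul ((measurable_jap.comp (measurable_sig j lam)).pow_const b)

lemma measurable_wF (j : ℕ) (lam s : ℝ) {f : ℤ → ℝ → ℝ≥0∞} (hf : Measurable (Function.uncurry f)) :
    Measurable (wF j lam s f) := by
  have hw : Measurable (wt j lam s) := by
    unfold wt
    refine Measurable.ite (by exact (measurableSet_D1 j lam).union (measurableSet_D5 j lam))
      (measurable_jw j lam _ _) (Measurable.ite (by exact measurableSet_D2 j lam)
        (measurable_jw j lam _ _) (measurable_jw j lam _ _))
  exact hw.ennreal_ofReal.mul hf

lemma measurable_yF (lam s : ℝ) {f : ℤ → ℝ → ℝ≥0∞} (hf : Measurable (Function.uncurry f)) :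
    Measurable (yF lam s f) :=
  ((measurable_from_top (f := fun m : ℤ => ENNReal.ofReal (jap ((m : ℝ) / lam) ^ s))).comp
    measurable_fst).mul hf

lemma measurable_hInt (j : ℕ) (lam : ℝ) {F G Y : ℤ × ℝ → ℝ≥0∞} (hF : Measurable F)
    (hG : Measurable G) (hY : Measurable Y) (p : ℤ × ℝ) : Measurable (hInt j lam F G Y p) := by
  have m1 := (measurable_bil_integrand (measurable_ph1 lam) hF hY).comp
    (measurable_prodMk_left (x := p))
  have m2 := (measurable_bil_integrand (measurable_ph2 lam) hF hY).comp
    (measurable_prodMk_left (x := p))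
  have m3 := (measurable_bil_integrand (measurable_ph3 lam) hF hY).comp
    (measurable_prodMk_left (x := p))
  have m4 := (measurable_bil_integrand (measurable_ker4' j lam) hF hG).comp
    (measurable_prodMk_left (x := p))
  have m5 := (measurable_bil_integrand (measurable_ker5 j lam) hF hG).comp
    (measurable_prodMk_left (x := p))
  have m6 := (measurable_bil_integrand (measurable_ker6 j lam) hF hG).comp
    (measurable_prodMk_left (x := p))
  exact ((((m1.add m2).add m3).add m4).add m5).add m6

/-- The sum of the two orderings of the majorising operator. -/
def fullOp (j : ℕ) (lam s : ℝ) (f₁ f₂ : ℤ → ℝ → ℝ≥0∞) (p : ℤ × ℝ) : ℝ≥0∞ :=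
  halfOp j lam (wF j lam s f₁) (wF j lam s f₂) (yF lam s f₂) p +
    halfOp j lam (wF j lam s f₂) (wF j lam s f₁) (yF lam s f₁) p

/-- The weighted output is dominated by the majorising operator. The second ordering of the factors
corresponds to the substitution `p₁ ↦ p - p₁`. -/
lemma pointwise (hj : 2 ≤ j) (hs₁ : -(j : ℝ) + 1 / 2 ≤ s) (hs₂ : s ≤ -(j : ℝ) / 2)
    (hl : 1 ≤ lam) (hf₁ : Measurable (Function.uncurry f₁)) (hf₂ : Measurable (Function.uncurry f₂))
    {p : ℤ × ℝ} (h0 : p.1 ≠ 0) {v : ℝ}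
    (hv : WRel j s ((p.1 : ℝ) / lam) (sigL j lam p.1 p.2) v) :
    ENNReal.ofReal v * (ENNReal.ofReal (|(p.1 : ℝ) / lam| * (jap (sigL j lam p.1 p.2))⁻¹) *
      convL lam f₁ f₂ p.1 p.2) ≤
    ENNReal.ofReal (1 / lam) * ENNReal.ofReal (eK j) * fullOp j lam s f₁ f₂ p := by
  have F1 := measurable_wF j lam s hf₁
  have F2 := measurable_wF j lam s hf₂
  have Y1 := measurable_yF lam s hf₁
  have Y2 := measurable_yF lam s hf₂
  set J : ℤ × ℝ → ℝ≥0∞ := fun p1 =>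
    if p1.1 ≠ 0 ∧ p.1 - p1.1 ≠ 0 then f₁ p1.1 p1.2 * f₂ (p - p1).1 (p - p1).2 else 0 with hJ
  have mJ : Measurable J := by
    refine Measurable.ite ?_ ?_ measurable_const
    · exact measurable_fst (MeasurableSet.of_discrete (s := {m : ℤ | m ≠ 0 ∧ p.1 - m ≠ 0}))
    · exact hf₁.mul (hf₂.comp (measurable_const.sub measurable_id))
  have hc : convL lam f₁ f₂ p.1 p.2 = ENNReal.ofReal (1 / lam) * ∫⁻ p1, J p1 ∂muX := by
    rw [lintegral_muX mJ]
    unfold convL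
    congr 2; ext m1
    simp only [hJ]
    split_ifs with h
    · rfl
    · simp
  have p0 := wrel_pos hj hv
  have hintg : ENNReal.ofReal (|(p.1 : ℝ) / lam| * (jap (sigL j lam p.1 p.2))⁻¹ * v) *
      ∫⁻ p1, J p1 ∂muX ≤ ENNReal.ofReal (eK j) * fullOp j lam s f₁ f₂ p := by
    unfold fullOp
    rw [← lintegral_hInt j lam F1 F2 Y2 p, ← lintegral_hInt j lam F2 F1 Y1 p,
      ← lintegral_sub_left_eq_self (hInt j lam (wF j lam s f₂) (wF j lam s f₁) (yF lam s f₁) p) p,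
      ← lintegral_add_left (measurable_hInt j lam F1 F2 Y2 p),
      ← lintegral_const_mul' _ _ ENNReal.ofReal_ne_top,
      ← lintegral_const_mul' _ _ ENNReal.ofReal_ne_top]
    refine lintegral_mono fun p1 => ?_
    by_cases h : p1.1 ≠ 0 ∧ p.1 - p1.1 ≠ 0
    · have C := conf_of (p1 := p1) hj hs₁ hs₂ hl h0 h.1 h.2 hv
      have e1 := maj_ennreal j lam s f₁ f₂ p p1
      have e2 := maj_ennreal j lam s f₂ f₁ p (p - p1)
      rw [sub_sub_cancel] at e2
      rw [← e1, ← e2]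
      simp only [hJ]
      rw [if_pos h]
      refine (mul_le_mul' (ENNReal.ofReal_le_ofReal C.exp_le) le_rfl).trans_eq ?_
      rw [ENNReal.ofReal_mul (Real.exp_pos _).le, ENNReal.ofReal_add
        (maj_nonneg _ _ _ _ _ _ _ _ (wt_pos _ _ _ _) (wt_pos _ _ _ _))
        (maj_nonneg _ _ _ _ _ _ _ _ (wt_pos _ _ _ _) (wt_pos _ _ _ _))]
      unfold eK
      ring
    · simp only [hJ]
      rw [if_neg h, mul_zero]
      exact zero_le
  rw [hc]
  calc _ = ENNReal.ofReal (1 / lam) *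
        (ENNReal.ofReal (|(p.1 : ℝ) / lam| * (jap (sigL j lam p.1 p.2))⁻¹ * v) *
          ∫⁻ p1, J p1 ∂muX) := by
        rw [ENNReal.ofReal_mul (mul_nonneg (abs_nonneg _) (inv_nonneg.2 (jap_pos _).le))]
        ring
    _ ≤ ENNReal.ofReal (1 / lam) * (ENNReal.ofReal (eK j) * fullOp j lam s f₁ f₂ p) := by gcongr
    _ = _ := by ring

end main

/-! ### The bilinear estimate -/

/-- The unscaled square of the part of the `Z^s` norm controlling `fullOp`. -/
def zsq (j : ℕ) (lam s : ℝ) (f : ℤ → ℝ → ℝ≥0∞) : ℝ≥0∞ :=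
  nsq (wF j lam s f) + ysq (yF lam s f)

/-- The constant of a single output region. -/
def c0 (j : ℕ) : ℝ≥0∞ :=
  (ENNReal.ofReal (eK j) ^ 2 * (376 * ENNReal.ofReal (cOp j))) ^ (1 / 2 : ℝ)

lemma c0_ne_top (j : ℕ) : c0 j ≠ ∞ := by
  unfold c0
  apply ENNReal.rpow_ne_top_of_nonneg (by norm_num)
  finiteness

lemma nsq_fullOp {j : ℕ} (hj : 2 ≤ j) {s lam : ℝ} (hl : 1 ≤ lam) {f₁ f₂ : ℤ → ℝ → ℝ≥0∞}
    (hf₁ : Measurable (Function.uncurry f₁)) (hf₂ : Measurable (Function.uncurry f₂)) :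
    nsq (fullOp j lam s f₁ f₂) ≤
      376 * (ENNReal.ofReal (cOp j * lam) * (zsq j lam s f₁ * zsq j lam s f₂)) := by
  have F1 := measurable_wF j lam s hf₁
  have F2 := measurable_wF j lam s hf₂
  have Y1 := measurable_yF lam s hf₁
  have Y2 := measurable_yF lam s hf₂
  refine (nsq_add_le (measurable_halfOp j lam F1 F2 Y2) (half_op_bound hj hl F1 F2 Y2)
    (measurable_halfOp j lam F2 F1 Y1) (half_op_bound hj hl F2 F1 Y1)).trans ?_
  have e1 : nsq (wF j lam s f₁) * (nsq (wF j lam s f₂) + ysq (yF lam s f₂)) ≤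
      zsq j lam s f₁ * zsq j lam s f₂ := mul_le_mul' le_self_add le_rfl
  have e2 : nsq (wF j lam s f₂) * (nsq (wF j lam s f₁) + ysq (yF lam s f₁)) ≤
      zsq j lam s f₁ * zsq j lam s f₂ := by
    rw [mul_comm (zsq j lam s f₁)]
    exact mul_le_mul' le_self_add le_rfl
  calc _ ≤ 2 * (94 * (ENNReal.ofReal (cOp j * lam) * (zsq j lam s f₁ * zsq j lam s f₂))) +
      2 * (94 * (ENNReal.ofReal (cOp j * lam) * (zsq j lam s f₁ * zsq j lam s f₂))) := by gcongr
    _ = _ := by ring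

/-- The part of the output norm on one region. The factor `λ` from `nsq_fullOp` cancels against one
of the factors `1/λ`. -/
lemma out_piece {j : ℕ} (hj : 2 ≤ j) {s : ℝ} (hs₁ : -(j : ℝ) + 1 / 2 ≤ s)
    (hs₂ : s ≤ -(j : ℝ) / 2) {lam : ℝ} (hl : 1 ≤ lam) {f₁ f₂ : ℤ → ℝ → ℝ≥0∞}
    (hf₁ : Measurable (Function.uncurry f₁)) (hf₂ : Measurable (Function.uncurry f₂))
    {D : Set (ℤ × ℝ)} {a b : ℝ}
    (hD : ∀ p ∈ D, p.1 ≠ 0 → WRel j s ((p.1 : ℝ) / lam) (sigL j lam p.1 p.2)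
      (jap ((p.1 : ℝ) / lam) ^ a * jap (sigL j lam p.1 p.2) ^ b)) :
    Xn j lam a b (restr D fun m τ =>
          ENNReal.ofReal (|(m : ℝ) / lam| * (jap (sigL j lam m τ))⁻¹) * convL lam f₁ f₂ m τ) ≤
      c0 j * (ENNReal.ofReal (1 / lam) * zsq j lam s f₁) ^ (1 / 2 : ℝ) *
        (ENNReal.ofReal (1 / lam) * zsq j lam s f₂) ^ (1 / 2 : ℝ) := by
  have l0 : 0 < lam := by linarith
  have F1 := measurable_wF j lam s hf₁
  have F2 := measurable_wF j lam s hf₂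
  have Y1 := measurable_yF lam s hf₁
  have Y2 := measurable_yF lam s hf₂
  have mH : Measurable (fullOp j lam s f₁ f₂) :=
    (measurable_halfOp j lam F1 F2 Y2).add (measurable_halfOp j lam F2 F1 Y1)
  set ρ := ENNReal.ofReal (1 / lam) with hρ
  have hρl : ρ * ENNReal.ofReal (cOp j * lam) = ENNReal.ofReal (cOp j) := by
    rw [hρ, ← ENNReal.ofReal_mul (by positivity)]
    congr 1; field_simp
  unfold Xn L2L c0
  rw [← ENNReal.mul_rpow_of_nonneg _ _ (by norm_num), ← ENNReal.mul_rpow_of_nonneg _ _ (by norm_num)]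
  apply ENNReal.rpow_le_rpow _ (by norm_num)
  calc _ ≤ ρ * ∑' m : ℤ, ∫⁻ τ : ℝ, (ρ * ENNReal.ofReal (eK j) * fullOp j lam s f₁ f₂ (m, τ)) ^ 2 := by
        gcongr with m τ
        by_cases hp : (m, τ) ∈ D
        · simp only [restr]
          rw [Set.indicator_of_mem hp]
          by_cases hm : m = 0
          · subst hm; simp
          · exact pointwise (p := (m, τ)) hj hs₁ hs₂ hl hf₁ hf₂ hm (hD _ hp hm)
        · simp only [restr]
          rw [Set.indicator_of_notMem hp, mul_zero]
          exact zero_le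
    _ = ρ * ((ρ * ENNReal.ofReal (eK j)) ^ 2 * nsq (fullOp j lam s f₁ f₂)) := by
        rw [← lintegral_muX (f := fun p => (ρ * ENNReal.ofReal (eK j) * fullOp j lam s f₁ f₂ p) ^ 2)
          ((mH.const_mul _).pow_const 2)]
        simp only [mul_pow _ (fullOp j lam s f₁ f₂ _)]
        rw [lintegral_const_mul _ (mH.pow_const 2)]
        rfl
    _ ≤ ρ * ((ρ * ENNReal.ofReal (eK j)) ^ 2 *
        (376 * (ENNReal.ofReal (cOp j * lam) * (zsq j lam s f₁ * zsq j lam s f₂)))) := by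
        gcongr
        exact nsq_fullOp hj hl hf₁ hf₂
    _ = ENNReal.ofReal (eK j) ^ 2 * (376 * (ρ * ENNReal.ofReal (cOp j * lam))) *
        (ρ * zsq j lam s f₁) * (ρ * zsq j lam s f₂) := by ring
    _ = _ := by rw [hρl]

/-- The regions may overlap, but they cover every nonzero frequency, so the chosen weight is
dominated by the sum of the three weights. -/
lemma zsq_le {j : ℕ} {s lam : ℝ} (hl : 1 ≤ lam) {f : ℤ → ℝ → ℝ≥0∞}
    (hf : Measurable (Function.uncurry f)) (h0 : ∀ τ, f 0 τ = 0) :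
    (ENNReal.ofReal (1 / lam) * zsq j lam s f) ^ (1 / 2 : ℝ) ≤ Zn j lam s f := by
  have sub : ∀ x y : ℝ≥0∞, (x + y) ^ (1 / 2 : ℝ) ≤ x ^ (1 / 2 : ℝ) + y ^ (1 / 2 : ℝ) :=
    fun x y => ENNReal.rpow_add_le_add_rpow x y (by norm_num) (by norm_num)
  have hy : ysq (yF lam s f) =
      ∑' m : ℤ, ENNReal.ofReal (jap ((m : ℝ) / lam) ^ (2 * s)) * (∫⁻ τ, f m τ) ^ 2 := by
    unfold ysq fib1 yF
    congr 1; ext m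
    dsimp only
    rw [lintegral_const_mul' _ _ ENNReal.ofReal_ne_top, mul_pow, ofReal_sq_rpow]
  let e : Set (ℤ × ℝ) → ℝ → ℝ → ℤ × ℝ → ℝ≥0∞ := fun D a b p =>
    ENNReal.ofReal (jap ((p.1 : ℝ) / lam) ^ a * jap (sigL j lam p.1 p.2) ^ b) *
      restr D f p.1 p.2
  have me : ∀ D a b, MeasurableSet D → Measurable (e D a b) := fun D a b hD =>
    (measurable_jw j lam a b).ennreal_ofReal.mul (hf.indicator hD)
  have hX : ∀ D a b, MeasurableSet D →
      (ENNReal.ofReal (1 / lam) * nsq (e D a b)) ^ (1 / 2 : ℝ) = Xn j lam a b (restr D f) := by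
    intro D a b hD
    unfold Xn L2L nsq
    rw [lintegral_muX ((me D a b hD).pow_const 2)]
  have M1 := (measurableSet_D1 j lam).union (measurableSet_D5 j lam)
  have M2 := measurableSet_D2 j lam
  have M3 := (measurableSet_D3 j lam).union (measurableSet_D4 j lam)
  set e1 := e (D1 j lam ∪ D5 j lam) s ((2 * (j : ℝ) - 1) / (2 * (j : ℝ))) with he1
  set e2 := e (D2 j lam) ((1 - 2 * (j : ℝ)) * s - 1) (s + 1) with he2
  set e3 := e (D3 j lam ∪ D4 j lam) (-s / (j : ℝ) - 1) (s / (j : ℝ) + 1) with he3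
  have hn : nsq (wF j lam s f) ≤ nsq e1 + nsq e2 + nsq e3 := by
    unfold nsq
    have q1 : Measurable fun p => e1 p ^ 2 := (me _ _ _ M1).pow_const 2
    have q2 : Measurable fun p => e2 p ^ 2 := (me _ _ _ M2).pow_const 2
    rw [← lintegral_add_left q1, ← lintegral_add_left (by exact q1.add q2)]
    refine lintegral_mono fun p => ?_
    by_cases hm : p.1 = 0
    · have : wF j lam s f p = 0 := by unfold wF; rw [hm, h0, mul_zero]
      rw [this]; simp
    · simp only [wF, wt]
      split_ifs with h1 h2
      · refine le_trans (le_of_eq ?_) (le_self_add.trans le_self_add)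
        simp only [he1, e, restr]
        rw [Set.indicator_of_mem (by exact h1)]
      · refine le_trans (le_of_eq ?_) (le_add_self.trans le_self_add)
        simp only [he2, e, restr]
        rw [Set.indicator_of_mem (by exact h2)]
      · refine le_trans (le_of_eq ?_) le_add_self
        simp only [he3, e, restr]
        rw [Set.indicator_of_mem (by exact region_cover hl hm h1 h2)]
  unfold zsq Zn XSn Yn
  rw [hy, mul_add]
  refine (sub _ _).trans (add_le_add ?_ le_rfl)
  rw [← hX _ _ _ M1, ← hX _ _ _ M2, ← hX _ _ _ M3]
  calc _ ≤ (ENNReal.ofReal (1 / lam) * (nsq e1 + nsq e2 + nsq e3)) ^ (1 / 2 : ℝ) := by gcongr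
    _ = (ENNReal.ofReal (1 / lam) * nsq e1 + ENNReal.ofReal (1 / lam) * nsq e2 +
        ENNReal.ofReal (1 / lam) * nsq e3) ^ (1 / 2 : ℝ) := by rw [mul_add, mul_add]
    _ ≤ _ := (sub _ _).trans (add_le_add (sub _ _) le_rfl)

/-- **Lemma 3.1 (bilinear estimate, `X^s` part):** with
`g(k,τ) = |k|⟨σ⟩^{−1}(f₁∗f₂)(k,τ)` (the modulus of the space–time Fourier transform of
`Λ^{−1}∂_x(u₁u₂)`), one has `‖g‖_{X^s} ≤ C‖f₁‖_{Z^s}‖f₂‖_{Z^s}` with `C` independent of `λ`. -/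
theorem stmt_14 (j : ℕ) (hj : 2 ≤ j) (s : ℝ)
    (hs₁ : -(j : ℝ) + 1 / 2 ≤ s) (hs₂ : s ≤ -(j : ℝ) / 2) :
    ∃ C : ℝ, 0 < C ∧ ∀ lam : ℝ, 1 ≤ lam → ∀ f₁ f₂ : ℤ → ℝ → ℝ≥0∞,
      Measurable (Function.uncurry f₁) → Measurable (Function.uncurry f₂) →
      (∀ τ, f₁ 0 τ = 0) → (∀ τ, f₂ 0 τ = 0) →
      XSn j lam s (fun m τ =>
          ENNReal.ofReal (|(m : ℝ) / lam| * (jap (sigL j lam m τ))⁻¹) *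
            convL lam f₁ f₂ m τ) ≤
        ENNReal.ofReal C * Zn j lam s f₁ * Zn j lam s f₂ := by
  -- The summand `1` only serves positivity of the constant.
  refine ⟨3 * (c0 j).toReal + 1, by positivity, ?_⟩
  intro lam hl f₁ f₂ hf₁ hf₂ h1 h2
  have hC : 3 * c0 j ≤ ENNReal.ofReal (3 * (c0 j).toReal + 1) := by
    rw [← ENNReal.ofReal_toReal (c0_ne_top j), ← ENNReal.ofReal_ofNat 3,
      ← ENNReal.ofReal_mul (by norm_num), ENNReal.toReal_ofReal ENNReal.toReal_nonneg]
    exact ENNReal.ofReal_le_ofReal (by linarith)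
  have z1 := zsq_le (j := j) (s := s) hl hf₁ h1
  have z2 := zsq_le (j := j) (s := s) hl hf₂ h2
  have piece : ∀ (D : Set (ℤ × ℝ)) (a b : ℝ), (∀ p ∈ D, p.1 ≠ 0 → WRel j s ((p.1 : ℝ) / lam)
      (sigL j lam p.1 p.2) (jap ((p.1 : ℝ) / lam) ^ a * jap (sigL j lam p.1 p.2) ^ b)) →
      Xn j lam a b (restr D fun m τ =>
          ENNReal.ofReal (|(m : ℝ) / lam| * (jap (sigL j lam m τ))⁻¹) * convL lam f₁ f₂ m τ) ≤
      c0 j * Zn j lam s f₁ * Zn j lam s f₂ := fun D a b hD =>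
    (out_piece hj hs₁ hs₂ hl hf₁ hf₂ hD).trans (mul_le_mul' (mul_le_mul' le_rfl z1) z2)
  have x1 := piece (D1 j lam ∪ D5 j lam) s ((2 * (j : ℝ) - 1) / (2 * (j : ℝ)))
    fun p hp _ => Or.inl ⟨reg1_of hp, rfl⟩
  have x2 := piece (D2 j lam) ((1 - 2 * (j : ℝ)) * s - 1) (s + 1)
    fun p hp _ => Or.inr (Or.inl ⟨hp, rfl⟩)
  have x3 := piece (D3 j lam ∪ D4 j lam) (-s / (j : ℝ) - 1) (s / (j : ℝ) + 1)
    fun p hp _ => Or.inr (Or.inr ⟨reg3_of hp, rfl⟩)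
  unfold XSn
  refine (add_le_add (add_le_add x1 x2) x3).trans ?_
  calc _ = 3 * c0 j * Zn j lam s f₁ * Zn j lam s f₂ := by ring
    _ ≤ _ := by gcongr

end
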